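/- Let n ≥ 2 and let s, t > 0 with s + t > n + 1. Let A, B ⊂ ℝⁿ be Borel sets with H^s(A) > 0 and H^t(B) > 0. Then there is a Borel set E ⊂ O(n) with dim E ≤ n(n−1)/2 − (s + t − (n+1)) such that for every g ∈ O(n) \ E, L^n({z ∈ ℝⁿ : dim(A ∩ (g(B) + z)) ≥ s + t − n}) > 0. -/

import Mathlib

/-!
The proof discretises the Fourier-analytic argument: all measures are finitely supported, one for
each scale `2 ^ (-m)`, with constants that do not depend on `m`.

*Frostman weights.* Dyadic contents are continuous along increasing unions (`netContent_iUnion`),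
so a Borel set of positive `H^s` measure contains a compact set `K` whose neighbourhoods contain
pieces of definite `s`-content (`exists_compact_of_content`). The discrete Frostman lemma
`frostman` then gives, for each `m`, an `s`-dimensional weight of definite mass on points within
`2 ^ (-m)` of `K` (`exists_frostmanAt`). Let `w m` and `v m` be such weights for compact sets
`K ⊆ A` and `K' ⊆ B`.

*Energies.* For `g ∈ O(n)` and a cutoff `ρ = 2 ^ (-j)`, consider `δ ^ (-n)` times the mass of the
quadruples `(x, x', y, y')` with `‖y - y'‖ ≤ ρ` and `‖(x - x') - g (y - y')‖ ≤ δ = 2 ^ (-m)`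
(`energy`, with Gaussian cutoffs). It is an integral over `ξ` of the squared Fourier transform of `w`
at `ξ` against a smoothed version of the squared Fourier transform of `v` at `g⁻¹ ξ`
(`energy_eq_integral`). If `g` is averaged against a measure on `O(n)` for which
`{g : ‖ξ - g η‖ ≤ τ ‖ξ‖}` has mass at most a constant times `τ ^ β`, where `β + s + t > 2 n`, then
the average of the energy is at most a constant times `ρ ^ (s + t - n)` (`averaged_energy_le`).
The stabiliser of a direction has dimension `(n - 1) (n - 2) / 2`, so an `α`-dimensional Frostman
weight on `O(n)` has this property with `β = α - (n - 1) (n - 2) / 2` (`spread_of_frostman`).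

*The exceptional set.* The set `E` consists of the `g` along which the normalised sums of the
energies over `j ≤ m` (`totalEnergy`) tend to infinity with `m`. If `α` exceeds
`n (n - 1) / 2 - (s + t - (n + 1))`, then `β + s + t > 2 n`. Applying the averaged estimate to
a Frostman weight on the set where the energies exceed `L` from some scale on shows that the
`α`-content of `E` is `O(1 / L)` for every `L`, so `dim E ≤ α` (`dimH_exceptionalSet_le`).

*Slices.* If `g ∉ E`, then the total energy is bounded along a sequence of scales. At each of these
scales, Chebyshev's inequality gives a set of translations `z` of definite volume
near which the image of `w × v` under `(x, y) ↦ x - g y` has density bounded below while the pairs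
with `x - g y` near `z` have bounded energy (`exists_volume_goodSet_ge`). A set of `z` of positive
measure has these properties at arbitrarily fine scales. For such `z` a cover of `K ∩ (g K' + z)`
of small cost in a dimension below `s + t - n` would also cover, at a fine scale, the first
components of all pairs with `x - g y` near `z`, and the Cauchy–Schwarz inequality
(`pairMass_sq_le_of_cover`) would contradict the bound for the energy. Hence the slice has
dimension at least `s + t - n` (`volume_large_slices_pos`).
-/

open MeasureTheory
open scoped ENNReal

attribute [local instance] Matrix.frobeniusNormedAddCommGroup

noncomputable instance matrixMeasurableSpace (n : ℕ) :
    MeasurableSpace (Matrix (Fin n) (Fin n) ℝ) := borel _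

namespace Mattila

/-! ### Net contents and discrete Frostman measures -/

/-- The measure on the set `ℕ × J` of all labelled cells which gives the cell `(j, q)` of
generation `j` the mass `r j`. -/
noncomputable def cellWeight {J : Type*} [MeasurableSpace J] (r : ℕ → ℝ≥0∞) : Measure (ℕ × J) :=
  Measure.sum fun p : ℕ × J => r p.1 • Measure.dirac p

/-- The net content of `E ⊆ X` for a nested sequence of partitions of `X`. The cell of generation
`j` containing `x` is labelled `c j x`, and a family `C` of labelled cells covers `E` if every
`x ∈ E` lies in one of them; its cost is the sum of `r j` over the cells in `C`. -/
noncomputable def netContent {X J : Type*} [MeasurableSpace J] (c : ℕ → X → J) (r : ℕ → ℝ≥0∞)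
    (E : Set X) : ℝ≥0∞ :=
  ⨅ (C : Set (ℕ × J)) (_ : ∀ x ∈ E, ∃ j, (j, c j x) ∈ C), cellWeight r C

/-- The partitions labelled by `c` get finer from each generation to the next. -/
def Nested {X J : Type*} (c : ℕ → X → J) : Prop :=
  ∀ j x y, c (j + 1) x = c (j + 1) y → c j x = c j y

section content

variable {X J : Type*} [Countable J] [MeasurableSpace J] [DiscreteMeasurableSpace J]
  {c : ℕ → X → J} {r : ℕ → ℝ≥0∞}

omit [Countable J] [MeasurableSpace J] [DiscreteMeasurableSpace J] in
lemma Nested.le (hc : Nested c) {i j : ℕ} (hij : i ≤ j) {x y : X} (h : c j x = c j y) :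
    c i x = c i y := by
  induction hij with
  | refl => exact h
  | step _ ih => exact ih (hc _ _ _ h)

omit [Countable J] [DiscreteMeasurableSpace J] in
lemma netContent_le {E : Set X} (C : Set (ℕ × J)) (h : ∀ x ∈ E, ∃ j, (j, c j x) ∈ C) :
    netContent c r E ≤ cellWeight r C :=
  iInf₂_le C h

omit [Countable J] [DiscreteMeasurableSpace J] in
lemma netContent_mono {E F : Set X} (h : E ⊆ F) : netContent c r E ≤ netContent c r F :=
  le_iInf₂ fun C hC => netContent_le C fun x hx => hC x (h hx)

omit [Countable J] [DiscreteMeasurableSpace J] in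
lemma exists_cover (E : Set X) {a : ℝ≥0∞} (h : netContent c r E < a) :
    ∃ C : Set (ℕ × J), (∀ x ∈ E, ∃ j, (j, c j x) ∈ C) ∧ cellWeight r C < a := by
  simpa only [netContent, iInf_lt_iff, exists_prop] using h

lemma cellWeight_singleton (p : ℕ × J) : cellWeight r {p} = r p.1 := by
  classical
  rw [cellWeight, Measure.sum_apply _ (MeasurableSet.of_discrete)]
  rw [tsum_eq_single p]
  · simp
  · intro q hq
    simp [hq]

lemma netContent_cell_le (E : Set X) (j : ℕ) (q : J) (h : ∀ x ∈ E, c j x = q) :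
    netContent c r E ≤ r j := by
  refine (netContent_le {(j, q)} fun x hx => ⟨j, by simp [h x hx]⟩).trans ?_
  rw [cellWeight_singleton]

omit [Countable J] [DiscreteMeasurableSpace J] in
lemma netContent_empty : netContent c r (∅ : Set X) = 0 := by
  have := netContent_le (c := c) (r := r) (E := (∅ : Set X)) ∅ (by simp)
  simpa using this

omit [Countable J] [DiscreteMeasurableSpace J] in
lemma netContent_union (E F : Set X) :
    netContent c r (E ∪ F) ≤ netContent c r E + netContent c r F := by
  refine ENNReal.le_of_forall_pos_le_add fun ε hε hlt => ?_
  have hE : netContent c r E < netContent c r E + (ε / 2 : NNReal) :=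
    ENNReal.lt_add_right (ne_top_of_le_ne_top hlt.ne le_self_add) (by simpa using hε.ne')
  have hF : netContent c r F < netContent c r F + (ε / 2 : NNReal) :=
    ENNReal.lt_add_right (ne_top_of_le_ne_top hlt.ne le_add_self) (by simpa using hε.ne')
  obtain ⟨C, hC, hC'⟩ := exists_cover E hE
  obtain ⟨D, hD, hD'⟩ := exists_cover F hF
  refine (netContent_le (C ∪ D) ?_).trans ((measure_union_le C D).trans ?_)
  · rintro x (hx | hx)
    · obtain ⟨j, hj⟩ := hC x hx; exact ⟨j, Or.inl hj⟩
    · obtain ⟨j, hj⟩ := hD x hx; exact ⟨j, Or.inr hj⟩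
  · refine (add_le_add hC'.le hD'.le).trans (le_of_eq ?_)
    rw [add_add_add_comm, ← ENNReal.coe_add, add_halves]

omit [Countable J] [DiscreteMeasurableSpace J] in
lemma netContent_biUnion {κ : Type*} (S : Finset κ) (E : κ → Set X) :
    netContent c r (⋃ k ∈ S, E k) ≤ ∑ k ∈ S, netContent c r (E k) := by
  classical
  induction S using Finset.induction_on with
  | empty => simp [netContent_empty]
  | insert a S ha ih =>
    rw [Finset.set_biUnion_insert, Finset.sum_insert ha]
    exact (netContent_union _ _).trans (by gcongr)

/-- **Increasing sets lemma.** Net contents are continuous along increasing sequences of arbitrary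
sets. Take nearly optimal covers `C k` of `E k` and keep the maximal cells of their union. The
maximal cells taken from `C k` cost at most as much (up to a small error) as the cells of `C N`
inside them, for `N ≥ k`, because otherwise `C k` could be improved. -/
lemma netContent_iUnion (hc : Nested c) {E : ℕ → Set X} (hE : Monotone E) :
    netContent c r (⋃ k, E k) ≤ ⨆ k, netContent c r (E k) := by
  refine ENNReal.le_of_forall_pos_le_add fun ε hε hlt => ?_
  set L := ⨆ k, netContent c r (E k) with hL
  obtain ⟨e, he0, hesum⟩ := ENNReal.exists_pos_sum_of_countable
    (ε := ((ε / 2 : NNReal) : ℝ≥0∞)) (by simpa using hε.ne') ℕ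
  have hLk : ∀ k, netContent c r (E k) ≤ L := fun k => le_iSup (fun k => netContent c r (E k)) k
  have h1 : ∀ k, netContent c r (E k) < netContent c r (E k) + e k := fun k =>
    ENNReal.lt_add_right (ne_top_of_le_ne_top hlt.ne (hLk k)) (by simpa using (he0 k).ne')
  choose C hC hCw using fun k => exists_cover (E k) (h1 k)
  have hek : ∀ k, (e k : ℝ≥0∞) ≤ (ε / 2 : NNReal) := fun k =>
    (ENNReal.le_tsum k).trans hesum.le
  have hCtop : ∀ k, cellWeight r (C k) ≠ ∞ := fun k => ne_top_of_lt (hCw k)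
  let U : Set (ℕ × J) := ⋃ k, C k
  -- the maximal cells of the union of all the covers
  let Q : Set (ℕ × J) := {p | p ∈ U ∧ ∃ x, c p.1 x = p.2 ∧ ∀ i < p.1, (i, c i x) ∉ U}
  have hQx : ∀ x j, (j, c j x) ∈ Q → (j, c j x) ∈ U ∧ ∀ i < j, (i, c i x) ∉ U := by
    rintro x j ⟨hU, y, hy, hy'⟩
    refine ⟨hU, fun i hi => ?_⟩
    have : c i y = c i x := hc.le hi.le hy
    rw [← this]; exact hy' i hi
  let Qk : ℕ → Set (ℕ × J) := fun k => (Q ∩ C k) \ ⋃ i < k, C i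
  have hQU : Q ⊆ ⋃ k, Qk k := by
    classical
    rintro p hp
    have hex : ∃ k, p ∈ C k := by simpa [U] using hp.1
    refine Set.mem_iUnion.2 ⟨Nat.find hex, ⟨hp, Nat.find_spec hex⟩, ?_⟩
    simp only [Set.mem_iUnion, not_exists]
    intro i hi
    exact Nat.find_min hex hi
  have hcov : netContent c r (⋃ k, E k) ≤ cellWeight r Q := by
    refine netContent_le Q fun x hx => ?_
    obtain ⟨k, hk⟩ := Set.mem_iUnion.1 hx
    obtain ⟨j, hj⟩ := hC k x hk
    classical
    have hex : ∃ j, (j, c j x) ∈ U := ⟨j, Set.mem_iUnion.2 ⟨k, hj⟩⟩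
    exact ⟨Nat.find hex, Nat.find_spec hex, x, rfl, fun i hi => Nat.find_min hex hi⟩
  have hQkQ : ∀ k, Qk k ⊆ Q := fun k p hp => hp.1.1
  have hQkdisj : ∀ k k' p, p ∈ Qk k → p ∈ Qk k' → k = k' := by
    intro k k' p hp hp'
    rcases lt_trichotomy k k' with h | h | h
    · exact absurd (Set.mem_iUnion₂.2 ⟨k, h, hp.1.2⟩) hp'.2
    · exact h
    · exact absurd (Set.mem_iUnion₂.2 ⟨k', h, hp'.1.2⟩) hp.2
  -- the cells of `C N` contained in one of the maximal cells in `Qk k`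
  let R : ℕ → ℕ → Set (ℕ × J) := fun N k =>
    {p | p ∈ C N ∧ ∃ x, c p.1 x = p.2 ∧ ∃ i ≤ p.1, (i, c i x) ∈ Qk k}
  have hRdisj : ∀ N, Pairwise (Function.onFun Disjoint (R N)) := by
    intro N k k' hkk'
    rw [Function.onFun, Set.disjoint_left]
    rintro ⟨j, q⟩ ⟨_, x, hx, i, hi, hik⟩ ⟨_, x', hx', i', hi', hik'⟩
    simp only at hx hx' hi hi'
    have hxx : c j x = c j x' := hx.trans hx'.symm
    rw [← hc.le hi' hxx] at hik'
    have a1 := hQx x i (hQkQ _ hik)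
    have a2 := hQx x i' (hQkQ _ hik')
    rcases lt_trichotomy i i' with h | h | h
    · exact a2.2 i h a1.1
    · subst h; exact hkk' (hQkdisj _ _ _ hik hik')
    · exact a1.2 i' h a2.1
  have hkey : ∀ N k, k ≤ N → cellWeight r (Qk k) ≤ cellWeight r (R N k) + e k := by
    intro N k hkN
    have hsub : Qk k ⊆ C k := fun p hp => hp.1.2
    have hcover : netContent c r (E k) ≤ cellWeight r ((C k \ Qk k) ∪ R N k) := by
      refine netContent_le _ fun x hx => ?_
      obtain ⟨j, hj⟩ := hC k x hx
      by_cases hjQ : (j, c j x) ∈ Qk k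
      · obtain ⟨j', hj'⟩ := hC N x (hE hkN hx)
        refine ⟨j', Or.inr ⟨hj', x, rfl, j, ?_, hjQ⟩⟩
        by_contra hlt'
        exact (hQx x j (hQkQ _ hjQ)).2 j' (not_le.1 hlt') (Set.mem_iUnion.2 ⟨N, hj'⟩)
      · exact ⟨j, Or.inl ⟨hj, hjQ⟩⟩
    have hsplit : cellWeight r (Qk k) + cellWeight r (C k \ Qk k) = cellWeight r (C k) := by
      have := measure_inter_add_sdiff (μ := cellWeight r) (C k)
        (MeasurableSet.of_discrete (s := Qk k))
      rwa [Set.inter_eq_right.2 hsub] at this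
    have hfin : cellWeight r (C k \ Qk k) ≠ ∞ :=
      ne_top_of_le_ne_top (hCtop k) (measure_mono Set.sdiff_subset)
    have h3 : cellWeight r (Qk k) + cellWeight r (C k \ Qk k) ≤
        (cellWeight r (R N k) + e k) + cellWeight r (C k \ Qk k) := by
      rw [hsplit]
      refine (hCw k).le.trans ?_
      refine (add_le_add_left (hcover.trans (measure_union_le _ _)) _).trans (le_of_eq ?_)
      ring
    exact (ENNReal.add_le_add_iff_right hfin).1 h3
  have hfinal : ∀ N, ∑ k ∈ Finset.range N, cellWeight r (Qk k) ≤ L + ε := by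
    intro N
    calc ∑ k ∈ Finset.range N, cellWeight r (Qk k)
        ≤ ∑ k ∈ Finset.range N, (cellWeight r (R N k) + e k) :=
          Finset.sum_le_sum fun k hk => hkey N k (Finset.mem_range.1 hk).le
      _ = ∑ k ∈ Finset.range N, cellWeight r (R N k) + ∑ k ∈ Finset.range N, (e k : ℝ≥0∞) :=
          Finset.sum_add_distrib
      _ ≤ cellWeight r (C N) + (ε / 2 : NNReal) := by
          gcongr
          · rw [← measure_biUnion_finset (fun i _ j _ hij => hRdisj N hij)
              (fun _ _ => MeasurableSet.of_discrete)]
            exact measure_mono (Set.iUnion₂_subset fun k _ p hp => hp.1)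
          · exact (ENNReal.sum_le_tsum _).trans hesum.le
      _ ≤ (L + (ε / 2 : NNReal)) + (ε / 2 : NNReal) := by
          gcongr
          exact (hCw N).le.trans (add_le_add (hLk N) (hek N))
      _ = L + ε := by
          rw [add_assoc, ← ENNReal.coe_add, add_halves]
  calc netContent c r (⋃ k, E k) ≤ cellWeight r Q := hcov
    _ ≤ cellWeight r (⋃ k, Qk k) := measure_mono hQU
    _ ≤ ∑' k, cellWeight r (Qk k) := measure_iUnion_le _
    _ ≤ L + ε := by
        rw [ENNReal.tsum_eq_iSup_nat]
        exact iSup_le hfinal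

end content

/-- The cost `2 ^ (-s j)` of a dyadic cell of generation `j` in dimension `s`. -/
noncomputable def dyadicCost (s : ℝ) (j : ℕ) : ℝ := (2 : ℝ) ^ (-(s * j))

lemma dyadicCost_pos (s : ℝ) (j : ℕ) : 0 < dyadicCost s j := by
  unfold dyadicCost; positivity

section frostman

variable {X J : Type*} [Countable J] [MeasurableSpace J] [DiscreteMeasurableSpace J]
  {c : ℕ → X → J}

/-- Discrete form of Frostman's lemma down to generation `m`: start with the largest admissible
masses on the cells of generation `m` and, going up the generations, scale down the mass of each
cell that has too much. -/
lemma frostman_aux [DecidableEq J] (hc : Nested c) (s : ℝ) (m : ℕ) (K : Set X)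
    (hfin : (c m '' K).Finite) (k : ℕ) (hk : k ≤ m) :
    ∃ (P : Finset X) (w : X → ℝ), (∀ x ∈ P, x ∈ K) ∧ (∀ x, 0 ≤ w x) ∧
      (∀ j, k ≤ j → j ≤ m → ∀ q, ∑ x ∈ P with c j x = q, w x ≤ dyadicCost s j) ∧
      ∀ q, netContent c (fun j => ENNReal.ofReal (dyadicCost s j)) (K ∩ {x | c k x = q}) ≤
        ENNReal.ofReal (∑ x ∈ P with c k x = q, w x) := by
  classical
  rcases K.eq_empty_or_nonempty with rfl | ⟨x₀, _⟩
  · exact ⟨∅, 0, by simp, by simp, fun j _ _ q => by simpa using (dyadicCost_pos s j).le,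
      fun q => by simp [netContent_empty]⟩
  have : Nonempty X := ⟨x₀⟩
  induction hk using Nat.decreasingInduction with
  | self =>
    choose! g hgK hgc using fun q (hq : q ∈ c m '' K) => hq
    refine ⟨hfin.toFinset.image g, fun _ => dyadicCost s m, ?_, fun _ => (dyadicCost_pos s m).le,
      ?_, ?_⟩
    · intro x hx
      obtain ⟨q, hq, rfl⟩ := Finset.mem_image.1 hx
      exact hgK q (hfin.mem_toFinset.1 hq)
    · intro j hj hj' q
      obtain rfl : j = m := le_antisymm hj' hj
      have : ((hfin.toFinset.image g).filter fun x => c j x = q) ⊆ {g q} := by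
        intro x hx
        obtain ⟨hx, hxq⟩ := Finset.mem_filter.1 hx
        obtain ⟨q', hq', rfl⟩ := Finset.mem_image.1 hx
        rw [hgc q' (hfin.mem_toFinset.1 hq')] at hxq
        simp [hxq]
      refine (Finset.sum_le_sum_of_subset_of_nonneg this
        fun _ _ _ => (dyadicCost_pos s j).le).trans ?_
      simp
    · intro q
      by_cases hq : q ∈ c m '' K
      · have hmem : g q ∈ (hfin.toFinset.image g).filter fun x => c m x = q :=
          Finset.mem_filter.2 ⟨Finset.mem_image_of_mem g (hfin.mem_toFinset.2 hq), hgc q hq⟩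
        refine (netContent_cell_le _ m q fun x hx => hx.2).trans (ENNReal.ofReal_le_ofReal ?_)
        exact Finset.single_le_sum (f := fun _ => dyadicCost s m)
          (fun _ _ => (dyadicCost_pos s m).le) hmem
      · have : K ∩ {x | c m x = q} = ∅ := by
          ext x
          simp only [Set.mem_inter_iff, Set.mem_ofPred_eq, Set.mem_empty_iff_false, iff_false,
            not_and]
          exact fun hx hxq => hq ⟨x, hx, hxq⟩
        simp [this, netContent_empty]
  | of_succ k hk ih =>
    obtain ⟨P, w, hPK, hw, hle, hge⟩ := ih
    set W : J → ℝ := fun p => ∑ x ∈ P with c k x = p, w x with hW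
    have hW0 : ∀ p, 0 ≤ W p := fun p => Finset.sum_nonneg fun _ _ => hw _
    set F : J → ℝ := fun p => min 1 (dyadicCost s k / W p) with hF
    have hF0 : ∀ p, 0 ≤ F p := fun p =>
      le_min zero_le_one (div_nonneg (dyadicCost_pos s k).le (hW0 p))
    have hF1 : ∀ p, F p ≤ 1 := fun p => min_le_left _ _
    have hFW : ∀ p, ∑ x ∈ P with c k x = p, w x * F (c k x) = F p * W p := by
      intro p
      rw [hW, Finset.mul_sum]
      refine Finset.sum_congr rfl fun x hx => ?_
      rw [(Finset.mem_filter.1 hx).2, mul_comm]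
    have hmin : ∀ p, F p * W p = min (W p) (dyadicCost s k) := by
      intro p
      rcases (hW0 p).eq_or_lt with h | h
      · rw [← h, mul_zero, min_eq_left (dyadicCost_pos s k).le]
      · rw [hF, min_mul_of_nonneg _ _ h.le, one_mul, div_mul_cancel₀ _ h.ne']
    refine ⟨P, fun x => w x * F (c k x), hPK, fun x => mul_nonneg (hw x) (hF0 _), ?_, ?_⟩
    · intro j hkj hjm q
      rcases hkj.eq_or_lt with rfl | hlt
      · rw [hFW, hmin]; exact min_le_right _ _
      · refine le_trans (Finset.sum_le_sum fun x _ => ?_) (hle j hlt hjm q)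
        exact mul_le_of_le_one_right (hw x) (hF1 _)
    · intro q
      rw [hFW, hmin]
      rcases le_total (W q) (dyadicCost s k) with h | h
      · rw [min_eq_left h]
        let S : Finset J := (hfin.toFinset.image fun p => if h : p ∈ c m '' K then
          c (k + 1) h.choose else p)
        let S' : Finset J := S.filter fun p => ∃ x ∈ K, c (k + 1) x = p ∧ c k x = q
        have hcov : K ∩ {x | c k x = q} ⊆ ⋃ p ∈ S', K ∩ {x | c (k + 1) x = p} := by
          rintro x ⟨hxK, hxq⟩
          have hmem : c m x ∈ c m '' K := ⟨x, hxK, rfl⟩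
          refine Set.mem_iUnion₂.2 ⟨c (k + 1) x, Finset.mem_filter.2 ⟨?_, x, hxK, rfl, hxq⟩,
            hxK, rfl⟩
          refine Finset.mem_image.2 ⟨c m x, hfin.mem_toFinset.2 hmem, ?_⟩
          rw [dif_pos hmem]
          exact hc.le hk hmem.choose_spec.2
        refine (netContent_mono hcov).trans ((netContent_biUnion S' _).trans ?_)
        refine (Finset.sum_le_sum fun p _ => hge p).trans ?_
        rw [← ENNReal.ofReal_sum_of_nonneg fun p _ => Finset.sum_nonneg fun _ _ => hw _]
        refine ENNReal.ofReal_le_ofReal ?_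
        rw [← Finset.sum_biUnion]
        · refine Finset.sum_le_sum_of_subset_of_nonneg ?_ fun _ _ _ => hw _
          intro x hx
          obtain ⟨p, hp, hxp⟩ := Finset.mem_biUnion.1 hx
          obtain ⟨hxP, hxp⟩ := Finset.mem_filter.1 hxp
          obtain ⟨_, y, _, hyp, hyq⟩ := Finset.mem_filter.1 hp
          refine Finset.mem_filter.2 ⟨hxP, ?_⟩
          rw [← hyq]; exact hc _ _ _ (hxp.trans hyp.symm)
        · intro p _ p' _ hpp'
          rw [Function.onFun, Finset.disjoint_left]
          intro x hx hx'
          exact hpp' ((Finset.mem_filter.1 hx).2.symm.trans (Finset.mem_filter.1 hx').2)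
      · rw [min_eq_right h]
        exact netContent_cell_le _ k q fun x hx => hx.2

end frostman
end Mattila

namespace Mattila

/-! ### Dyadic cells, Frostman's lemma and Hausdorff measure -/

/-- The dyadic cell of generation `j` (a half-open cube of side `2 ^ (-j)`) containing `x`, where
`Ψ x` is the vector of coordinates of `x`. -/
noncomputable def dyCell {X ι : Type*} (Ψ : X → ι → ℝ) (j : ℕ) (x : X) : ι → ℤ :=
  fun i => ⌊(2 : ℝ) ^ j * Ψ x i⌋

lemma dyCell_nested {X ι : Type*} (Ψ : X → ι → ℝ) : Nested (dyCell Ψ) := by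
  intro j x y h
  funext i
  have hi : ⌊(2 : ℝ) ^ (j + 1) * Ψ x i⌋ = ⌊(2 : ℝ) ^ (j + 1) * Ψ y i⌋ := congrFun h i
  have key : ∀ a : ℝ, ⌊(2 : ℝ) ^ j * a⌋ = ⌊(2 : ℝ) ^ (j + 1) * a⌋ / 2 := by
    intro a
    have h2 : (2 : ℝ) ^ j * a = ((2 : ℝ) ^ (j + 1) * a) / (2 : ℕ) := by
      push_cast; ring
    rw [h2, Int.floor_div_natCast]; rfl
  simp only [dyCell, key, hi]

lemma dist_le_of_dyCell_eq {X ι : Type*} {Ψ : X → ι → ℝ} {j : ℕ} {x y : X}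
    (h : dyCell Ψ j x = dyCell Ψ j y) (i : ι) : |Ψ x i - Ψ y i| ≤ (2 : ℝ)⁻¹ ^ j := by
  have h1 : |(2 : ℝ) ^ j * Ψ x i - 2 ^ j * Ψ y i| < 1 := Int.abs_sub_lt_one_of_floor_eq_floor
    (congrFun h i)
  rw [← mul_sub, abs_mul, abs_of_pos (by positivity : (0 : ℝ) < 2 ^ j)] at h1
  rw [inv_pow, inv_eq_one_div, le_div_iff₀ (by positivity), mul_comm]
  exact h1.le

lemma dyadicCost_eq_rpow (s : ℝ) (j : ℕ) : dyadicCost s j = ((2 : ℝ)⁻¹ ^ j) ^ s := by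
  rw [dyadicCost, ← Real.rpow_natCast, ← Real.rpow_mul (by norm_num), Real.inv_rpow (by norm_num),
    ← Real.rpow_neg (by norm_num), mul_comm]

/-- The dyadic net content of dimension `s`. -/
noncomputable def dyContent {X ι : Type*} (Ψ : X → ι → ℝ) (s : ℝ) (E : Set X) : ℝ≥0∞ :=
  netContent (dyCell Ψ) (fun j => ENNReal.ofReal (dyadicCost s j)) E

/-- The largest `j ≤ m` with `r ≤ 2 ^ (-j)`. -/
lemma exists_dyadic_scale {r : ℝ} {m : ℕ} (hr : (2 : ℝ)⁻¹ ^ m ≤ r) (hr1 : r ≤ 1) :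
    ∃ j ≤ m, r ≤ (2 : ℝ)⁻¹ ^ j ∧ (2 : ℝ)⁻¹ ^ j ≤ 2 * r := by
  induction m with
  | zero => exact ⟨0, le_rfl, by simpa using hr1, by norm_num at hr ⊢; linarith⟩
  | succ m ih =>
    rcases le_total ((2 : ℝ)⁻¹ ^ m) r with h | h
    · obtain ⟨j, hj, h⟩ := ih h
      exact ⟨j, hj.trans (Nat.le_succ m), h⟩
    · refine ⟨m, Nat.le_succ m, h, ?_⟩
      rw [pow_succ] at hr; linarith

variable {X ι : Type*} [Fintype ι]

/-- **Frostman's lemma**, discrete form: a bounded set `K` carries a finitely supported measure of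
mass at least its `s`-content, whose balls of radius `r ≥ 2 ^ (-m)` have mass at most `C r ^ s`,
with `C` independent of `m` and `K`. -/
lemma frostman (Ψ : X → ι → ℝ) (s : ℝ) (hs : 0 ≤ s) (R : ℝ) :
    ∃ C : ℝ, 0 < C ∧ ∀ (K : Set X), (∀ x ∈ K, ∀ i, |Ψ x i| ≤ R) → ∀ m : ℕ,
      ∃ (P : Finset X) (w : X → ℝ), (∀ x ∈ P, x ∈ K) ∧ (∀ x, 0 ≤ w x) ∧
        (∀ (a : ι → ℝ) (r : ℝ), (2 : ℝ)⁻¹ ^ m ≤ r →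
          ∀ S ⊆ P, (∀ x ∈ S, ∀ i, |Ψ x i - a i| ≤ r) → ∑ x ∈ S, w x ≤ C * r ^ s) ∧
        ∑ x ∈ P, w x ≤ C ∧
        dyContent Ψ s K ≤ ENNReal.ofReal (∑ x ∈ P, w x) := by
  classical
  let N0 : ℕ := (Fintype.piFinset fun _ : ι => Finset.Icc ⌊-R⌋ ⌊R⌋).card
  refine ⟨3 ^ Fintype.card ι * 2 ^ s + N0, by positivity, fun K hK m => ?_⟩
  have hfin : ∀ k, (dyCell Ψ k '' K).Finite := by
    intro k
    refine (Fintype.piFinset fun _ : ι =>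
      Finset.Icc ⌊(2 : ℝ) ^ k * -R⌋ ⌊(2 : ℝ) ^ k * R⌋).finite_toSet.subset ?_
    rintro _ ⟨x, hx, rfl⟩
    simp only [Finset.mem_coe, Fintype.mem_piFinset, Finset.mem_Icc]
    intro i
    have := abs_le.1 (hK x hx i)
    exact ⟨Int.floor_le_floor (by gcongr; exact this.1), Int.floor_le_floor (by gcongr; exact this.2)⟩
  obtain ⟨P, w, hPK, hw, hle, hge⟩ :=
    frostman_aux (dyCell_nested Ψ) s m K (hfin m) 0 (Nat.zero_le m)
  have hcells : ∀ (j : ℕ), j ≤ m → ∀ (T : Finset (ι → ℤ)) (S : Finset X), S ⊆ P →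
      (∀ x ∈ S, dyCell Ψ j x ∈ T) → ∑ x ∈ S, w x ≤ T.card * dyadicCost s j := by
    intro j hj T S hS hT
    rw [← Finset.sum_fiberwise_of_maps_to hT, ← nsmul_eq_mul]
    refine Finset.sum_le_card_nsmul _ _ _ fun q _ => ?_
    refine (Finset.sum_le_sum_of_subset_of_nonneg ?_ fun _ _ _ => hw _).trans
      (hle j (Nat.zero_le j) hj q)
    exact Finset.filter_subset_filter _ hS
  have htot : ∑ x ∈ P, w x ≤ N0 := by
    have := hcells 0 (Nat.zero_le m) (Fintype.piFinset fun _ : ι => Finset.Icc ⌊-R⌋ ⌊R⌋) P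
      (Finset.Subset.refl P) ?_
    · simpa [dyadicCost, N0] using this
    · intro x hx
      simp only [Fintype.mem_piFinset, Finset.mem_Icc, dyCell, pow_zero, one_mul]
      intro i
      have := abs_le.1 (hK x (hPK x hx) i)
      exact ⟨Int.floor_le_floor this.1, Int.floor_le_floor this.2⟩
  have hpos : (0 : ℝ) ≤ 3 ^ Fintype.card ι * 2 ^ s := by positivity
  refine ⟨P, w, hPK, hw, ?_, htot.trans (by linarith), ?_⟩
  · intro a r hr S hS hSa
    have hr0 : 0 < r := lt_of_lt_of_le (by positivity) hr
    rcases le_total r 1 with h1 | h1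
    · obtain ⟨j, hj, hj1, hj2⟩ := exists_dyadic_scale hr h1
      let T : Finset (ι → ℤ) := Fintype.piFinset fun i =>
        Finset.Icc (⌊(2 : ℝ) ^ j * a i⌋ - 1) (⌊(2 : ℝ) ^ j * a i⌋ + 1)
      have hTcard : T.card = 3 ^ Fintype.card ι := by
        simp only [T, Fintype.card_piFinset, Int.card_Icc]
        rw [Finset.prod_congr rfl (g := fun _ => 3) (fun i _ => by omega)]
        simp
      have h := hcells j hj T S hS ?_
      · rw [hTcard] at h
        refine h.trans ?_
        rw [dyadicCost_eq_rpow, add_mul]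
        have : ((2 : ℝ)⁻¹ ^ j) ^ s ≤ 2 ^ s * r ^ s := by
          rw [← Real.mul_rpow (by norm_num) hr0.le]
          exact Real.rpow_le_rpow (by positivity) hj2 hs
        have h2 : (0 : ℝ) ≤ N0 * r ^ s := by positivity
        push_cast
        calc (3 : ℝ) ^ Fintype.card ι * ((2 : ℝ)⁻¹ ^ j) ^ s
            ≤ 3 ^ Fintype.card ι * (2 ^ s * r ^ s) := by gcongr
          _ ≤ _ := by linarith
      · intro x hx
        simp only [T, Fintype.mem_piFinset, Finset.mem_Icc, dyCell]
        intro i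
        have hxi := abs_le.1 (hSa x hx i)
        have h2j : (2 : ℝ) ^ j * r ≤ 1 := by
          calc (2 : ℝ) ^ j * r ≤ 2 ^ j * (2 : ℝ)⁻¹ ^ j := by gcongr
            _ = 1 := by rw [← mul_pow]; norm_num
        have e1 : (2 : ℝ) ^ j * Ψ x i ≤ 2 ^ j * a i + 1 := by
          have : (2 : ℝ) ^ j * (Ψ x i - a i) ≤ 2 ^ j * r := by gcongr; exact hxi.2
          linarith
        have e2 : (2 : ℝ) ^ j * a i ≤ 2 ^ j * Ψ x i + 1 := by
          have : (2 : ℝ) ^ j * (-r) ≤ 2 ^ j * (Ψ x i - a i) := by gcongr; exact hxi.1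
          linarith
        constructor
        · have := Int.floor_le_floor e2
          rw [Int.floor_add_one] at this; omega
        · have := Int.floor_le_floor e1
          rwa [Int.floor_add_one] at this
    · refine (Finset.sum_le_sum_of_subset_of_nonneg hS fun _ _ _ => hw _).trans (htot.trans ?_)
      have h2 : 1 ≤ r ^ s := Real.one_le_rpow h1 hs
      calc (N0 : ℝ) ≤ N0 * r ^ s := le_mul_of_one_le_right (by positivity) h2
        _ ≤ _ := by
          have : 0 ≤ (3 ^ Fintype.card ι * 2 ^ s : ℝ) * r ^ s := by positivity
          linarith
  · have hcov : K ⊆ ⋃ q ∈ (hfin 0).toFinset, K ∩ {x | dyCell Ψ 0 x = q} := fun x hx =>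
      Set.mem_iUnion₂.2 ⟨dyCell Ψ 0 x, (hfin 0).mem_toFinset.2 ⟨x, hx, rfl⟩, hx, rfl⟩
    refine (netContent_mono hcov).trans ((netContent_biUnion _ _).trans ?_)
    refine (Finset.sum_le_sum fun q _ => hge q).trans ?_
    rw [← ENNReal.ofReal_sum_of_nonneg fun p _ => Finset.sum_nonneg fun _ _ => hw _]
    refine ENNReal.ofReal_le_ofReal (le_of_eq ?_)
    exact Finset.sum_fiberwise_of_maps_to
      (fun x hx => (hfin 0).mem_toFinset.2 ⟨x, hPK x hx, rfl⟩) w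


end Mattila

namespace Mattila

lemma cellWeight_eq_tsum {J : Type*} [Countable J] [MeasurableSpace J] [DiscreteMeasurableSpace J]
    (r : ℕ → ℝ≥0∞) (C : Set (ℕ × J)) : cellWeight r C = ∑' p : C, r p.1.1 := by
  classical
  rw [cellWeight, Measure.sum_apply _ MeasurableSet.of_discrete,
    tsum_subtype C (fun p : ℕ × J => r p.1)]
  refine tsum_congr fun p => ?_
  by_cases hp : p ∈ C <;> simp [hp]

/-- Sets of zero `s`-content are null for the Hausdorff measure. -/
lemma hausdorffMeasure_eq_zero_of_dyContent {X ι : Type*} [Fintype ι] [EMetricSpace X]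
    [MeasurableSpace X] [BorelSpace X] (Ψ : X → ι → ℝ) (D : ℝ) (hD0 : 0 ≤ D)
    (hD : ∀ j x y, dyCell Ψ j x = dyCell Ψ j y → edist x y ≤ ENNReal.ofReal (D * (2 : ℝ)⁻¹ ^ j))
    {s : ℝ} (hs : 0 < s) {E : Set X} (h : dyContent Ψ s E = 0) : μH[s] E = 0 := by
  have hex : ∀ n : ℕ, ∃ C : Set (ℕ × (ι → ℤ)), (∀ x ∈ E, ∃ j, (j, dyCell Ψ j x) ∈ C) ∧
      cellWeight (fun j => ENNReal.ofReal (dyadicCost s j)) C < ENNReal.ofReal ((2 : ℝ)⁻¹ ^ n) := by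
    intro n
    refine exists_cover E ?_
    rw [dyContent] at h
    rw [h]
    simp
  choose C hC hCw using hex
  have hsmall : ∀ n, ∀ p ∈ C n, ((2 : ℝ)⁻¹ ^ p.1) ≤ ((2 : ℝ)⁻¹ ^ n) ^ (1 / s) := by
    intro n p hp
    have h1 : ENNReal.ofReal (dyadicCost s p.1) ≤ ENNReal.ofReal ((2 : ℝ)⁻¹ ^ n) := by
      rw [← cellWeight_singleton (J := ι → ℤ) (r := fun j => ENNReal.ofReal (dyadicCost s j)) p]
      exact (measure_mono (Set.singleton_subset_iff.2 hp)).trans (hCw n).le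
    have h2 := (ENNReal.ofReal_le_ofReal_iff (by positivity)).1 h1
    rw [dyadicCost_eq_rpow] at h2
    have h3 := Real.rpow_le_rpow (by positivity) h2 (by positivity : 0 ≤ 1 / s)
    rwa [← Real.rpow_mul (by positivity), mul_one_div_cancel hs.ne', Real.rpow_one] at h3
  have hdiam : ∀ p : ℕ × (ι → ℤ), Metric.ediam {x | dyCell Ψ p.1 x = p.2} ≤
      ENNReal.ofReal (D * (2 : ℝ)⁻¹ ^ p.1) := by
    intro p
    exact Metric.ediam_le fun x hx y hy => hD _ _ _ ((show _ = _ from hx).trans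
      (show _ = _ from hy).symm)
  have hlim0 : Filter.Tendsto (fun n : ℕ => ((2 : ℝ)⁻¹ ^ n)) Filter.atTop (nhds 0) :=
    tendsto_pow_atTop_nhds_zero_of_lt_one (by norm_num) (by norm_num)
  have hlim1 : Filter.Tendsto (fun n : ℕ => ENNReal.ofReal (D * ((2 : ℝ)⁻¹ ^ n) ^ (1 / s)))
      Filter.atTop (nhds 0) := by
    have h1 : Filter.Tendsto (fun n : ℕ => D * ((2 : ℝ)⁻¹ ^ n) ^ (1 / s)) Filter.atTop
        (nhds (D * 0 ^ (1 / s))) :=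
      (hlim0.rpow_const (Or.inr (by positivity))).const_mul D
    rw [Real.zero_rpow (by positivity), mul_zero] at h1
    simpa using ENNReal.tendsto_ofReal h1
  have hmain := Measure.hausdorffMeasure_le_liminf_tsum (ι := fun n => C n) s E
    (l := Filter.atTop) _ hlim1 (fun n p => {x | dyCell Ψ p.1.1 x = p.1.2})
    (Filter.Eventually.of_forall fun n p => (hdiam p.1).trans
      (ENNReal.ofReal_le_ofReal (mul_le_mul_of_nonneg_left (hsmall n p.1 p.2) hD0)))
    (Filter.Eventually.of_forall fun n x hx => by
      obtain ⟨j, hj⟩ := hC n x hx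
      exact Set.mem_iUnion.2 ⟨⟨_, hj⟩, rfl⟩)
  refine le_antisymm (hmain.trans ?_) bot_le
  have hbound : ∀ n : ℕ, ∑' p : C n, Metric.ediam {x | dyCell Ψ p.1.1 x = p.1.2} ^ s ≤
      ENNReal.ofReal (D ^ s * (2 : ℝ)⁻¹ ^ n) := by
    intro n
    calc ∑' p : C n, Metric.ediam {x | dyCell Ψ p.1.1 x = p.1.2} ^ s
        ≤ ∑' p : C n, ENNReal.ofReal (D ^ s) * ENNReal.ofReal (dyadicCost s p.1.1) := by
          refine ENNReal.tsum_le_tsum fun p => ?_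
          refine (ENNReal.rpow_le_rpow (hdiam p.1) hs.le).trans (le_of_eq ?_)
          rw [ENNReal.ofReal_rpow_of_nonneg (by positivity) hs.le,
            Real.mul_rpow hD0 (by positivity), ENNReal.ofReal_mul (by positivity),
            dyadicCost_eq_rpow]
      _ = ENNReal.ofReal (D ^ s) * cellWeight (fun j => ENNReal.ofReal (dyadicCost s j)) (C n) := by
          rw [ENNReal.tsum_mul_left, cellWeight_eq_tsum]
      _ ≤ ENNReal.ofReal (D ^ s) * ENNReal.ofReal ((2 : ℝ)⁻¹ ^ n) := by
          gcongr; exact (hCw n).le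
      _ = _ := by rw [ENNReal.ofReal_mul (by positivity)]
  have hlim2 : Filter.Tendsto (fun n : ℕ => ENNReal.ofReal (D ^ s * (2 : ℝ)⁻¹ ^ n))
      Filter.atTop (nhds 0) := by
    simpa using ENNReal.tendsto_ofReal (hlim0.const_mul (D ^ s))
  have h5 := Filter.liminf_le_liminf (Filter.Eventually.of_forall (f := Filter.atTop) hbound)
  rwa [hlim2.liminf_eq] at h5

/-- Capacitability of analytic sets for the dyadic content, in approximate form: an analytic set of
content larger than `a` contains a compact set `K` such that every open neighbourhood of `K`
contains a subset of `A` of content larger than `a`. -/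
lemma exists_compact_of_content {X ι : Type*} [Fintype ι] [TopologicalSpace X] [T2Space X]
    (Ψ : X → ι → ℝ) (s : ℝ) {A : Set X} (hA : AnalyticSet A) {a : ℝ≥0∞}
    (ha : a < dyContent Ψ s A) :
    ∃ K ⊆ A, IsCompact K ∧ ∀ U, IsOpen U → K ⊆ U → ∃ F ⊆ A, F ⊆ U ∧ a < dyContent Ψ s F := by
  rw [AnalyticSet] at hA
  rcases hA with rfl | ⟨f, hf, rfl⟩
  · simp [dyContent, netContent_empty] at ha
  have hstep : ∀ (k : ℕ) (S : Set (ℕ → ℕ)), a < dyContent Ψ s (f '' S) →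
      ∃ b, a < dyContent Ψ s (f '' (S ∩ {x | x k ≤ b})) := by
    intro k S hS
    have hmono : Monotone fun b => f '' (S ∩ {x : ℕ → ℕ | x k ≤ b}) := fun b b' hb =>
      Set.image_mono (Set.inter_subset_inter_right _ fun x hx => le_trans hx hb)
    have hU : f '' S ⊆ ⋃ b, f '' (S ∩ {x : ℕ → ℕ | x k ≤ b}) := by
      rintro _ ⟨x, hx, rfl⟩
      exact Set.mem_iUnion.2 ⟨x k, x, ⟨hx, Set.mem_ofPred_eq ▸ le_refl (x k)⟩, rfl⟩
    have := (netContent_mono (c := dyCell Ψ)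
      (r := fun j => ENNReal.ofReal (dyadicCost s j)) hU).trans
      (netContent_iUnion (dyCell_nested Ψ) hmono)
    exact lt_iSup_iff.1 (hS.trans_le this)
  choose! b hb using hstep
  let S : ℕ → Set (ℕ → ℕ) := fun k => Nat.rec Set.univ (fun k S => S ∩ {x | x k ≤ b k S}) k
  have hS0 : S 0 = Set.univ := rfl
  have hSs : ∀ k, S (k + 1) = S k ∩ {x | x k ≤ b k (S k)} := fun k => rfl
  have hSa : ∀ k, a < dyContent Ψ s (f '' S k) := by
    intro k
    induction k with
    | zero => rw [hS0, Set.image_univ]; exact ha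
    | succ k ih => rw [hSs]; exact hb k _ ih
  have hSmem : ∀ k x, x ∈ S k ↔ ∀ i < k, x i ≤ b i (S i) := by
    intro k x
    induction k with
    | zero => simp [hS0]
    | succ k ih =>
      rw [hSs, Set.mem_inter_iff, ih]
      constructor
      · rintro ⟨h1, h2⟩ i hi
        rcases (Nat.lt_succ_iff.1 hi).lt_or_eq with h | rfl
        · exact h1 i h
        · exact h2
      · exact fun h => ⟨fun i hi => h i (hi.trans (Nat.lt_succ_self k)), h k (Nat.lt_succ_self k)⟩
  let B : Set (ℕ → ℕ) := Set.pi Set.univ fun i => Set.Iic (b i (S i))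
  have hB : IsCompact B := isCompact_univ_pi fun i => (Set.finite_Iic _).isCompact
  refine ⟨f '' B, Set.image_subset_range f B, hB.image hf, fun U hU hKU => ?_⟩
  suffices ∃ k, f '' S k ⊆ U by
    obtain ⟨k, hk⟩ := this
    exact ⟨f '' S k, Set.image_subset_range f _, hk, hSa k⟩
  by_contra! hcon
  have hx : ∀ k, ∃ x ∈ S k, f x ∉ U := fun k => by
    obtain ⟨_, ⟨x, hx, rfl⟩, hxU⟩ := Set.not_subset.1 (hcon k)
    exact ⟨x, hx, hxU⟩
  choose x hxS hxU using hx
  -- truncate the points `x k` so as to land in the compact box `B`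
  let y : ℕ → ℕ → ℕ := fun k i => min (x k i) (b i (S i))
  obtain ⟨z, hz, φ, hφ, hlim⟩ := hB.tendsto_subseq (x := y)
    fun k i _ => Set.mem_Iic.2 (min_le_right _ _)
  have hlim' : Filter.Tendsto (fun k => x (φ k)) Filter.atTop (nhds z) := by
    rw [tendsto_pi_nhds] at hlim ⊢
    intro i
    refine (hlim i).congr' ?_
    filter_upwards [Filter.eventually_gt_atTop i] with k hk
    exact min_eq_left ((hSmem _ _).1 (hxS (φ k)) i (hk.trans_le (hφ.le_apply)))
  have hfz : f z ∈ U := hKU ⟨z, hz, rfl⟩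
  have := (hf.tendsto z).comp hlim'
  obtain ⟨k, hk⟩ := (this.eventually (hU.mem_nhds hfz)).exists
  exact hxU _ hk

end Mattila

namespace Mattila

/-! ### Gaussian sums and Fourier transforms of finitely supported measures -/

/-- The Gaussian `t ↦ exp (-π t²)`. -/
noncomputable def gs (t : ℝ) : ℝ := Real.exp (-Real.pi * t ^ 2)

lemma gs_pos (t : ℝ) : 0 < gs t := Real.exp_pos _

lemma gs_anti {a b : ℝ} (ha : 0 ≤ a) (hab : a ≤ b) : gs b ≤ gs a := by
  unfold gs
  have : a ^ 2 ≤ b ^ 2 := by gcongr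
  have hpi := Real.pi_pos
  apply Real.exp_le_exp.2
  nlinarith

lemma gs_le_one (t : ℝ) : gs t ≤ 1 := by
  unfold gs
  apply Real.exp_le_one_iff.2
  nlinarith [Real.pi_pos, sq_nonneg t]

@[fun_prop]
lemma continuous_gs : Continuous gs := by unfold gs; fun_prop

variable {V : Type*} [NormedAddCommGroup V] [InnerProductSpace ℝ V] [FiniteDimensional ℝ V]
  [MeasurableSpace V] [BorelSpace V]

lemma integrable_gs {ε : ℝ} (hε : 0 < ε) (ζ : V) :
    Integrable fun ξ : V => gs (ε * ‖ξ - ζ‖) := by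
  have h := (GaussianFourier.integrable_cexp_neg_mul_sq_norm_add (V := V)
    (b := ((Real.pi * ε ^ 2 : ℝ) : ℂ)) (by
      rw [Complex.ofReal_re]; exact mul_pos Real.pi_pos (by positivity)) 0 0).norm
  have h2 : Integrable fun ξ : V => gs (ε * ‖ξ‖) := by
    refine h.congr (Filter.Eventually.of_forall fun ξ => ?_)
    simp only [gs, Complex.norm_exp, zero_mul, add_zero]
    congr 1
    rw [← Complex.ofReal_pow, ← Complex.ofReal_neg, ← Complex.ofReal_mul, Complex.ofReal_re]
    ring
  exact h2.comp_sub_right ζ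

lemma integrable_gs_cos {ε : ℝ} (hε : 0 < ε) (ζ a : V) :
    Integrable fun ξ : V => gs (ε * ‖ξ - ζ‖) * Real.cos (2 * Real.pi * inner ℝ a ξ) := by
  refine (integrable_gs hε ζ).mul_bdd (c := 1) ?_ ?_
  · exact (by fun_prop : Continuous fun ξ : V =>
      Real.cos (2 * Real.pi * inner ℝ a ξ)).aestronglyMeasurable
  · exact Filter.Eventually.of_forall fun ξ => by
      simpa using Real.abs_cos_le_one (2 * Real.pi * inner ℝ a ξ)

/-- The Fourier transform of a translated Gaussian, in real form. -/
lemma integral_gs_cos {ε : ℝ} (hε : 0 < ε) (ζ a : V) :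
    ∫ ξ : V, gs (ε * ‖ξ - ζ‖) * Real.cos (2 * Real.pi * inner ℝ a ξ) =
      (ε⁻¹) ^ Module.finrank ℝ V * gs (‖a‖ / ε) * Real.cos (2 * Real.pi * inner ℝ a ζ) := by
  have hb : 0 < ((Real.pi * ε ^ 2 : ℝ) : ℂ).re := by
    rw [Complex.ofReal_re]; exact mul_pos Real.pi_pos (by positivity)
  have hpi := Real.pi_pos
  have h := GaussianFourier.integral_cexp_neg_mul_sq_norm_add (V := V) hb
    (2 * Real.pi * Complex.I) a
  have hi := GaussianFourier.integrable_cexp_neg_mul_sq_norm_add (V := V) hb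
    (2 * Real.pi * Complex.I) a
  set z : ℂ := Complex.exp ((2 * Real.pi * inner ℝ a ζ : ℝ) * Complex.I) with hz
  have e1 : ∀ v : V, (gs (ε * ‖v‖) * Real.cos (2 * Real.pi * inner ℝ a (v + ζ))) =
      RCLike.re (z * Complex.exp (-((Real.pi * ε ^ 2 : ℝ) : ℂ) * (‖v‖ : ℂ) ^ 2 +
        2 * Real.pi * Complex.I * (inner ℝ a v : ℝ))) := by
    intro v
    have : z * Complex.exp (-((Real.pi * ε ^ 2 : ℝ) : ℂ) * (‖v‖ : ℂ) ^ 2 +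
        2 * Real.pi * Complex.I * (inner ℝ a v : ℝ)) =
        ((gs (ε * ‖v‖) : ℝ) : ℂ) *
          Complex.exp ((2 * Real.pi * inner ℝ a (v + ζ) : ℝ) * Complex.I) := by
      rw [hz, gs, Complex.ofReal_exp, ← Complex.exp_add, ← Complex.exp_add, inner_add_right]
      congr 1
      push_cast
      ring
    rw [this]
    simp only [RCLike.re_to_complex]
    rw [Complex.re_ofReal_mul, Complex.exp_ofReal_mul_I_re]
  have e2 : (((Real.pi : ℝ) : ℂ) / ((Real.pi * ε ^ 2 : ℝ) : ℂ)) ^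
      ((Module.finrank ℝ V : ℂ) / 2) = (((ε⁻¹) ^ Module.finrank ℝ V : ℝ) : ℂ) := by
    have h3 : ((Real.pi : ℝ) : ℂ) / ((Real.pi * ε ^ 2 : ℝ) : ℂ) = (((ε⁻¹) ^ 2 : ℝ) : ℂ) := by
      rw [← Complex.ofReal_div]
      congr 1
      field_simp
    have h4 : ((Module.finrank ℝ V : ℂ) / 2) = (((Module.finrank ℝ V : ℝ) / 2 : ℝ) : ℂ) := by
      push_cast; rfl
    rw [h3, h4, ← Complex.ofReal_cpow (by positivity)]
    congr 1
    rw [← Real.rpow_natCast (ε⁻¹) 2, ← Real.rpow_mul (by positivity)]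
    rw [show ((2 : ℕ) : ℝ) * ((Module.finrank ℝ V : ℝ) / 2) = (Module.finrank ℝ V : ℝ) by
      push_cast; ring, Real.rpow_natCast]
  have e3 : Complex.exp ((2 * Real.pi * Complex.I) ^ 2 * (‖a‖ : ℂ) ^ 2 /
      (4 * ((Real.pi * ε ^ 2 : ℝ) : ℂ))) = ((gs (‖a‖ / ε) : ℝ) : ℂ) := by
    rw [gs, Complex.ofReal_exp]
    congr 1
    push_cast
    have : (Real.pi : ℂ) ≠ 0 := by exact_mod_cast hpi.ne'
    have : (ε : ℂ) ≠ 0 := by exact_mod_cast hε.ne'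
    field_simp
    rw [Complex.I_sq]; ring
  calc ∫ ξ : V, gs (ε * ‖ξ - ζ‖) * Real.cos (2 * Real.pi * inner ℝ a ξ)
      = ∫ v : V, gs (ε * ‖v‖) * Real.cos (2 * Real.pi * inner ℝ a (v + ζ)) := by
        rw [← integral_add_right_eq_self _ ζ]
        simp
    _ = RCLike.re (∫ v : V, z * Complex.exp (-((Real.pi * ε ^ 2 : ℝ) : ℂ) * (‖v‖ : ℂ) ^ 2 +
        2 * Real.pi * Complex.I * (inner ℝ a v : ℝ))) := by
        rw [← integral_re (hi.const_mul z)]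
        exact integral_congr_ae (Filter.Eventually.of_forall e1)
    _ = _ := by
        rw [integral_const_mul, h, e2, e3, mul_comm z, ← Complex.ofReal_mul]
        simp only [RCLike.re_to_complex]
        rw [Complex.re_ofReal_mul, hz, Complex.exp_ofReal_mul_I_re]

/-- The squared modulus at `ξ` of the Fourier transform of the measure `∑ x ∈ P, w x • δ_x`. -/
noncomputable def fsq (P : Finset V) (w : V → ℝ) (ξ : V) : ℝ :=
  (∑ x ∈ P, w x * Real.cos (2 * Real.pi * inner ℝ x ξ)) ^ 2 +
    (∑ x ∈ P, w x * Real.sin (2 * Real.pi * inner ℝ x ξ)) ^ 2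

omit [FiniteDimensional ℝ V] [MeasurableSpace V] [BorelSpace V] in
lemma fsq_nonneg (P : Finset V) (w : V → ℝ) (ξ : V) : 0 ≤ fsq P w ξ := by
  unfold fsq; positivity

omit [FiniteDimensional ℝ V] [MeasurableSpace V] [BorelSpace V] in
lemma fsq_eq (P : Finset V) (w : V → ℝ) (ξ : V) :
    fsq P w ξ = ∑ x ∈ P, ∑ x' ∈ P, w x * w x' * Real.cos (2 * Real.pi * inner ℝ (x - x') ξ) := by
  rw [fsq, sq, sq, Finset.sum_mul_sum, Finset.sum_mul_sum, ← Finset.sum_add_distrib]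
  refine Finset.sum_congr rfl fun x _ => ?_
  rw [← Finset.sum_add_distrib]
  refine Finset.sum_congr rfl fun x' _ => ?_
  rw [inner_sub_left, mul_sub, Real.cos_sub]
  ring

omit [FiniteDimensional ℝ V] [MeasurableSpace V] [BorelSpace V] in
lemma sum_sin_eq_zero (P : Finset V) (w : V → ℝ) (ξ : V) :
    ∑ x ∈ P, ∑ x' ∈ P, w x * w x' * Real.sin (2 * Real.pi * inner ℝ (x - x') ξ) = 0 := by
  have h : ∑ x ∈ P, ∑ x' ∈ P, w x * w x' * Real.sin (2 * Real.pi * inner ℝ (x - x') ξ) =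
      -∑ x ∈ P, ∑ x' ∈ P, w x * w x' * Real.sin (2 * Real.pi * inner ℝ (x - x') ξ) := by
    conv_lhs => rw [Finset.sum_comm]
    rw [← Finset.sum_neg_distrib]
    refine Finset.sum_congr rfl fun x _ => ?_
    rw [← Finset.sum_neg_distrib]
    refine Finset.sum_congr rfl fun x' _ => ?_
    rw [← neg_sub x x', inner_neg_left, mul_neg, Real.sin_neg]
    ring
  linarith

/-- The autocorrelation of `∑ y ∈ Q, v y • δ_y`, damped by a Gaussian of width `ρ`, has this
Fourier transform. -/
noncomputable def damped (ρ : ℝ) (Q : Finset V) (v : V → ℝ) (ζ : V) : ℝ :=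
  ∑ y ∈ Q, ∑ y' ∈ Q, v y * v y' * gs (‖y - y'‖ / ρ) * Real.cos (2 * Real.pi * inner ℝ (y - y') ζ)

lemma integrable_gs_fsq {ε : ℝ} (hε : 0 < ε) (ζ : V) (P : Finset V) (w : V → ℝ) :
    Integrable fun ξ : V => gs (ε * ‖ξ - ζ‖) * fsq P w ξ := by
  simp only [fsq_eq, Finset.mul_sum]
  refine integrable_finsetSum _ fun x _ => integrable_finsetSum _ fun x' _ => ?_
  refine ((integrable_gs_cos hε ζ (x - x')).const_mul (w x * w x')).congr
    (Filter.Eventually.of_forall fun ξ => ?_)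
  simp only; ring

lemma integral_gs_fsq {ε : ℝ} (hε : 0 < ε) (ζ : V) (P : Finset V) (w : V → ℝ) :
    ∫ ξ : V, gs (ε * ‖ξ - ζ‖) * fsq P w ξ =
      (ε⁻¹) ^ Module.finrank ℝ V * damped ε P w ζ := by
  have hi : ∀ x x' : V, Integrable fun ξ : V => w x * w x' *
      (gs (ε * ‖ξ - ζ‖) * Real.cos (2 * Real.pi * inner ℝ (x - x') ξ)) := fun x x' =>
    (integrable_gs_cos hε ζ (x - x')).const_mul _
  have e : ∀ ξ : V, gs (ε * ‖ξ - ζ‖) * fsq P w ξ = ∑ x ∈ P, ∑ x' ∈ P, w x * w x' *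
      (gs (ε * ‖ξ - ζ‖) * Real.cos (2 * Real.pi * inner ℝ (x - x') ξ)) := by
    intro ξ
    rw [fsq_eq, Finset.mul_sum]
    refine Finset.sum_congr rfl fun x _ => ?_
    rw [Finset.mul_sum]
    exact Finset.sum_congr rfl fun x' _ => by ring
  simp only [e]
  rw [integral_finsetSum _ fun x _ => integrable_finsetSum _ fun x' _ => hi x x', damped,
    Finset.mul_sum]
  refine Finset.sum_congr rfl fun x _ => ?_
  rw [integral_finsetSum _ fun x' _ => hi x x', Finset.mul_sum]
  refine Finset.sum_congr rfl fun x' _ => ?_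
  rw [integral_const_mul, integral_gs_cos hε]
  ring

/-- The energy of scale `(ρ, δ)` of the measures `(P, w)` and `(Q, v)` with respect to the motion
`g`: up to constants, `δ ^ (-n)` times the mass of the quadruples `(x, x', y, y')` with
`‖y - y'‖ ≤ ρ` and `‖(x - x') - g (y - y')‖ ≤ δ`. -/
noncomputable def energy (ρ δ : ℝ) (P : Finset V) (w : V → ℝ) (Q : Finset V) (v : V → ℝ)
    (g : V → V) : ℝ :=
  (δ⁻¹) ^ Module.finrank ℝ V * ∑ x ∈ P, ∑ x' ∈ P, ∑ y ∈ Q, ∑ y' ∈ Q,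
    w x * w x' * (v y * v y') * gs (‖y - y'‖ / ρ) * gs (‖(x - x') - g (y - y')‖ / δ)

omit [FiniteDimensional ℝ V] [MeasurableSpace V] [BorelSpace V] in
lemma sum_cos_eq (ρ : ℝ) (P : Finset V) (w : V → ℝ) (Q : Finset V) (v : V → ℝ)
    (g : V ≃ₗᵢ[ℝ] V) (ξ : V) :
    ∑ x ∈ P, ∑ x' ∈ P, ∑ y ∈ Q, ∑ y' ∈ Q, w x * w x' * (v y * v y') * gs (‖y - y'‖ / ρ) *
      Real.cos (2 * Real.pi * inner ℝ ((x - x') - g (y - y')) ξ) =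
    fsq P w ξ * damped ρ Q v (g.symm ξ) := by
  have h : ∀ x x' : V, ∑ y ∈ Q, ∑ y' ∈ Q, w x * w x' * (v y * v y') * gs (‖y - y'‖ / ρ) *
      Real.cos (2 * Real.pi * inner ℝ ((x - x') - g (y - y')) ξ) =
      w x * w x' * Real.cos (2 * Real.pi * inner ℝ (x - x') ξ) * damped ρ Q v (g.symm ξ) +
      w x * w x' * Real.sin (2 * Real.pi * inner ℝ (x - x') ξ) *
        ∑ y ∈ Q, ∑ y' ∈ Q, v y * v y' * gs (‖y - y'‖ / ρ) *
          Real.sin (2 * Real.pi * inner ℝ (y - y') (g.symm ξ)) := by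
    intro x x'
    rw [damped, Finset.mul_sum, Finset.mul_sum, ← Finset.sum_add_distrib]
    refine Finset.sum_congr rfl fun y _ => ?_
    rw [Finset.mul_sum, Finset.mul_sum, ← Finset.sum_add_distrib]
    refine Finset.sum_congr rfl fun y' _ => ?_
    rw [inner_sub_left (x - x') (g (y - y')) ξ, LinearIsometryEquiv.inner_map_eq_flip, mul_sub,
      Real.cos_sub]
    ring
  simp only [h, Finset.sum_add_distrib, ← Finset.sum_mul]
  rw [← fsq_eq, sum_sin_eq_zero, zero_mul, add_zero]

lemma energy_eq_integral {ρ δ : ℝ} (hδ : 0 < δ) (P : Finset V) (w : V → ℝ) (Q : Finset V)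
    (v : V → ℝ) (g : V ≃ₗᵢ[ℝ] V) :
    energy ρ δ P w Q v g = ∫ ξ : V, gs (δ * ‖ξ‖) * (fsq P w ξ * damped ρ Q v (g.symm ξ)) := by
  have hi : ∀ x x' y y' : V, Integrable fun ξ : V =>
      (w x * w x' * (v y * v y') * gs (‖y - y'‖ / ρ)) *
      (gs (δ * ‖ξ - 0‖) * Real.cos (2 * Real.pi * inner ℝ ((x - x') - g (y - y')) ξ)) :=
    fun x x' y y' => (integrable_gs_cos hδ 0 _).const_mul _
  have e : ∀ ξ : V, gs (δ * ‖ξ‖) * (fsq P w ξ * damped ρ Q v (g.symm ξ)) =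
      ∑ x ∈ P, ∑ x' ∈ P, ∑ y ∈ Q, ∑ y' ∈ Q, (w x * w x' * (v y * v y') * gs (‖y - y'‖ / ρ)) *
      (gs (δ * ‖ξ - 0‖) * Real.cos (2 * Real.pi * inner ℝ ((x - x') - g (y - y')) ξ)) := by
    intro ξ
    rw [← sum_cos_eq, sub_zero]
    simp only [Finset.mul_sum]
    refine Finset.sum_congr rfl fun x _ => Finset.sum_congr rfl fun x' _ =>
      Finset.sum_congr rfl fun y _ => Finset.sum_congr rfl fun y' _ => ?_
    ring
  simp only [e]
  rw [energy, Finset.mul_sum, integral_finsetSum _ fun x _ => integrable_finsetSum _ fun x' _ =>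
    integrable_finsetSum _ fun y _ => integrable_finsetSum _ fun y' _ => hi x x' y y']
  refine Finset.sum_congr rfl fun x _ => ?_
  rw [Finset.mul_sum, integral_finsetSum _ fun x' _ =>
    integrable_finsetSum _ fun y _ => integrable_finsetSum _ fun y' _ => hi x x' y y']
  refine Finset.sum_congr rfl fun x' _ => ?_
  rw [Finset.mul_sum, integral_finsetSum _ fun y _ => integrable_finsetSum _ fun y' _ =>
    hi x x' y y']
  refine Finset.sum_congr rfl fun y _ => ?_
  rw [Finset.mul_sum, integral_finsetSum _ fun y' _ => hi x x' y y']
  refine Finset.sum_congr rfl fun y' _ => ?_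
  rw [integral_const_mul, integral_gs_cos hδ]
  simp only [inner_zero_right, mul_zero, Real.cos_zero]
  ring

/-- A finite measure with mass at most `A r ^ s` at distance `≤ r` from a point, for all `r ≥ r₀`,
integrates a Gaussian of width `r₀` to at most a constant times `A r₀ ^ s`. -/
lemma gaussian_sum_le (c : ℝ) (hc : 0 < c) (s : ℝ) : ∃ K : ℝ, 0 < K ∧
    ∀ {ι : Type*} (S : Finset ι) (w d : ι → ℝ) (A r₀ : ℝ), (∀ i, 0 ≤ w i) → (∀ i, 0 ≤ d i) →
      0 < r₀ → (∀ r, r₀ ≤ r → ∑ i ∈ S with d i ≤ r, w i ≤ A * r ^ s) →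
      ∑ i ∈ S, w i * Real.exp (-c * (d i / r₀) ^ 2) ≤ K * A * r₀ ^ s := by
  have hsum : Summable fun k : ℕ => ((k : ℝ) + 1) ^ s * Real.exp (-c * (k : ℝ) ^ 2) := by
    have h1 : Summable fun k : ℕ => ((k : ℝ) + 1) ^ (⌈|s|⌉₊) * Real.exp (-c * k) := by
      have := Real.summable_pow_mul_exp_neg_nat_mul ⌈|s|⌉₊ hc
      have h2 := ((summable_nat_add_iff 1).2 this).mul_left (Real.exp c)
      refine h2.congr fun k => ?_
      push_cast
      rw [show Real.exp c * (((k : ℝ) + 1) ^ ⌈|s|⌉₊ * Real.exp (-c * (k + 1))) =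
        ((k : ℝ) + 1) ^ ⌈|s|⌉₊ * (Real.exp c * Real.exp (-c * (k + 1))) by ring, ← Real.exp_add]
      congr 2; ring
    refine h1.of_nonneg_of_le (fun k => by positivity) fun k => ?_
    have hk : (1 : ℝ) ≤ (k : ℝ) + 1 := by linarith [(Nat.cast_nonneg k : (0 : ℝ) ≤ k)]
    gcongr ?_ * ?_
    · rw [← Real.rpow_natCast]
      exact Real.rpow_le_rpow_of_exponent_le hk ((le_abs_self s).trans (Nat.le_ceil _))
    · apply Real.exp_le_exp.2
      have : (k : ℝ) ≤ (k : ℝ) ^ 2 := by exact_mod_cast Nat.le_self_pow two_ne_zero k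
      nlinarith
  set Z := ∑' k : ℕ, ((k : ℝ) + 1) ^ s * Real.exp (-c * (k : ℝ) ^ 2) with hZ
  have hZ0 : 0 ≤ Z := tsum_nonneg fun k => by positivity
  refine ⟨Z + 1, by linarith, fun S w d A r₀ hw hd hr₀ h => ?_⟩
  have hA : 0 ≤ A := by
    have h1 := (Finset.sum_nonneg fun i _ => hw i).trans (h r₀ le_rfl)
    exact nonneg_of_mul_nonneg_left h1 (by positivity)
  -- split according to the integer part of `d i / r₀`
  let N : ℕ := S.sup fun i => ⌊d i / r₀⌋₊ + 1
  have hmaps : ∀ i ∈ S, ⌊d i / r₀⌋₊ ∈ Finset.range N := fun i hi =>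
    Finset.mem_range.2 (Nat.lt_of_succ_le (Finset.le_sup (f := fun i => ⌊d i / r₀⌋₊ + 1) hi))
  rw [← Finset.sum_fiberwise_of_maps_to hmaps]
  calc ∑ k ∈ Finset.range N, ∑ i ∈ S with ⌊d i / r₀⌋₊ = k, w i * Real.exp (-c * (d i / r₀) ^ 2)
      ≤ ∑ k ∈ Finset.range N, A * r₀ ^ s * (((k : ℝ) + 1) ^ s * Real.exp (-c * (k : ℝ) ^ 2)) := by
        refine Finset.sum_le_sum fun k _ => ?_
        have hk1 : r₀ ≤ ((k : ℝ) + 1) * r₀ :=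
          le_mul_of_one_le_left hr₀.le (by linarith [(Nat.cast_nonneg k : (0 : ℝ) ≤ k)])
        calc ∑ i ∈ S with ⌊d i / r₀⌋₊ = k, w i * Real.exp (-c * (d i / r₀) ^ 2)
            ≤ ∑ i ∈ S with ⌊d i / r₀⌋₊ = k, w i * Real.exp (-c * (k : ℝ) ^ 2) := by
              refine Finset.sum_le_sum fun i hi => ?_
              have hik := (Finset.mem_filter.1 hi).2
              have h1 : (k : ℝ) ≤ d i / r₀ := by
                rw [← hik]; exact Nat.floor_le (div_nonneg (hd i) hr₀.le)
              have h2 : (k : ℝ) ^ 2 ≤ (d i / r₀) ^ 2 := by gcongr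
              refine mul_le_mul_of_nonneg_left (Real.exp_le_exp.2 ?_) (hw i)
              nlinarith
          _ = (∑ i ∈ S with ⌊d i / r₀⌋₊ = k, w i) * Real.exp (-c * (k : ℝ) ^ 2) := by
              rw [Finset.sum_mul]
          _ ≤ (A * (((k : ℝ) + 1) * r₀) ^ s) * Real.exp (-c * (k : ℝ) ^ 2) := by
              gcongr
              refine le_trans (Finset.sum_le_sum_of_subset_of_nonneg ?_ fun i _ _ => hw i)
                (h _ hk1)
              intro i hi
              obtain ⟨hiS, hik⟩ := Finset.mem_filter.1 hi
              refine Finset.mem_filter.2 ⟨hiS, ?_⟩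
              rw [← div_le_iff₀ hr₀, ← hik]
              exact (Nat.lt_floor_add_one _).le
          _ = _ := by
              rw [Real.mul_rpow (by positivity) hr₀.le]; ring
    _ = A * r₀ ^ s * ∑ k ∈ Finset.range N, (((k : ℝ) + 1) ^ s * Real.exp (-c * (k : ℝ) ^ 2)) := by
        rw [Finset.mul_sum]
    _ ≤ A * r₀ ^ s * Z := by
        gcongr
        exact hsum.sum_le_tsum _ fun k _ => by positivity
    _ ≤ (Z + 1) * A * r₀ ^ s := by
        have : 0 ≤ A * r₀ ^ s := by positivity
        nlinarith

end Mattila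

namespace Mattila

/-! ### The averaged energy estimate -/

/-- A finitely supported weight satisfying an `s`-dimensional Frostman condition at all scales
above `δ`. -/
structure FrostmanAt {V : Type*} [NormedAddCommGroup V] (δ C s : ℝ) (P : Finset V) (w : V → ℝ) :
    Prop where
  nonneg : ∀ x, 0 ≤ w x
  ball : ∀ (a : V) (r : ℝ), δ ≤ r → ∑ x ∈ P with ‖x - a‖ ≤ r, w x ≤ C * r ^ s
  total : ∑ x ∈ P, w x ≤ C

/-- A finitely supported weight on a family of isometries such that, for all directions `ξ` and
`η`, the isometries carrying `η` to within relative distance `τ` of `ξ` have mass at most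
`C τ ^ β`, at all scales above `δ`. -/
structure SpreadAt {V κ : Type*} [NormedAddCommGroup V] [InnerProductSpace ℝ V]
    (δ C β : ℝ) (T : Finset κ) (θ : κ → ℝ) (G : κ → V ≃ₗᵢ[ℝ] V) : Prop where
  nonneg : ∀ k, 0 ≤ θ k
  spread : ∀ τ, δ ≤ τ → ∀ ξ η : V, ξ ≠ 0 →
    ∑ k ∈ T with ‖ξ - G k η‖ ≤ τ * ‖ξ‖, θ k ≤ C * τ ^ β
  total : ∑ k ∈ T, θ k ≤ C

variable {V : Type*} [NormedAddCommGroup V] [InnerProductSpace ℝ V] [FiniteDimensional ℝ V]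
  [MeasurableSpace V] [BorelSpace V]

omit [InnerProductSpace ℝ V] [FiniteDimensional ℝ V] [MeasurableSpace V] [BorelSpace V] in
lemma double_sum_le (s : ℝ) : ∃ K : ℝ, 0 < K ∧ ∀ {δ C : ℝ} {P : Finset V} {w : V → ℝ},
    FrostmanAt δ C s P w → ∀ ρ, 0 < ρ → δ ≤ ρ →
    ∑ x ∈ P, ∑ x' ∈ P, w x * w x' * gs (‖x - x'‖ / ρ) ≤ K * C ^ 2 * ρ ^ s := by
  obtain ⟨K, hK, h⟩ := gaussian_sum_le.{_} Real.pi Real.pi_pos s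
  refine ⟨K, hK, fun {δ C P w} hP ρ hρ hδ => ?_⟩
  have hC : 0 ≤ C := (Finset.sum_nonneg fun x _ => hP.nonneg x).trans hP.total
  have h1 : ∀ x : V, ∑ x' ∈ P, w x' * gs (‖x - x'‖ / ρ) ≤ K * C * ρ ^ s := fun x => by
    refine h P w (fun x' => ‖x - x'‖) C ρ hP.nonneg (fun _ => norm_nonneg _) hρ fun r hr => ?_
    simp only [norm_sub_rev x]
    exact hP.ball x r (hδ.trans hr)
  calc ∑ x ∈ P, ∑ x' ∈ P, w x * w x' * gs (‖x - x'‖ / ρ)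
      = ∑ x ∈ P, w x * ∑ x' ∈ P, w x' * gs (‖x - x'‖ / ρ) := by
        simp only [Finset.mul_sum, mul_assoc]
    _ ≤ ∑ x ∈ P, w x * (K * C * ρ ^ s) :=
        Finset.sum_le_sum fun x _ => mul_le_mul_of_nonneg_left (h1 x) (hP.nonneg x)
    _ = (∑ x ∈ P, w x) * (K * C * ρ ^ s) := by rw [Finset.sum_mul]
    _ ≤ C * (K * C * ρ ^ s) := by
        gcongr
        exact hP.total
    _ = _ := by ring

omit [FiniteDimensional ℝ V] [MeasurableSpace V] [BorelSpace V] in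
lemma damped_le_double_sum {ρ : ℝ} {Q : Finset V} {v : V → ℝ} (hv : ∀ y, 0 ≤ v y) (ζ : V) :
    damped ρ Q v ζ ≤ ∑ y ∈ Q, ∑ y' ∈ Q, v y * v y' * gs (‖y - y'‖ / ρ) := by
  refine Finset.sum_le_sum fun y _ => Finset.sum_le_sum fun y' _ => ?_
  exact mul_le_of_le_one_right
    (mul_nonneg (mul_nonneg (hv y) (hv y')) (gs_pos _).le) (Real.cos_le_one _)

lemma integral_fsq_le (s : ℝ) : ∃ K : ℝ, 0 < K ∧ ∀ {δ C : ℝ} {P : Finset V} {w : V → ℝ},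
    FrostmanAt δ C s P w → ∀ ε, 0 < ε → δ ≤ ε →
    ∫ ξ : V, gs (ε / 2 * ‖ξ‖) * fsq P w ξ ≤
      K * C ^ 2 * ε ^ (s - Module.finrank ℝ V) := by
  obtain ⟨K, hK, h⟩ := double_sum_le (V := V) s
  refine ⟨2 ^ Module.finrank ℝ V * K, by positivity, fun {δ C P w} hP ε hε hδ => ?_⟩
  have h0 := integral_gs_fsq (half_pos hε) (0 : V) P w
  simp only [sub_zero] at h0
  rw [h0]
  have h1 : damped (ε / 2) P w 0 ≤ K * C ^ 2 * ε ^ s := by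
    refine (damped_le_double_sum hP.nonneg 0).trans (le_trans ?_ (h hP ε hε hδ))
    refine Finset.sum_le_sum fun x _ => Finset.sum_le_sum fun x' _ => ?_
    refine mul_le_mul_of_nonneg_left (gs_anti (by positivity) ?_)
      (mul_nonneg (hP.nonneg x) (hP.nonneg x'))
    exact div_le_div_of_nonneg_left (norm_nonneg _) (half_pos hε) (half_le_self hε.le)
  calc (ε / 2)⁻¹ ^ Module.finrank ℝ V * damped (ε / 2) P w 0
      ≤ (ε / 2)⁻¹ ^ Module.finrank ℝ V * (K * C ^ 2 * ε ^ s) := by gcongr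
    _ = _ := by
        rw [Real.rpow_sub hε, Real.rpow_natCast, inv_div, div_pow]
        field_simp

omit [FiniteDimensional ℝ V] [MeasurableSpace V] [BorelSpace V] in
/-- The crude bound for the averaged damped transform, used at low frequencies. -/
lemma averaged_damped_le (t : ℝ) : ∃ K : ℝ, 0 < K ∧ ∀ {κ : Type*} {δ C β : ℝ} {Q : Finset V}
    {v : V → ℝ} {T : Finset κ} {θ : κ → ℝ} {G : κ → V ≃ₗᵢ[ℝ] V},
    FrostmanAt δ C t Q v → SpreadAt δ C β T θ G → ∀ ρ, 0 < ρ → δ ≤ ρ → ∀ ξ : V,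
    ∑ k ∈ T, θ k * damped ρ Q v ((G k).symm ξ) ≤ K * C ^ 3 * ρ ^ t := by
  obtain ⟨K, hK, h⟩ := double_sum_le (V := V) t
  refine ⟨K, hK, fun {κ δ C β Q v T θ G} hQ hT ρ hρ hδ ξ => ?_⟩
  have hC : 0 ≤ C := (Finset.sum_nonneg fun x _ => hQ.nonneg x).trans hQ.total
  calc ∑ k ∈ T, θ k * damped ρ Q v ((G k).symm ξ)
      ≤ ∑ k ∈ T, θ k * (K * C ^ 2 * ρ ^ t) := Finset.sum_le_sum fun k _ =>
        mul_le_mul_of_nonneg_left ((damped_le_double_sum hQ.nonneg _).trans (h hQ ρ hρ hδ))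
          (hT.nonneg k)
    _ = (∑ k ∈ T, θ k) * (K * C ^ 2 * ρ ^ t) := by rw [Finset.sum_mul]
    _ ≤ C * (K * C ^ 2 * ρ ^ t) := by
        gcongr
        exact hT.total
    _ = _ := by ring

/-- Trading half of the decay in `‖ξ - η‖` for decay in `‖η‖`. -/
lemma gs_split {ε ρ X Y d : ℝ} (hε : 0 ≤ ε) (hερ : ε ≤ ρ) (hY : 0 ≤ Y)
    (hd : 0 ≤ d) (hYX : Y ≤ X + d) :
    gs (ε * X) * gs (ρ * d) ≤
      gs (ε / 2 * X) * gs (ε / 2 * Y) * Real.exp (-(Real.pi / 2) * (d / ρ⁻¹) ^ 2) := by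
  unfold gs
  rw [← Real.exp_add, ← Real.exp_add, ← Real.exp_add]
  apply Real.exp_le_exp.2
  have hpi := Real.pi_pos
  have h1 : (ε * d) ^ 2 ≤ (ρ * d) ^ 2 := by gcongr
  have h2 : Y ^ 2 ≤ 2 * X ^ 2 + 2 * d ^ 2 := by
    have : Y ^ 2 ≤ (X + d) ^ 2 := by gcongr
    nlinarith [sq_nonneg (X - d)]
  have h3 : ε ^ 2 * Y ^ 2 ≤ ε ^ 2 * (2 * X ^ 2 + 2 * d ^ 2) := by gcongr
  rw [div_inv_eq_mul]
  have h4 : (ε / 2 * X) ^ 2 + (ε / 2 * Y) ^ 2 + (d * ρ) ^ 2 / 2 ≤ (ε * X) ^ 2 + (ρ * d) ^ 2 := by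
    nlinarith [sq_nonneg (ε * X)]
  nlinarith

/-- The bound for the averaged damped transform at frequencies above `1 / ε`. It rests on writing
the damped transform as a Gaussian average of `|v̂|²`, and on the spread of the isometries. -/
lemma gs_mul_averaged_damped_le (t β : ℝ) : ∃ K : ℝ, 0 < K ∧
    ∀ {κ : Type*} {δ C : ℝ} {Q : Finset V}
    {v : V → ℝ} {T : Finset κ} {θ : κ → ℝ} {G : κ → V ≃ₗᵢ[ℝ] V},
    FrostmanAt δ C t Q v → SpreadAt δ C β T θ G → ∀ ε ρ, 0 < ε → δ ≤ ε → ε ≤ ρ → ρ ≤ 1 →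
    ∀ ξ : V, 1 ≤ ε * ‖ξ‖ →
    gs (ε * ‖ξ‖) * ∑ k ∈ T, θ k * damped ρ Q v ((G k).symm ξ) ≤
      K * C ^ 3 * (ρ ^ (Module.finrank ℝ V - β) * ε ^ (β + t - Module.finrank ℝ V)) *
        gs (ε / 2 * ‖ξ‖) := by
  obtain ⟨K₁, hK₁, h₁⟩ := gaussian_sum_le (Real.pi / 2) (by positivity) β
  obtain ⟨K₂, hK₂, h₂⟩ := integral_fsq_le (V := V) t
  refine ⟨K₁ * K₂, by positivity, fun {κ δ C Q v T θ G} hQ hT ε ρ hε hδ hερ hρ1 ξ hξ => ?_⟩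
  have hC : 0 ≤ C := (Finset.sum_nonneg fun x _ => hQ.nonneg x).trans hQ.total
  have hρ : 0 < ρ := hε.trans_le hερ
  set n := Module.finrank ℝ V
  have hξ0 : ξ ≠ 0 := by
    rintro rfl
    simp at hξ
    linarith
  have hdamp : ∀ ζ : V, damped ρ Q v ζ = ρ ^ n * ∫ η : V, gs (ρ * ‖η - ζ‖) * fsq Q v η := fun ζ => by
    rw [integral_gs_fsq hρ, ← mul_assoc, ← mul_pow, mul_inv_cancel₀ hρ.ne', one_pow, one_mul]
  have hsum : ∀ η : V, ∑ k ∈ T, θ k * (gs (ε * ‖ξ‖) * gs (ρ * ‖η - (G k).symm ξ‖)) ≤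
      K₁ * (C * ε ^ β) * ρ⁻¹ ^ β * (gs (ε / 2 * ‖ξ‖) * gs (ε / 2 * ‖η‖)) := fun η => by
    have hd : ∀ k, ‖η - (G k).symm ξ‖ = ‖ξ - G k η‖ := fun k => by
      rw [← (G k).norm_map (η - (G k).symm ξ), map_sub, LinearIsometryEquiv.apply_symm_apply,
        norm_sub_rev]
    calc ∑ k ∈ T, θ k * (gs (ε * ‖ξ‖) * gs (ρ * ‖η - (G k).symm ξ‖))
        ≤ ∑ k ∈ T, (gs (ε / 2 * ‖ξ‖) * gs (ε / 2 * ‖η‖)) *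
            (θ k * Real.exp (-(Real.pi / 2) * (‖ξ - G k η‖ / ρ⁻¹) ^ 2)) := by
          refine Finset.sum_le_sum fun k _ => ?_
          rw [hd, mul_left_comm (gs (ε / 2 * ‖ξ‖) * _)]
          refine mul_le_mul_of_nonneg_left
            (gs_split hε.le hερ (norm_nonneg η) (norm_nonneg (ξ - G k η)) ?_) (hT.nonneg k)
          rw [← (G k).norm_map η]
          simpa only [sub_sub_cancel] using norm_sub_le ξ (ξ - G k η)
      _ = (gs (ε / 2 * ‖ξ‖) * gs (ε / 2 * ‖η‖)) *
            ∑ k ∈ T, θ k * Real.exp (-(Real.pi / 2) * (‖ξ - G k η‖ / ρ⁻¹) ^ 2) := by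
          rw [Finset.mul_sum]
      _ ≤ (gs (ε / 2 * ‖ξ‖) * gs (ε / 2 * ‖η‖)) * (K₁ * (C * ε ^ β) * ρ⁻¹ ^ β) := by
          refine mul_le_mul_of_nonneg_left ?_ (mul_pos (gs_pos _) (gs_pos _)).le
          refine h₁ T θ (fun k => ‖ξ - G k η‖) _ _ hT.nonneg (fun _ => norm_nonneg _)
            (inv_pos.2 hρ) fun r hr => ?_
          have hr0 : 0 < r := (inv_pos.2 hρ).trans_le hr
          have hr1 : 1 ≤ r := (one_le_inv₀ hρ |>.2 hρ1).trans hr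
          -- relative distance `ε r` suffices because `‖ξ‖ ≥ 1 / ε`
          have h3 := hT.spread (ε * r) (hδ.trans (le_mul_of_one_le_right hε.le hr1)) ξ η hξ0
          rw [Real.mul_rpow hε.le hr0.le, ← mul_assoc] at h3
          refine le_trans (Finset.sum_le_sum_of_subset_of_nonneg ?_ fun k _ _ => hT.nonneg k) h3
          refine Finset.monotone_filter_right _ fun k _ hk => hk.trans ?_
          nlinarith
      _ = _ := by ring
  have hgint : ∀ ζ : V, Integrable fun η : V => gs (ρ * ‖η - ζ‖) * fsq Q v η := fun ζ =>
    integrable_gs_fsq hρ ζ Q v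
  calc gs (ε * ‖ξ‖) * ∑ k ∈ T, θ k * damped ρ Q v ((G k).symm ξ)
      = ρ ^ n * ∫ η : V, ∑ k ∈ T, (gs (ε * ‖ξ‖) * θ k) *
          (gs (ρ * ‖η - (G k).symm ξ‖) * fsq Q v η) := by
        rw [integral_finsetSum _ fun k _ => (hgint _).const_mul _, Finset.mul_sum, Finset.mul_sum]
        refine Finset.sum_congr rfl fun k _ => ?_
        rw [integral_const_mul, hdamp]
        ring
    _ ≤ ρ ^ n * ∫ η : V, (K₁ * (C * ε ^ β) * ρ⁻¹ ^ β * gs (ε / 2 * ‖ξ‖)) *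
          (gs (ε / 2 * ‖η‖) * fsq Q v η) := by
        refine mul_le_mul_of_nonneg_left (integral_mono
          (integrable_finsetSum _ fun k _ => (hgint _).const_mul _) ?_ fun η => ?_) (by positivity)
        · have := (integrable_gs_fsq (half_pos hε) (0 : V) Q v).const_mul
            (K₁ * (C * ε ^ β) * ρ⁻¹ ^ β * gs (ε / 2 * ‖ξ‖))
          simpa only [sub_zero] using this
        · have := mul_le_mul_of_nonneg_right (hsum η) (fsq_nonneg Q v η)
          rw [Finset.sum_mul] at this
          refine le_trans (le_of_eq (Finset.sum_congr rfl fun k _ => by ring))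
            (this.trans (le_of_eq (by ring)))
    _ = ρ ^ n * ((K₁ * (C * ε ^ β) * ρ⁻¹ ^ β * gs (ε / 2 * ‖ξ‖)) *
          ∫ η : V, gs (ε / 2 * ‖η‖) * fsq Q v η) := by rw [integral_const_mul]
    _ ≤ ρ ^ n * ((K₁ * (C * ε ^ β) * ρ⁻¹ ^ β * gs (ε / 2 * ‖ξ‖)) *
          (K₂ * C ^ 2 * ε ^ (t - n))) := by
        have := (gs_pos (ε / 2 * ‖ξ‖)).le
        gcongr
        exact h₂ hQ ε hε hδ
    _ = _ := by
        rw [show β + t - (n : ℝ) = β + (t - n) by ring, Real.rpow_add hε,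
          Real.rpow_sub hρ (n : ℝ) β, Real.rpow_natCast, Real.inv_rpow hρ.le]
        ring

end Mattila

namespace Mattila

variable {V : Type*} [NormedAddCommGroup V] [InnerProductSpace ℝ V] [FiniteDimensional ℝ V]
  [MeasurableSpace V] [BorelSpace V]

lemma exists_frequency_scale {x : ℝ} {j m : ℕ} (hjm : j ≤ m) (hx : 1 ≤ (2 : ℝ)⁻¹ ^ j * x) :
    ∃ i, j ≤ i ∧ i ≤ m ∧ 1 ≤ (2 : ℝ)⁻¹ ^ i * x ∧ (i = m ∨ (2 : ℝ)⁻¹ ^ i * x ≤ 2) := by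
  induction m, hjm using Nat.le_induction with
  | base => exact ⟨j, le_rfl, le_rfl, hx, Or.inl rfl⟩
  | succ m hjm ih =>
    by_cases h : 1 ≤ (2 : ℝ)⁻¹ ^ (m + 1) * x
    · exact ⟨m + 1, by omega, le_rfl, h, Or.inl rfl⟩
    · obtain ⟨i, h1, h2, h3, h4⟩ := ih
      refine ⟨i, h1, by omega, h3, Or.inr ?_⟩
      rcases h4 with rfl | h4
      · rw [pow_succ] at h
        linarith
      · exact h4

lemma averaged_pointwise_le (t β : ℝ) : ∃ K : ℝ, 0 < K ∧
    ∀ {κ : Type*} {m : ℕ} {C : ℝ} {Q : Finset V}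
    {v : V → ℝ} {T : Finset κ} {θ : κ → ℝ} {G : κ → V ≃ₗᵢ[ℝ] V},
    FrostmanAt (2⁻¹ ^ m) C t Q v → SpreadAt (2⁻¹ ^ m) C β T θ G → ∀ j ≤ m, ∀ ξ : V,
    gs (2⁻¹ ^ m * ‖ξ‖) * ∑ k ∈ T, θ k * damped (2⁻¹ ^ j) Q v ((G k).symm ξ) ≤
      K * C ^ 3 * (((2 : ℝ)⁻¹ ^ j) ^ t * gs (2⁻¹ ^ j / 2 * ‖ξ‖) +
        ∑ i ∈ Finset.Icc j m, ((2 : ℝ)⁻¹ ^ j) ^ (Module.finrank ℝ V - β) *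
          ((2 : ℝ)⁻¹ ^ i) ^ (β + t - Module.finrank ℝ V) * gs (2⁻¹ ^ i / 2 * ‖ξ‖)) := by
  obtain ⟨K₁, hK₁, h₁⟩ := averaged_damped_le (V := V) t
  obtain ⟨K₂, hK₂, h₂⟩ := gs_mul_averaged_damped_le (V := V) t β
  have hpi := Real.pi_pos
  refine ⟨(K₁ + K₂) * Real.exp (Real.pi * 4), by positivity,
    fun {κ m C Q v T θ G} hQ hT j hj ξ => ?_⟩
  have hC : 0 ≤ C := (Finset.sum_nonneg fun x _ => hQ.nonneg x).trans hQ.total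
  set D := ∑ k ∈ T, θ k * damped (2⁻¹ ^ j) Q v ((G k).symm ξ)
  set n := Module.finrank ℝ V
  have hterm : ∀ i, 0 ≤ ((2 : ℝ)⁻¹ ^ j) ^ (n - β) * ((2 : ℝ)⁻¹ ^ i) ^ (β + t - n) *
      gs (2⁻¹ ^ i / 2 * ‖ξ‖) := fun i => mul_nonneg (by positivity) (gs_pos _).le
  have hfirst : 0 ≤ ((2 : ℝ)⁻¹ ^ j) ^ t * gs (2⁻¹ ^ j / 2 * ‖ξ‖) :=
    mul_nonneg (by positivity) (gs_pos _).le
  have hlow : ∀ x : ℝ, 0 ≤ x → x ≤ 2 → 1 ≤ Real.exp (Real.pi * 4) * gs x := fun x hx0 hx => by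
    rw [gs, ← Real.exp_add]
    apply Real.one_le_exp
    nlinarith [pow_le_pow_left₀ hx0 hx 2]
  have hdj : (2 : ℝ)⁻¹ ^ m ≤ 2⁻¹ ^ j := pow_le_pow_of_le_one (by norm_num) (by norm_num) hj
  have hE1 : 1 ≤ Real.exp (Real.pi * 4) := Real.one_le_exp (by positivity)
  rcases le_or_gt D 0 with hD | hD
  · refine (mul_nonpos_of_nonneg_of_nonpos (gs_pos _).le hD).trans ?_
    have := Finset.sum_nonneg fun i (_ : i ∈ Finset.Icc j m) => hterm i
    positivity
  rcases le_or_gt ((2 : ℝ)⁻¹ ^ j * ‖ξ‖) 1 with hξ | hξ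
  · calc gs (2⁻¹ ^ m * ‖ξ‖) * D ≤ D := mul_le_of_le_one_left hD.le (gs_le_one _)
      _ ≤ K₁ * C ^ 3 * ((2 : ℝ)⁻¹ ^ j) ^ t := h₁ hQ hT _ (by positivity) hdj ξ
      _ ≤ K₁ * C ^ 3 * ((2 : ℝ)⁻¹ ^ j) ^ t *
          (Real.exp (Real.pi * 4) * gs (2⁻¹ ^ j / 2 * ‖ξ‖)) :=
        le_mul_of_one_le_right (by positivity) (hlow _ (by positivity) (by linarith))
      _ = K₁ * Real.exp (Real.pi * 4) * C ^ 3 *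
          (((2 : ℝ)⁻¹ ^ j) ^ t * gs (2⁻¹ ^ j / 2 * ‖ξ‖)) := by ring
      _ ≤ _ := by
        gcongr
        · linarith
        · exact le_add_of_nonneg_right (Finset.sum_nonneg fun i _ => hterm i)
  · obtain ⟨i, hji, him, h3, h4⟩ := exists_frequency_scale hj hξ.le
    have hgs : gs (2⁻¹ ^ m * ‖ξ‖) ≤ Real.exp (Real.pi * 4) * gs (2⁻¹ ^ i * ‖ξ‖) := by
      rcases h4 with rfl | h4
      · exact le_mul_of_one_le_left (gs_pos _).le hE1
      · exact (gs_le_one _).trans (hlow _ (by positivity) h4)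
    calc gs (2⁻¹ ^ m * ‖ξ‖) * D ≤ Real.exp (Real.pi * 4) * gs (2⁻¹ ^ i * ‖ξ‖) * D := by gcongr
      _ = Real.exp (Real.pi * 4) * (gs (2⁻¹ ^ i * ‖ξ‖) * D) := by ring
      _ ≤ Real.exp (Real.pi * 4) * (K₂ * C ^ 3 * (((2 : ℝ)⁻¹ ^ j) ^ (n - β) *
          ((2 : ℝ)⁻¹ ^ i) ^ (β + t - n)) * gs (2⁻¹ ^ i / 2 * ‖ξ‖)) := by
        refine mul_le_mul_of_nonneg_left ?_ (by positivity)
        exact h₂ hQ hT _ _ (by positivity)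
          (pow_le_pow_of_le_one (by norm_num) (by norm_num) him)
          (pow_le_pow_of_le_one (by norm_num) (by norm_num) hji)
          (pow_le_one₀ (by norm_num) (by norm_num)) ξ h3
      _ = K₂ * Real.exp (Real.pi * 4) * C ^ 3 * (((2 : ℝ)⁻¹ ^ j) ^ (n - β) *
          ((2 : ℝ)⁻¹ ^ i) ^ (β + t - n) * gs (2⁻¹ ^ i / 2 * ‖ξ‖)) := by ring
      _ ≤ _ := by
        have h5 := Finset.single_le_sum (fun i _ => hterm i)
          (Finset.mem_Icc.2 ⟨hji, him⟩ : i ∈ Finset.Icc j m)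
        have h6 := hterm i
        gcongr
        · linarith
        · exact h5.trans (le_add_of_nonneg_left hfirst)

lemma sum_Icc_geometric_le {q : ℝ} (hq0 : 0 ≤ q) (hq : q < 1) (j m : ℕ) :
    ∑ i ∈ Finset.Icc j m, q ^ i ≤ q ^ j * (1 - q)⁻¹ := by
  have h0 : ∀ i ∈ Finset.Icc j m, j ≤ i := fun i hi => (Finset.mem_Icc.1 hi).1
  have h1 : ∑ i ∈ Finset.Icc j m, q ^ i ≤ ∑ i ∈ Finset.range (m + 1), q ^ j * q ^ i := by
    rw [← Finset.sum_image (s := Finset.Icc j m) (g := fun i => i - j)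
      (f := fun i => q ^ j * q ^ i) ?_ |>.trans (Finset.sum_congr rfl fun i hi => by
        rw [← pow_add, Nat.add_sub_cancel' (h0 i hi)])]
    · refine Finset.sum_le_sum_of_subset_of_nonneg ?_ fun i _ _ => by positivity
      intro i hi
      obtain ⟨k, hk, rfl⟩ := Finset.mem_image.1 hi
      have := Finset.mem_Icc.1 hk
      exact Finset.mem_range.2 (by omega)
    · intro a ha b hb hab
      have := h0 a ha
      have := h0 b hb
      simp only at hab
      omega
  refine h1.trans ?_
  rw [← Finset.mul_sum]
  gcongr
  rw [← tsum_geometric_of_lt_one hq0 hq]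
  exact (summable_geometric_of_lt_one hq0 hq).sum_le_tsum _ fun i _ => by positivity

/-- The averaged discrete energy decays like the `(s + t - n)`-th power of the cutoff radius,
provided that `β + s + t > 2 n`. -/
theorem averaged_energy_le (s t β : ℝ) (hγ : 2 * (Module.finrank ℝ V : ℝ) < β + s + t) :
    ∃ K : ℝ, 0 < K ∧ ∀ {κ : Type*} {m : ℕ} {C : ℝ} {P : Finset V} {w : V → ℝ} {Q : Finset V}
    {v : V → ℝ} {T : Finset κ} {θ : κ → ℝ} {G : κ → V ≃ₗᵢ[ℝ] V},
    FrostmanAt (2⁻¹ ^ m) C s P w → FrostmanAt (2⁻¹ ^ m) C t Q v →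
    SpreadAt (2⁻¹ ^ m) C β T θ G → ∀ j ≤ m,
    ∑ k ∈ T, θ k * energy (2⁻¹ ^ j) (2⁻¹ ^ m) P w Q v (G k) ≤
      K * C ^ 5 * ((2 : ℝ)⁻¹ ^ j) ^ (s + t - Module.finrank ℝ V) := by
  obtain ⟨K₁, hK₁, h₁⟩ := averaged_pointwise_le (V := V) t β
  obtain ⟨K₂, hK₂, h₂⟩ := integral_fsq_le (V := V) s
  set n := Module.finrank ℝ V with hn
  set γ := β + s + t - 2 * n with hγdef
  have hγ0 : 0 < γ := by linarith
  set q : ℝ := (2 : ℝ)⁻¹ ^ γ with hq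
  have hq0 : 0 ≤ q := by positivity
  have hq1 : q < 1 := Real.rpow_lt_one (by norm_num) (by norm_num) hγ0
  have hq2 : 0 < (1 - q)⁻¹ := inv_pos.2 (by linarith)
  refine ⟨K₁ * K₂ * (1 + (1 - q)⁻¹), by positivity,
    fun {κ m C P w Q v T θ G} hP hQ hT j hj => ?_⟩
  have hC : 0 ≤ C := (Finset.sum_nonneg fun x _ => hQ.nonneg x).trans hQ.total
  have hδ : (0 : ℝ) < 2⁻¹ ^ m := by positivity
  have hle : ∀ i ≤ m, (2 : ℝ)⁻¹ ^ m ≤ 2⁻¹ ^ i := fun i hi =>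
    pow_le_pow_of_le_one (by norm_num) (by norm_num) hi
  have hgint : ∀ {ε : ℝ}, 0 < ε → Integrable fun ξ : V => gs (ε * ‖ξ‖) * fsq P w ξ := fun hε => by
    simpa only [sub_zero] using integrable_gs_fsq hε (0 : V) P w
  have hint2 : ∀ k : κ, Integrable fun ξ : V => gs (2⁻¹ ^ m * ‖ξ‖) *
      (fsq P w ξ * damped (2⁻¹ ^ j) Q v ((G k).symm ξ)) := fun k => by
    have hb : ∀ ξ : V, |damped (2⁻¹ ^ j) Q v ((G k).symm ξ)| ≤
        ∑ y ∈ Q, ∑ y' ∈ Q, v y * v y' := fun ξ => by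
      refine (Finset.abs_sum_le_sum_abs _ _).trans (Finset.sum_le_sum fun y _ => ?_)
      refine (Finset.abs_sum_le_sum_abs _ _).trans (Finset.sum_le_sum fun y' _ => ?_)
      have hv := mul_nonneg (hQ.nonneg y) (hQ.nonneg y')
      rw [abs_mul, abs_mul, abs_of_nonneg hv, abs_of_nonneg (gs_pos _).le]
      exact mul_le_of_le_one_right (mul_nonneg hv (gs_pos _).le) (Real.abs_cos_le_one _) |>.trans
        (mul_le_of_le_one_right hv (gs_le_one _))
    have hc : Continuous fun ξ : V => damped (2⁻¹ ^ j) Q v ((G k).symm ξ) := by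
      unfold damped
      fun_prop
    refine ((hgint hδ).mul_bdd (c := ∑ y ∈ Q, ∑ y' ∈ Q, v y * v y') hc.aestronglyMeasurable
      (Filter.Eventually.of_forall hb)).congr (Filter.Eventually.of_forall fun ξ => ?_)
    simp only
    ring
  set c := fun i : ℕ => ((2 : ℝ)⁻¹ ^ j) ^ (n - β) * ((2 : ℝ)⁻¹ ^ i) ^ (β + t - n) with hc
  have hfin : ∀ i ∈ Finset.Icc j m,
      c i * (K₂ * C ^ 2 * ((2 : ℝ)⁻¹ ^ i) ^ (s - n)) =
        K₂ * C ^ 2 * (((2 : ℝ)⁻¹ ^ j) ^ (n - β) * q ^ i) := fun i _ => by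
    have h2 : q ^ i = ((2 : ℝ)⁻¹ ^ i) ^ (β + t - n) * ((2 : ℝ)⁻¹ ^ i) ^ (s - n) := by
      rw [← Real.rpow_add (by positivity), hq, ← Real.rpow_natCast, ← Real.rpow_mul (by norm_num),
        ← Real.rpow_natCast, ← Real.rpow_mul (by norm_num)]
      congr 1
      rw [hγdef]
      ring
    rw [h2, hc]
    ring
  calc ∑ k ∈ T, θ k * energy (2⁻¹ ^ j) (2⁻¹ ^ m) P w Q v (G k)
      = ∫ ξ : V, ∑ k ∈ T, θ k * (gs (2⁻¹ ^ m * ‖ξ‖) *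
          (fsq P w ξ * damped (2⁻¹ ^ j) Q v ((G k).symm ξ))) := by
        rw [integral_finsetSum _ fun k _ => (hint2 k).const_mul _]
        refine Finset.sum_congr rfl fun k _ => ?_
        rw [integral_const_mul, energy_eq_integral hδ]
    _ ≤ ∫ ξ : V, K₁ * C ^ 3 * (((2 : ℝ)⁻¹ ^ j) ^ t * (gs (2⁻¹ ^ j / 2 * ‖ξ‖) * fsq P w ξ) +
          ∑ i ∈ Finset.Icc j m, c i * (gs (2⁻¹ ^ i / 2 * ‖ξ‖) * fsq P w ξ)) := by
        refine integral_mono (integrable_finsetSum _ fun k _ => (hint2 k).const_mul _) ?_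
          fun ξ => ?_
        · exact (((hgint (by positivity)).const_mul _).add
            (integrable_finsetSum _ fun i _ => (hgint (by positivity)).const_mul _)).const_mul _
        · have := mul_le_mul_of_nonneg_right (h₁ hQ hT j hj ξ) (fsq_nonneg P w ξ)
          convert this using 1
          · simp only [Finset.mul_sum, Finset.sum_mul]
            exact Finset.sum_congr rfl fun k _ => by ring
          · rw [mul_assoc (K₁ * C ^ 3), add_mul, Finset.sum_mul]
            congr 2
            · ring
            · exact Finset.sum_congr rfl fun i _ => by rw [hc]; ring
    _ = K₁ * C ^ 3 * (((2 : ℝ)⁻¹ ^ j) ^ t * (∫ ξ : V, gs (2⁻¹ ^ j / 2 * ‖ξ‖) * fsq P w ξ) +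
          ∑ i ∈ Finset.Icc j m, c i * ∫ ξ : V, gs (2⁻¹ ^ i / 2 * ‖ξ‖) * fsq P w ξ) := by
        rw [integral_const_mul, integral_add ((hgint (by positivity)).const_mul _)
          (integrable_finsetSum _ fun i _ => (hgint (by positivity)).const_mul _),
          integral_finsetSum _ fun i _ => (hgint (by positivity)).const_mul _, integral_const_mul]
        simp only [integral_const_mul]
    _ ≤ K₁ * C ^ 3 * (((2 : ℝ)⁻¹ ^ j) ^ t * (K₂ * C ^ 2 * ((2 : ℝ)⁻¹ ^ j) ^ (s - n)) +
          ∑ i ∈ Finset.Icc j m, c i * (K₂ * C ^ 2 * ((2 : ℝ)⁻¹ ^ i) ^ (s - n))) := by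
        gcongr with i hi
        · exact h₂ hP _ (by positivity) (hle j hj)
        · exact h₂ hP _ (by positivity) (hle i (Finset.mem_Icc.1 hi).2)
    _ = K₁ * C ^ 3 * (K₂ * C ^ 2) * (((2 : ℝ)⁻¹ ^ j) ^ t * ((2 : ℝ)⁻¹ ^ j) ^ (s - n) +
          ((2 : ℝ)⁻¹ ^ j) ^ (n - β) * ∑ i ∈ Finset.Icc j m, q ^ i) := by
        rw [Finset.sum_congr rfl hfin, ← Finset.mul_sum, ← Finset.mul_sum]
        ring
    _ ≤ K₁ * C ^ 3 * (K₂ * C ^ 2) * (((2 : ℝ)⁻¹ ^ j) ^ t * ((2 : ℝ)⁻¹ ^ j) ^ (s - n) +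
          ((2 : ℝ)⁻¹ ^ j) ^ (n - β) * (q ^ j * (1 - q)⁻¹)) := by
        gcongr
        exact sum_Icc_geometric_le hq0 hq1 j m
    _ = _ := by
        have h1 : ((2 : ℝ)⁻¹ ^ j) ^ t * ((2 : ℝ)⁻¹ ^ j) ^ (s - n) =
            ((2 : ℝ)⁻¹ ^ j) ^ (s + t - n) := by
          rw [← Real.rpow_add (by positivity)]
          congr 1; ring
        have h2 : ((2 : ℝ)⁻¹ ^ j) ^ (n - β) * q ^ j = ((2 : ℝ)⁻¹ ^ j) ^ (s + t - n) := by
          have : q ^ j = ((2 : ℝ)⁻¹ ^ j) ^ γ := by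
            rw [hq, ← Real.rpow_natCast, ← Real.rpow_mul (by norm_num),
              ← Real.rpow_natCast, ← Real.rpow_mul (by norm_num), mul_comm]
          rw [this, ← Real.rpow_add (by positivity)]
          congr 1; rw [hγdef]; ring
        rw [← mul_assoc (((2 : ℝ)⁻¹ ^ j) ^ (n - β)), h1, h2]
        ring

end Mattila

namespace Mattila

/-! ### Spread of Frostman weights on the orthogonal group -/

lemma norm_le_sum_abs_inner {ι E : Type*} [Fintype ι] [NormedAddCommGroup E]
    [InnerProductSpace ℝ E] (b : OrthonormalBasis ι ℝ E) (x : E) :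
    ‖x‖ ≤ ∑ i, |inner ℝ (b i) x| := by
  conv_lhs => rw [← b.sum_repr' x]
  refine (norm_sum_le _ _).trans (Finset.sum_le_sum fun i _ => ?_)
  rw [norm_smul, b.norm_eq_one, mul_one, Real.norm_eq_abs]

lemma norm_le_card_mul_of_inner {ι E : Type*} [Fintype ι] [NormedAddCommGroup E]
    [InnerProductSpace ℝ E] (b : OrthonormalBasis ι ℝ E) {x : E} {c : ℝ}
    (h : ∀ i, |inner ℝ (b i) x| ≤ c) : ‖x‖ ≤ Fintype.card ι * c := by
  refine (norm_le_sum_abs_inner b x).trans ((Finset.sum_le_sum fun i _ => h i).trans ?_)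
  simp

lemma norm_map_le_of_basis {ι E : Type*} [Fintype ι] [NormedAddCommGroup E]
    [InnerProductSpace ℝ E] (b : OrthonormalBasis ι ℝ E) (g g' : E ≃ₗᵢ[ℝ] E) {c : ℝ}
    (h : ∀ j, ‖g (b j) - g' (b j)‖ ≤ c) (x : E) :
    ‖g x - g' x‖ ≤ Fintype.card ι * c * ‖x‖ := by
  have hx : g x - g' x = ∑ j, (inner ℝ (b j) x : ℝ) • (g (b j) - g' (b j)) := by
    conv_lhs => rw [← b.sum_repr' x]
    rw [map_sum, map_sum, ← Finset.sum_sub_distrib]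
    exact Finset.sum_congr rfl fun j _ => by rw [map_smul, map_smul, smul_sub]
  rw [hx]
  calc ‖∑ j, (inner ℝ (b j) x : ℝ) • (g (b j) - g' (b j))‖
      ≤ ∑ j : ι, c * ‖x‖ := by
        refine (norm_sum_le _ _).trans (Finset.sum_le_sum fun j _ => ?_)
        rw [norm_smul, mul_comm]
        refine mul_le_mul (h j) ?_ (norm_nonneg _) ((norm_nonneg _).trans (h j))
        simpa [b.norm_eq_one] using norm_inner_le_norm (𝕜 := ℝ) (b j) x
    _ = _ := by simp [mul_assoc]

/-- Near the identity, an orthogonal matrix is determined by its entries below the diagonal, with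
a Lipschitz bound. -/
lemma orthogonal_near_one_le {ι : Type*} [Fintype ι] [LinearOrder ι] {H H' : ι → ι → ℝ} {c τ : ℝ}
    (hH : ∀ i j, ∑ k, H k i * H k j = if i = j then 1 else 0)
    (hH' : ∀ i j, ∑ k, H' k i * H' k j = if i = j then 1 else 0)
    (hc : ∀ i j, |H i j - if i = j then 1 else 0| ≤ c)
    (hc' : ∀ i j, |H' i j - if i = j then 1 else 0| ≤ c)
    (hcn : 4 * Fintype.card ι * c ≤ 1)
    (hτ : 0 ≤ τ) (hlow : ∀ i j, j < i → |H i j - H' i j| ≤ τ) (i j : ι) :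
    |H i j - H' i j| ≤ 2 * τ := by
  set D : ι → ι → ℝ := fun i j => H i j - H' i j with hD
  obtain ⟨p, -, hp⟩ := Finset.exists_max_image Finset.univ (fun p : ι × ι => |D p.1 p.2|)
    ⟨(i, j), Finset.mem_univ _⟩
  set M := |D p.1 p.2| with hM
  have hmax : ∀ i j, |D i j| ≤ M := fun i j => hp (i, j) (Finset.mem_univ _)
  have hM0 : 0 ≤ M := abs_nonneg _
  have hc0 : 0 ≤ c := (abs_nonneg _).trans (hc i i)
  -- the linearisation of `HᵀH = H'ᵀH'`
  have hsym : ∀ i j, |D i j + D j i| ≤ 2 * Fintype.card ι * c * M := fun i j => by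
    have h1 : D i j + D j i = -(∑ k, (D k i * (H k j - if k = j then 1 else 0) +
        (H' k i - if k = i then 1 else 0) * D k j)) := by
      have h2 : ∑ k, (H k i * H k j - H' k i * H' k j) = 0 := by
        rw [Finset.sum_sub_distrib, hH, hH', sub_self]
      have h3 : ∑ k, (D k i * (H k j - if k = j then 1 else 0) +
          (H' k i - if k = i then 1 else 0) * D k j) =
          ∑ k, ((H k i * H k j - H' k i * H' k j) - (if k = j then D k i else 0) -
            if k = i then D k j else 0) := by
        refine Finset.sum_congr rfl fun k _ => ?_
        simp only [hD]
        split_ifs <;> ring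
      rw [h3, Finset.sum_sub_distrib, Finset.sum_sub_distrib, h2]
      simp
    rw [h1, abs_neg]
    calc |∑ k, (D k i * (H k j - if k = j then 1 else 0) +
        (H' k i - if k = i then 1 else 0) * D k j)|
        ≤ ∑ k : ι, (M * c + c * M) := by
          refine (Finset.abs_sum_le_sum_abs _ _).trans (Finset.sum_le_sum fun k _ => ?_)
          refine (abs_add_le _ _).trans ?_
          rw [abs_mul, abs_mul]
          gcongr
          · exact hmax _ _
          · exact hc _ _
          · exact hc' _ _
          · exact hmax _ _
      _ = _ := by simp; ring
  have hfin : M ≤ τ + 2 * Fintype.card ι * c * M := by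
    rcases lt_trichotomy p.1 p.2 with h | h | h
    · have h1 := hsym p.1 p.2
      have h2 := hlow p.2 p.1 h
      have h3 : M ≤ |D p.1 p.2 + D p.2 p.1| + |D p.2 p.1| := by
        simpa using abs_sub (D p.1 p.2 + D p.2 p.1) (D p.2 p.1)
      linarith
    · have h1 := hsym p.1 p.1
      rw [← two_mul, abs_mul, abs_two] at h1
      rw [hM, ← h]
      have := abs_nonneg (D p.1 p.1)
      have h4 : |D p.1 p.1| = M := by rw [hM, ← h]
      rw [h4] at h1 this ⊢
      linarith
    · have := hlow p.1 p.2 h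
      have h5 : 0 ≤ 2 * Fintype.card ι * c * M := by positivity
      linarith
  have := hmax i j
  nlinarith

lemma sum_le_card_mul_of_fibers {κ γ : Type*} [DecidableEq γ] (S : Finset κ) (I : Finset γ)
    (f : κ → γ) (θ : κ → ℝ) (hf : ∀ k ∈ S, f k ∈ I) {b : ℝ}
    (h : ∀ c ∈ I, ∑ k ∈ S with f k = c, θ k ≤ b) : ∑ k ∈ S, θ k ≤ I.card * b := by
  rw [← Finset.sum_fiberwise_of_maps_to hf]
  simpa using Finset.sum_le_card_nsmul I _ b h

/-- The linear isometry of Euclidean space given by an orthogonal matrix. -/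
noncomputable def orthoEquiv {n : ℕ} (g : Matrix.orthogonalGroup (Fin n) ℝ) :
    EuclideanSpace ℝ (Fin n) ≃ₗᵢ[ℝ] EuclideanSpace ℝ (Fin n) :=
  LinearIsometry.toLinearIsometryEquiv
    { Matrix.toEuclideanLin (g : Matrix (Fin n) (Fin n) ℝ) with
      norm_map' := fun x => by
        have h := (Matrix.mem_orthogonalGroup_iff' (Fin n) ℝ).1 g.2
        rw [← sq_eq_sq₀ (norm_nonneg _) (norm_nonneg _), ← real_inner_self_eq_norm_sq,
          ← real_inner_self_eq_norm_sq]
        simp only [EuclideanSpace.inner_eq_star_dotProduct]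
        simp only [star_trivial]
        change (g : Matrix (Fin n) (Fin n) ℝ).mulVec x.ofLp ⬝ᵥ
          (g : Matrix (Fin n) (Fin n) ℝ).mulVec x.ofLp = _
        rw [Matrix.dotProduct_mulVec, Matrix.vecMul_mulVec]
        rw [h, Matrix.vecMul_one] } rfl

lemma orthoEquiv_apply {n : ℕ} (g : Matrix.orthogonalGroup (Fin n) ℝ)
    (x : EuclideanSpace ℝ (Fin n)) :
    orthoEquiv g x = Matrix.toEuclideanLin (g : Matrix (Fin n) (Fin n) ℝ) x := rfl

lemma orthoEquiv_single {n : ℕ} (g : Matrix.orthogonalGroup (Fin n) ℝ) (i j : Fin n) :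
    inner ℝ (EuclideanSpace.basisFun (Fin n) ℝ i)
      (orthoEquiv g (EuclideanSpace.basisFun (Fin n) ℝ j)) =
    (g : Matrix (Fin n) (Fin n) ℝ) i j := by
  rw [orthoEquiv_apply, EuclideanSpace.basisFun_apply, EuclideanSpace.basisFun_apply,
    EuclideanSpace.inner_single_left, Matrix.toLpLin_apply]
  simp

lemma abs_entry_le_one {n : ℕ} (g : Matrix.orthogonalGroup (Fin n) ℝ) (i j : Fin n) :
    |(g : Matrix (Fin n) (Fin n) ℝ) i j| ≤ 1 := by
  rw [← orthoEquiv_single]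
  simpa using norm_inner_le_norm (𝕜 := ℝ) (EuclideanSpace.basisFun (Fin n) ℝ i)
      (orthoEquiv g (EuclideanSpace.basisFun (Fin n) ℝ j))

end Mattila

namespace Mattila

lemma sum_lower_pairs (n : ℕ) (hn : 2 ≤ n) :
    ((∑ p : Fin n × Fin n, if p.2 < p.1 ∧ p.2.1 ≠ 0 then 1 else 0 : ℕ) : ℝ) =
      ((n : ℝ) - 1) * (n - 2) / 2 := by
  obtain ⟨k, rfl⟩ : ∃ k, n = k + 1 := ⟨n - 1, by omega⟩
  rw [Fintype.sum_prod_type]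
  have h : ∀ i : Fin (k + 1), (∑ j : Fin (k + 1), if j < i ∧ j.1 ≠ 0 then 1 else 0) = i.1 - 1 := by
    intro i
    rw [Finset.sum_boole, Nat.cast_id]
    have : (Finset.univ.filter fun j : Fin (k + 1) => j < i ∧ j.1 ≠ 0) = Finset.Ioo 0 i := by
      ext j
      simp only [Finset.mem_filter, Finset.mem_univ, true_and, Finset.mem_Ioo, Fin.lt_def,
        Fin.val_zero]
      omega
    rw [this, Fin.card_Ioo]
    simp
  simp only [h]
  rw [Fin.sum_univ_eq_sum_range (fun i => i - 1), Finset.sum_range_succ']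
  simp only [Nat.add_sub_cancel, Nat.zero_sub, add_zero]
  have h2 := Finset.sum_range_id_mul_two k
  have h3 : ((∑ i ∈ Finset.range k, i : ℕ) : ℝ) * 2 = k * (k - 1) := by
    have : 1 ≤ k := by omega
    rw [← Nat.cast_two, ← Nat.cast_mul, h2]
    push_cast [this]
    ring
  push_cast at h3 ⊢
  linarith

/-- The number of ways to choose the integer parts of `h i j / τ` below the diagonal when the
first column is confined to a ball of radius `4 τ`. -/
lemma card_codes_le {n : ℕ} (hn : 2 ≤ n) {τ : ℝ} (hτ0 : 0 < τ) (hτ1 : τ ≤ 1) :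
    ((Fintype.piFinset fun p : Fin n × Fin n =>
      if p.2 < p.1 then (if p.2.1 = 0 then Finset.Icc (-5 : ℤ) 4 else
        Finset.Icc (-(⌈τ⁻¹⌉₊ : ℤ) - 1) ⌈τ⁻¹⌉₊) else {0}).card : ℝ) ≤
      10 ^ (n * n) * τ⁻¹ ^ (((n : ℝ) - 1) * (n - 2) / 2) := by
  have hinv : 1 ≤ τ⁻¹ := (one_le_inv₀ hτ0).2 hτ1
  rw [Fintype.card_piFinset]
  push_cast
  calc ∏ p : Fin n × Fin n, ((if p.2 < p.1 then (if p.2.1 = 0 then Finset.Icc (-5 : ℤ) 4 else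
        Finset.Icc (-(⌈τ⁻¹⌉₊ : ℤ) - 1) ⌈τ⁻¹⌉₊) else {0}).card : ℝ)
      ≤ ∏ p : Fin n × Fin n, (10 * τ⁻¹ ^ (if p.2 < p.1 ∧ p.2.1 ≠ 0 then 1 else 0 : ℕ)) := by
        refine Finset.prod_le_prod (fun p _ => by positivity) fun p _ => ?_
        by_cases h1 : p.2 < p.1
        · by_cases h2 : p.2.1 = 0
          · simp [h1, h2]
          · have h3 := Nat.ceil_lt_add_one (zero_le_one.trans hinv)
            have h4 : (((Finset.Icc (-(⌈τ⁻¹⌉₊ : ℤ) - 1) ⌈τ⁻¹⌉₊).card : ℕ) : ℝ) =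
                2 * ⌈τ⁻¹⌉₊ + 2 := by
              rw [Int.card_Icc]
              have : ((⌈τ⁻¹⌉₊ : ℤ) + 1 - (-(⌈τ⁻¹⌉₊ : ℤ) - 1)).toNat = 2 * ⌈τ⁻¹⌉₊ + 2 := by omega
              rw [this]
              push_cast
              ring
            rw [if_pos h1, if_neg h2, h4, if_pos ⟨h1, h2⟩, pow_one]
            linarith
        · simp [h1]
    _ = _ := by
        rw [Finset.prod_mul_distrib, Finset.prod_pow_eq_pow_sum, ← sum_lower_pairs n hn,
          Real.rpow_natCast]
        simp

/-- The local form of the spread estimate: isometries close to a fixed one and almost agreeing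
on a unit vector `e`. -/
lemma local_spread {n : ℕ} (hn : 2 ≤ n) {δ C α : ℝ} (S : Finset (Matrix.orthogonalGroup (Fin n) ℝ))
    (θ : Matrix.orthogonalGroup (Fin n) ℝ → ℝ)
    (hball : ∀ (a : Fin n × Fin n → ℝ) (r : ℝ), δ ≤ r → ∀ S' ⊆ S,
      (∀ g ∈ S', ∀ p : Fin n × Fin n, |(g : Matrix (Fin n) (Fin n) ℝ) p.1 p.2 - a p| ≤ r) →
      ∑ g ∈ S', θ g ≤ C * r ^ α)
    {τ : ℝ} (hτ0 : 0 < τ) (hτ1 : τ ≤ 1) (hδ : δ ≤ τ)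
    (hS : ∀ g ∈ S, ∀ g' ∈ S, ∀ x, ‖orthoEquiv g x - orthoEquiv g' x‖ ≤ 1 / (4 * n) * ‖x‖)
    (e : EuclideanSpace ℝ (Fin n)) (he : ‖e‖ = 1)
    (hSe : ∀ g ∈ S, ∀ g' ∈ S, ‖orthoEquiv g e - orthoEquiv g' e‖ ≤ 4 * τ) :
    ∑ g ∈ S, θ g ≤
      10 ^ (n * n) * (C * (2 * n * n) ^ α) * τ ^ (α - ((n : ℝ) - 1) * (n - 2) / 2) := by
  classical
  have hn0 : (0 : ℝ) < n := by exact_mod_cast (by omega : 0 < n)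
  have hn1 : (1 : ℝ) ≤ n := by exact_mod_cast (by omega : 1 ≤ n)
  rcases S.eq_empty_or_nonempty with rfl | ⟨g₀, hg₀⟩
  · have := hball 0 (max δ 1) (le_max_left _ _) ∅ le_rfl (by simp)
    have hC : 0 ≤ C := by
      rw [Finset.sum_empty] at this
      exact nonneg_of_mul_nonneg_left this (by positivity)
    rw [Finset.sum_empty]
    positivity
  obtain ⟨b, hb⟩ := Orthonormal.exists_orthonormalBasis_extension_of_card_eq (𝕜 := ℝ)
    (E := EuclideanSpace ℝ (Fin n)) (ι := Fin n) (by simp) (v := fun _ => e)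
    (s := {⟨0, by omega⟩}) (by
      refine ⟨fun _ => he, fun i j hij => (hij (Subsingleton.elim _ _)).elim⟩)
  have hbe : b ⟨0, by omega⟩ = e := hb _ rfl
  set B := b.map (orthoEquiv g₀) with hB
  -- the matrix of `g₀⁻¹ g` in the basis `b`
  set H : Matrix.orthogonalGroup (Fin n) ℝ → Fin n → Fin n → ℝ :=
    fun g i j => inner ℝ (B i) (orthoEquiv g (b j)) with hH
  have hHo : ∀ g i j, ∑ k, H g k i * H g k j = if i = j then 1 else 0 := fun g i j => by
    simp only [hH]
    have := B.sum_inner_mul_inner (orthoEquiv g (b i)) (orthoEquiv g (b j))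
    simp only [real_inner_comm (B _) (orthoEquiv g (b i))] at this ⊢
    rw [LinearIsometryEquiv.inner_map_map, b.inner_eq_ite] at this
    exact this
  have hHd : ∀ g i j, H g i j - (if i = j then 1 else 0) =
      inner ℝ (B i) (orthoEquiv g (b j) - orthoEquiv g₀ (b j)) := fun g i j => by
    rw [inner_sub_right]
    congr 1
    rw [hB, OrthonormalBasis.map_apply, LinearIsometryEquiv.inner_map_map, b.inner_eq_ite]
  have hHle : ∀ g i j, |H g i j - (if i = j then 1 else 0)| ≤
      ‖orthoEquiv g (b j) - orthoEquiv g₀ (b j)‖ := fun g i j => by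
    rw [hHd]
    simpa [B.norm_eq_one] using norm_inner_le_norm (𝕜 := ℝ) (B i)
      (orthoEquiv g (b j) - orthoEquiv g₀ (b j))
  have hHc : ∀ g ∈ S, ∀ i j, |H g i j - (if i = j then 1 else 0)| ≤ 1 / (4 * n) := fun g hg i j => by
    refine (hHle g i j).trans ?_
    simpa [b.norm_eq_one] using hS g hg g₀ hg₀ (b j)
  have hH0 : ∀ g ∈ S, ∀ i j : Fin n, j < i → j.1 = 0 → |H g i j| ≤ 4 * τ := fun g hg i j hji hj => by
    have h1 := hHle g i j
    rw [if_neg hji.ne', sub_zero] at h1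
    have h2 : b j = e := by rw [← hbe]; congr 1; exact Fin.ext hj
    rw [h2] at h1
    exact h1.trans (hSe g hg g₀ hg₀)
  have hH1 : ∀ g i j, |H g i j| ≤ 1 := fun g i j => by
    simpa [B.norm_eq_one, b.norm_eq_one] using norm_inner_le_norm (𝕜 := ℝ) (B i) (orthoEquiv g (b j))
  set code : Matrix.orthogonalGroup (Fin n) ℝ → Fin n × Fin n → ℤ :=
    fun g p => if p.2 < p.1 then ⌊H g p.1 p.2 / τ⌋ else 0 with hcode
  have hfib := sum_le_card_mul_of_fibers S (Fintype.piFinset fun p : Fin n × Fin n =>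
      if p.2 < p.1 then (if p.2.1 = 0 then Finset.Icc (-5 : ℤ) 4 else
        Finset.Icc (-(⌈τ⁻¹⌉₊ : ℤ) - 1) ⌈τ⁻¹⌉₊) else {0}) code θ (b := C * (2 * n * n * τ) ^ α) ?_ ?_
  · have hC : 0 ≤ C := by
      have := hball 0 (max δ 1) (le_max_left _ _) ∅ (Finset.empty_subset _) (by simp)
      rw [Finset.sum_empty] at this
      exact nonneg_of_mul_nonneg_left this (by positivity)
    refine hfib.trans ((mul_le_mul_of_nonneg_right (card_codes_le hn hτ0 hτ1)
      (by positivity)).trans (le_of_eq ?_))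
    rw [Real.mul_rpow (by positivity) hτ0.le, Real.rpow_sub hτ0, Real.inv_rpow hτ0.le]
    ring
  · intro g hg
    refine Fintype.mem_piFinset.2 fun p => ?_
    simp only [hcode]
    split_ifs with h1 h2
    · obtain ⟨h3, h4⟩ := abs_le.1 (hH0 g hg p.1 p.2 h1 h2)
      have h5 : -4 ≤ H g p.1 p.2 / τ := by rw [le_div_iff₀ hτ0]; linarith
      have h6 : H g p.1 p.2 / τ ≤ 4 := by rw [div_le_iff₀ hτ0]; linarith
      refine Finset.mem_Icc.2 ⟨Int.le_floor.2 (by push_cast; linarith), ?_⟩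
      have := (Int.floor_le (H g p.1 p.2 / τ)).trans h6
      exact_mod_cast this
    · obtain ⟨h3, h4⟩ := abs_le.1 (hH1 g p.1 p.2)
      have h7 := Nat.le_ceil τ⁻¹
      have h5 : -τ⁻¹ ≤ H g p.1 p.2 / τ := by
        rw [le_div_iff₀ hτ0, neg_mul, inv_mul_cancel₀ hτ0.ne']; exact h3
      have h6 : H g p.1 p.2 / τ ≤ τ⁻¹ := by
        rw [div_le_iff₀ hτ0, inv_mul_cancel₀ hτ0.ne']; exact h4
      refine Finset.mem_Icc.2 ⟨Int.le_floor.2 (by push_cast; linarith), ?_⟩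
      have := (Int.floor_le (H g p.1 p.2 / τ)).trans (h6.trans h7)
      exact_mod_cast this
    · exact Finset.mem_singleton_self _
  · intro c _
    rcases (S.filter fun g => code g = c).eq_empty_or_nonempty with h0 | ⟨g', hg'⟩
    · have := hball 0 (2 * n * n * τ) ?_ ∅ (Finset.empty_subset _) (by simp)
      · rw [h0]; exact this
      · refine hδ.trans (le_mul_of_one_le_left hτ0.le ?_)
        nlinarith
    obtain ⟨hg'S, hg'c⟩ := Finset.mem_filter.1 hg'
    refine hball (fun p => (g' : Matrix (Fin n) (Fin n) ℝ) p.1 p.2) (2 * n * n * τ) ?_ _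
      (Finset.filter_subset _ _) fun g hg p => ?_
    · refine hδ.trans (le_mul_of_one_le_left hτ0.le ?_)
      nlinarith
    obtain ⟨hgS, hgc⟩ := Finset.mem_filter.1 hg
    have hlow : ∀ i j, j < i → |H g i j - H g' i j| ≤ τ := fun i j hji => by
      have h1 : ⌊H g i j / τ⌋ = ⌊H g' i j / τ⌋ := by
        have := congrFun (hgc.trans hg'c.symm) (i, j)
        simpa only [hcode, if_pos hji] using this
      have h2 := Int.abs_sub_lt_one_of_floor_eq_floor h1
      rw [← sub_div, abs_div, abs_of_pos hτ0, div_lt_one hτ0] at h2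
      exact h2.le
    have hD := orthogonal_near_one_le (hHo g) (hHo g') (hHc g hgS) (hHc g' hg'S)
      (by rw [Fintype.card_fin]; field_simp; norm_num) hτ0.le hlow
    have hcol : ∀ j, ‖orthoEquiv g (b j) - orthoEquiv g' (b j)‖ ≤ n * (2 * τ) := fun j => by
      refine (norm_le_card_mul_of_inner B fun i => ?_).trans (by rw [Fintype.card_fin])
      rw [inner_sub_right]
      exact hD i j
    have hop := norm_map_le_of_basis b (orthoEquiv g) (orthoEquiv g') hcol
      (EuclideanSpace.basisFun (Fin n) ℝ p.2)
    rw [← orthoEquiv_single, ← orthoEquiv_single, ← inner_sub_right]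
    refine (norm_inner_le_norm (𝕜 := ℝ) _ _).trans ?_
    rw [OrthonormalBasis.norm_eq_one, one_mul]
    refine hop.trans (le_of_eq ?_)
    rw [OrthonormalBasis.norm_eq_one, Fintype.card_fin]
    ring

end Mattila

namespace Mattila

/-- An `α`-dimensional Frostman weight on the orthogonal group spreads every direction with
exponent `α - (n-1)(n-2)/2`, since the stabiliser of a direction has dimension
`(n-1)(n-2)/2`. -/
theorem spread_of_frostman {n : ℕ} (hn : 2 ≤ n) (α : ℝ)
    (hβ : 0 ≤ α - ((n : ℝ) - 1) * (n - 2) / 2) : ∃ K : ℝ, 1 ≤ K ∧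
    ∀ {δ C : ℝ} {T : Finset (Matrix.orthogonalGroup (Fin n) ℝ)}
      {θ : Matrix.orthogonalGroup (Fin n) ℝ → ℝ}, 0 < δ → (∀ g, 0 ≤ θ g) →
      (∀ (a : Fin n × Fin n → ℝ) (r : ℝ), δ ≤ r → ∀ S ⊆ T,
        (∀ g ∈ S, ∀ p : Fin n × Fin n, |(g : Matrix (Fin n) (Fin n) ℝ) p.1 p.2 - a p| ≤ r) →
        ∑ g ∈ S, θ g ≤ C * r ^ α) →
      ∑ g ∈ T, θ g ≤ C →
      SpreadAt δ (K * C) (α - ((n : ℝ) - 1) * (n - 2) / 2) T θ orthoEquiv := by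
  classical
  set β := α - ((n : ℝ) - 1) * (n - 2) / 2
  set N : ℕ := 4 * n * n * n with hN
  have hn0 : (0 : ℝ) < n := by exact_mod_cast (by omega : 0 < n)
  have hN0 : (0 : ℝ) < N := by rw [hN]; push_cast; positivity
  set I := Fintype.piFinset fun _ : Fin n × Fin n => Finset.Icc (-(N : ℤ) - 1) N
  set K₁ : ℝ := I.card * (10 ^ (n * n) * (2 * n * n) ^ α)
  have hK₁ : 0 ≤ K₁ := by positivity
  refine ⟨1 + 2 ^ β + K₁, by linarith [Real.rpow_nonneg (zero_le_two (α := ℝ)) β],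
    fun {δ C T θ} hδ hθ hball htot => ?_⟩
  have hC : 0 ≤ C := (Finset.sum_nonneg fun g _ => hθ g).trans htot
  have h2β : 0 ≤ (2 : ℝ) ^ β := by positivity
  refine ⟨hθ, fun τ hτ ξ η hξ => ?_, by nlinarith [mul_nonneg h2β hC, mul_nonneg hK₁ hC]⟩
  have hτ0 : 0 < τ := hδ.trans_le hτ
  have hτβ : 0 ≤ τ ^ β := by positivity
  set Γ := T.filter fun g => ‖ξ - orthoEquiv g η‖ ≤ τ * ‖ξ‖ with hΓ
  have hΓC : ∑ g ∈ Γ, θ g ≤ C :=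
    (Finset.sum_le_sum_of_subset_of_nonneg (Finset.filter_subset _ _) fun g _ _ => hθ g).trans htot
  rcases le_or_gt (1 / 2) τ with hτ2 | hτ2
  · have h1 : 1 ≤ 2 ^ β * τ ^ β := by
      rw [← Real.mul_rpow (by norm_num) hτ0.le]
      exact Real.one_le_rpow (by linarith) hβ
    calc ∑ g ∈ Γ, θ g ≤ C * 1 := by rw [mul_one]; exact hΓC
      _ ≤ C * (2 ^ β * τ ^ β) := by gcongr
      _ ≤ (1 + 2 ^ β + K₁) * C * τ ^ β := by
        have := mul_nonneg hC hτβ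
        have := mul_nonneg hK₁ this
        linarith
  rcases Γ.eq_empty_or_nonempty with h0 | ⟨g₁, hg₁⟩
  · rw [h0, Finset.sum_empty]; positivity
  have hξ0 : 0 < ‖ξ‖ := norm_pos_iff.2 hξ
  have hη : ‖ξ‖ / 2 ≤ ‖η‖ := by
    have h1 := (Finset.mem_filter.1 hg₁).2
    have h2 : ‖ξ‖ ≤ ‖ξ - orthoEquiv g₁ η‖ + ‖orthoEquiv g₁ η‖ := by
      simpa using norm_add_le (ξ - orthoEquiv g₁ η) (orthoEquiv g₁ η)
    rw [LinearIsometryEquiv.norm_map] at h2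
    nlinarith
  have hη0 : 0 < ‖η‖ := by linarith
  have hΓe : ∀ g ∈ Γ, ∀ g' ∈ Γ, ‖orthoEquiv g (‖η‖⁻¹ • η) - orthoEquiv g' (‖η‖⁻¹ • η)‖ ≤ 4 * τ := by
    intro g hg g' hg'
    rw [map_smul, map_smul, ← smul_sub, norm_smul, norm_inv, norm_norm, inv_mul_le_iff₀ hη0]
    have h1 := (Finset.mem_filter.1 hg).2
    have h2 := (Finset.mem_filter.1 hg').2
    have h3 := norm_sub_le (ξ - orthoEquiv g' η) (ξ - orthoEquiv g η)
    rw [sub_sub_sub_cancel_left] at h3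
    nlinarith
  set code : Matrix.orthogonalGroup (Fin n) ℝ → Fin n × Fin n → ℤ :=
    fun g p => ⌊(N : ℝ) * (g : Matrix (Fin n) (Fin n) ℝ) p.1 p.2⌋ with hcode
  have hfib := sum_le_card_mul_of_fibers Γ I code θ
    (b := 10 ^ (n * n) * (C * (2 * n * n) ^ α) * τ ^ β) ?_ ?_
  · refine hfib.trans ?_
    calc (I.card : ℝ) * (10 ^ (n * n) * (C * (2 * n * n) ^ α) * τ ^ β)
        = K₁ * C * τ ^ β := by ring
      _ ≤ _ := by gcongr; linarith
  · intro g _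
    refine Fintype.mem_piFinset.2 fun p => ?_
    obtain ⟨h1, h2⟩ := abs_le.1 (abs_entry_le_one g p.1 p.2)
    refine Finset.mem_Icc.2 ⟨Int.le_floor.2 (by push_cast; nlinarith), ?_⟩
    have := (Int.floor_le ((N : ℝ) * (g : Matrix (Fin n) (Fin n) ℝ) p.1 p.2)).trans
      (mul_le_of_le_one_right hN0.le h2)
    exact_mod_cast this
  · intro c _
    refine local_spread (δ := δ) hn _ θ (fun a r hr S' hS' h => hball a r hr S'
      (hS'.trans ((Finset.filter_subset _ _).trans (Finset.filter_subset _ _))) h)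
      hτ0 (by linarith) hτ ?_ (‖η‖⁻¹ • η) (by
        rw [norm_smul, norm_inv, norm_norm, inv_mul_cancel₀ hη0.ne'])
      fun g hg g' hg' => hΓe g (Finset.mem_filter.1 hg).1 g' (Finset.mem_filter.1 hg').1
    intro g hg g' hg' x
    have hent : ∀ i j, |(g : Matrix (Fin n) (Fin n) ℝ) i j -
        (g' : Matrix (Fin n) (Fin n) ℝ) i j| ≤ 1 / N := fun i j => by
      have h1 := congrFun ((Finset.mem_filter.1 hg).2.trans (Finset.mem_filter.1 hg').2.symm) (i, j)
      have h2 := Int.abs_sub_lt_one_of_floor_eq_floor h1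
      rw [← mul_sub, abs_mul, abs_of_pos hN0] at h2
      rw [le_div_iff₀ hN0, mul_comm]
      exact h2.le
    have hcol : ∀ j, ‖orthoEquiv g (EuclideanSpace.basisFun (Fin n) ℝ j) -
        orthoEquiv g' (EuclideanSpace.basisFun (Fin n) ℝ j)‖ ≤ n * (1 / N) := fun j => by
      refine (norm_le_card_mul_of_inner (EuclideanSpace.basisFun (Fin n) ℝ) fun i => ?_).trans
        (by rw [Fintype.card_fin])
      rw [inner_sub_right, orthoEquiv_single, orthoEquiv_single]
      exact hent i j
    refine (norm_map_le_of_basis _ _ _ hcol x).trans (le_of_eq ?_)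
    rw [Fintype.card_fin, hN]
    push_cast
    field_simp

end Mattila

namespace Mattila

/-! ### The exceptional set -/

lemma FrostmanAt.mono {V : Type*} [NormedAddCommGroup V] {δ C C' s : ℝ} {P : Finset V} {w : V → ℝ}
    (h : FrostmanAt δ C s P w) (hδ : 0 < δ) (hC : C ≤ C') : FrostmanAt δ C' s P w :=
  ⟨h.nonneg, fun a r hr => (h.ball a r hr).trans
    (mul_le_mul_of_nonneg_right hC (Real.rpow_nonneg (hδ.le.trans hr) _)), h.total.trans hC⟩

lemma SpreadAt.mono {V κ : Type*} [NormedAddCommGroup V] [InnerProductSpace ℝ V]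
    {δ C C' β : ℝ} {T : Finset κ} {θ : κ → ℝ} {G : κ → V ≃ₗᵢ[ℝ] V}
    (h : SpreadAt δ C β T θ G) (hδ : 0 < δ) (hC : C ≤ C') : SpreadAt δ C' β T θ G :=
  ⟨h.nonneg, fun τ hτ ξ η hξ => (h.spread τ hτ ξ η hξ).trans
    (mul_le_mul_of_nonneg_right hC (Real.rpow_nonneg (hδ.le.trans hτ) _)), h.total.trans hC⟩

/-- The weighted sum over the dyadic cutoffs `2 ^ (-j)`, `j ≤ m`, of the discrete energies at
scale `2 ^ (-m)`, each normalised by its expected size `2 ^ (-j u)`. -/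
noncomputable def totalEnergy {V : Type*} [NormedAddCommGroup V] [InnerProductSpace ℝ V]
    (u : ℝ) (m : ℕ) (P : Finset V) (w : V → ℝ) (Q : Finset V) (v : V → ℝ) (g : V → V) : ℝ :=
  ∑ j ∈ Finset.range (m + 1), (((j : ℝ) + 1) ^ 2)⁻¹ *
    ((((2 : ℝ)⁻¹ ^ j) ^ u)⁻¹ * energy (2⁻¹ ^ j) (2⁻¹ ^ m) P w Q v g)

lemma summable_inv_sq : Summable fun j : ℕ => (((j : ℝ) + 1) ^ 2)⁻¹ := by
  have := (summable_nat_add_iff 1).2 (Real.summable_nat_pow_inv.2 one_lt_two)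
  simpa using this

lemma borelSpace_orthogonalGroup (n : ℕ) : BorelSpace (Matrix.orthogonalGroup (Fin n) ℝ) :=
  have : BorelSpace (Matrix (Fin n) (Fin n) ℝ) := ⟨rfl⟩
  Subtype.borelSpace _

/-- The Borel property with respect to the topology induced by the metric, which agrees with the
product topology on matrices only after unfolding instances. -/
lemma borelSpace_orthogonalGroup' (n : ℕ) : @BorelSpace (Matrix.orthogonalGroup (Fin n) ℝ)
    (PseudoEMetricSpace.toUniformSpace.toTopologicalSpace) _ := borelSpace_orthogonalGroup n

lemma continuous_orthoEquiv_apply {n : ℕ} (x : EuclideanSpace ℝ (Fin n)) :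
    Continuous fun g : Matrix.orthogonalGroup (Fin n) ℝ => orthoEquiv g x := by
  simp only [orthoEquiv_apply, Matrix.toLpLin_apply]
  have : Continuous fun g : Matrix.orthogonalGroup (Fin n) ℝ =>
    (g : Matrix (Fin n) (Fin n) ℝ) := continuous_subtype_val
  fun_prop

lemma continuous_totalEnergy {n : ℕ} (u : ℝ) (m : ℕ) (P : Finset (EuclideanSpace ℝ (Fin n)))
    (w : EuclideanSpace ℝ (Fin n) → ℝ) (Q : Finset (EuclideanSpace ℝ (Fin n)))
    (v : EuclideanSpace ℝ (Fin n) → ℝ) :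
    Continuous fun g : Matrix.orthogonalGroup (Fin n) ℝ =>
      totalEnergy u m P w Q v (orthoEquiv g) := by
  have h := fun x : EuclideanSpace ℝ (Fin n) => continuous_orthoEquiv_apply x
  unfold totalEnergy energy
  fun_prop

lemma edist_orthogonal_le {n : ℕ} (g g' : Matrix.orthogonalGroup (Fin n) ℝ) {c : ℝ} (hc : 0 ≤ c)
    (h : ∀ p : Fin n × Fin n, |(g : Matrix (Fin n) (Fin n) ℝ) p.1 p.2 -
      (g' : Matrix (Fin n) (Fin n) ℝ) p.1 p.2| ≤ c) :
    edist g g' ≤ ENNReal.ofReal (n * c) := by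
  rw [Subtype.edist_eq, edist_dist, dist_eq_norm]
  apply ENNReal.ofReal_le_ofReal
  rw [Matrix.frobenius_norm_def, ← Real.sqrt_eq_rpow]
  refine Real.sqrt_le_iff.2 ⟨by positivity, ?_⟩
  calc ∑ i, ∑ j, ‖((g : Matrix (Fin n) (Fin n) ℝ) - (g' : Matrix (Fin n) (Fin n) ℝ)) i j‖ ^ (2 : ℝ)
      ≤ ∑ _i : Fin n, ∑ _j : Fin n, c ^ 2 := by
        refine Finset.sum_le_sum fun i _ => Finset.sum_le_sum fun j _ => ?_
        rw [Real.rpow_two, Matrix.sub_apply, Real.norm_eq_abs]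
        exact pow_le_pow_left₀ (abs_nonneg _) (h (i, j)) 2
    _ = (n * c) ^ 2 := by
        simp only [Finset.sum_const, Finset.card_univ, Fintype.card_fin, nsmul_eq_mul]
        ring

/-- The matrix entries of an orthogonal matrix. -/
def orthoEntries {n : ℕ} (g : Matrix.orthogonalGroup (Fin n) ℝ) (p : Fin n × Fin n) : ℝ :=
  (g : Matrix (Fin n) (Fin n) ℝ) p.1 p.2

/-- Averaging against a Frostman weight bounds the content of a set of rotations whose total
energy is large at all fine scales. -/
lemma dyContent_large_energy_le {n : ℕ} (hn : 2 ≤ n) {s t C α : ℝ} (h2n : s + t ≤ 2 * n)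
    (hα : (n * (n - 1) : ℝ) / 2 - (s + t - (n + 1)) < α) : ∃ Z : ℝ, 0 < Z ∧
    ∀ (P Q : ℕ → Finset (EuclideanSpace ℝ (Fin n))) (w v : ℕ → EuclideanSpace ℝ (Fin n) → ℝ),
    (∀ m, FrostmanAt (2⁻¹ ^ m) C s (P m) (w m)) → (∀ m, FrostmanAt (2⁻¹ ^ m) C t (Q m) (v m)) →
    ∀ (L : ℝ) (M : ℕ), 0 < L → dyContent orthoEntries α
      {g : Matrix.orthogonalGroup (Fin n) ℝ | ∀ m ≥ M,
        L < totalEnergy (s + t - n) m (P m) (w m) (Q m) (v m) (orthoEquiv g)} ≤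
      ENNReal.ofReal (Z / L) := by
  have hn1 : (2 : ℝ) ≤ n := by exact_mod_cast hn
  set β := α - ((n : ℝ) - 1) * (n - 2) / 2 with hβdef
  have hβ : 0 ≤ β := by rw [hβdef]; nlinarith
  have hα0 : 0 ≤ α := by nlinarith
  obtain ⟨K₁, hK₁, h₁⟩ := spread_of_frostman hn α hβ
  obtain ⟨K₂, hK₂, h₂⟩ := averaged_energy_le (V := EuclideanSpace ℝ (Fin n)) s t β (by
    rw [finrank_euclideanSpace, Fintype.card_fin, hβdef]; nlinarith)
  rw [finrank_euclideanSpace, Fintype.card_fin] at h₂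
  obtain ⟨C₀, hC₀, h₀⟩ := frostman (orthoEntries (n := n)) α hα0 1
  set C' := max C (K₁ * C₀) with hC'
  have hC'0 : 0 < C' := lt_max_of_lt_right (by positivity)
  set Y := ∑' j : ℕ, (((j : ℝ) + 1) ^ 2)⁻¹ with hY
  have hY0 : 0 ≤ Y := tsum_nonneg fun j => by positivity
  refine ⟨K₂ * C' ^ 5 * (Y + 1), by positivity, fun P Q w v hP hQ L M hL => ?_⟩
  obtain ⟨T, θ, hTE, hθ, hball, htot, hcont⟩ := h₀ _
    (fun g (_ : g ∈ {g : Matrix.orthogonalGroup (Fin n) ℝ | ∀ m ≥ M,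
        L < totalEnergy (s + t - n) m (P m) (w m) (Q m) (v m) (orthoEquiv g)}) p =>
      abs_entry_le_one g p.1 p.2) M
  refine hcont.trans (ENNReal.ofReal_le_ofReal ?_)
  rw [le_div_iff₀ hL]
  have hδ : (0 : ℝ) < 2⁻¹ ^ M := by positivity
  have hspread := (h₁ hδ hθ hball htot).mono hδ (le_max_right C _)
  have h₃ := h₂ ((hP M).mono hδ (le_max_left C (K₁ * C₀)))
    ((hQ M).mono hδ (le_max_left C (K₁ * C₀))) hspread
  calc (∑ g ∈ T, θ g) * L
      ≤ ∑ g ∈ T, θ g * totalEnergy (s + t - n) M (P M) (w M) (Q M) (v M) (orthoEquiv g) := by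
        rw [Finset.sum_mul]
        exact Finset.sum_le_sum fun g hg => mul_le_mul_of_nonneg_left
          (hTE g hg M le_rfl).le (hθ g)
    _ = ∑ j ∈ Finset.range (M + 1), (((j : ℝ) + 1) ^ 2)⁻¹ *
          ((((2 : ℝ)⁻¹ ^ j) ^ (s + t - n))⁻¹ * ∑ g ∈ T, θ g *
            energy (2⁻¹ ^ j) (2⁻¹ ^ M) (P M) (w M) (Q M) (v M) (orthoEquiv g)) := by
        simp only [totalEnergy, Finset.mul_sum]
        rw [Finset.sum_comm]
        exact Finset.sum_congr rfl fun j _ => Finset.sum_congr rfl fun g _ => by ring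
    _ ≤ ∑ j ∈ Finset.range (M + 1), (((j : ℝ) + 1) ^ 2)⁻¹ * (K₂ * C' ^ 5) := by
        refine Finset.sum_le_sum fun j hj => mul_le_mul_of_nonneg_left ?_ (by positivity)
        have hpos : (0 : ℝ) < ((2 : ℝ)⁻¹ ^ j) ^ (s + t - n) := by positivity
        rw [inv_mul_le_iff₀ hpos, mul_comm _ (K₂ * C' ^ 5)]
        exact h₃ j (Nat.lt_succ_iff.1 (Finset.mem_range.1 hj))
    _ ≤ K₂ * C' ^ 5 * (Y + 1) := by
        rw [← Finset.sum_mul, mul_comm]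
        gcongr
        exact (summable_inv_sq.sum_le_tsum _ fun j _ => by positivity).trans (by linarith)

/-- The set of rotations along which the total energies tend to infinity. -/
def exceptionalSet {n : ℕ} (u : ℝ) (P : ℕ → Finset (EuclideanSpace ℝ (Fin n)))
    (w : ℕ → EuclideanSpace ℝ (Fin n) → ℝ) (Q : ℕ → Finset (EuclideanSpace ℝ (Fin n)))
    (v : ℕ → EuclideanSpace ℝ (Fin n) → ℝ) : Set (Matrix.orthogonalGroup (Fin n) ℝ) :=
  ⋂ L : ℕ, ⋃ M : ℕ, {g | ∀ m ≥ M, (L : ℝ) < totalEnergy u m (P m) (w m) (Q m) (v m) (orthoEquiv g)}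

lemma measurableSet_exceptionalSet {n : ℕ} (u : ℝ) (P : ℕ → Finset (EuclideanSpace ℝ (Fin n)))
    (w : ℕ → EuclideanSpace ℝ (Fin n) → ℝ) (Q : ℕ → Finset (EuclideanSpace ℝ (Fin n)))
    (v : ℕ → EuclideanSpace ℝ (Fin n) → ℝ) : MeasurableSet (exceptionalSet u P w Q v) := by
  have := borelSpace_orthogonalGroup n
  refine MeasurableSet.iInter fun L => MeasurableSet.iUnion fun M => ?_
  simp only [Set.ofPred_forall]
  refine MeasurableSet.iInter fun m => MeasurableSet.iInter fun _ => ?_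
  exact (isOpen_lt continuous_const (continuous_totalEnergy u m _ _ _ _)).measurableSet

theorem dimH_exceptionalSet_le {n : ℕ} (hn : 2 ≤ n) {s t C : ℝ} (h2n : s + t ≤ 2 * n)
    (P Q : ℕ → Finset (EuclideanSpace ℝ (Fin n))) (w v : ℕ → EuclideanSpace ℝ (Fin n) → ℝ)
    (hP : ∀ m, FrostmanAt (2⁻¹ ^ m) C s (P m) (w m))
    (hQ : ∀ m, FrostmanAt (2⁻¹ ^ m) C t (Q m) (v m)) :
    dimH (exceptionalSet (s + t - n) P w Q v) ≤
      ENNReal.ofReal ((n * (n - 1) : ℝ) / 2 - (s + t - (n + 1))) := by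
  have := borelSpace_orthogonalGroup' n
  have hn1 : (2 : ℝ) ≤ n := by exact_mod_cast hn
  have hb0 : 0 ≤ (n * (n - 1) : ℝ) / 2 - (s + t - (n + 1)) := by nlinarith
  refine ENNReal.le_of_forall_pos_le_add fun ε hε _ => ?_
  set α := (n * (n - 1) : ℝ) / 2 - (s + t - (n + 1)) + ε with hα
  have hε' : (0 : ℝ) < ε := hε
  have hα0 : 0 < α := by linarith
  obtain ⟨Z, hZ, h⟩ := dyContent_large_energy_le hn (C := C) h2n (by linarith : _ < α)
  have hzero : dyContent orthoEntries α (exceptionalSet (s + t - n) P w Q v) = 0 := by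
    refine le_antisymm (ge_of_tendsto' (x := Filter.atTop)
      (f := fun k : ℕ => ENNReal.ofReal (Z / ((k + 1 : ℕ) : ℝ))) ?_ fun k => ?_) bot_le
    · rw [← ENNReal.ofReal_zero]
      refine ENNReal.tendsto_ofReal ?_
      exact ((tendsto_const_div_atTop_nhds_zero_nat Z).comp (Filter.tendsto_add_atTop_nat 1))
    · refine (netContent_mono (Set.iInter_subset _ (k + 1))).trans
        ((netContent_iUnion (dyCell_nested _) ?_).trans (iSup_le fun M => ?_))
      · intro M M' hM g hg m hm
        exact hg m (hM.trans hm)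
      · exact h P Q w v hP hQ _ M (by positivity)
  have hH : μH[α] (exceptionalSet (s + t - n) P w Q v) = 0 :=
    hausdorffMeasure_eq_zero_of_dyContent orthoEntries n (Nat.cast_nonneg _)
      (fun j g g' hgg => edist_orthogonal_le g g' (by positivity)
        fun p => dist_le_of_dyCell_eq hgg p) hα0 hzero
  have hd := dimH_le_of_hausdorffMeasure_ne_top (d := α.toNNReal)
    (s := exceptionalSet (s + t - n) P w Q v) (by
      rw [Real.coe_toNNReal _ hα0.le, hH]; exact ENNReal.zero_ne_top)
  refine hd.trans (le_of_eq ?_)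
  change ENNReal.ofReal α = _
  rw [hα, ENNReal.ofReal_add hb0 hε'.le, ENNReal.ofReal_coe_nnreal]

end Mattila

namespace Mattila

/-! ### Frostman weights near a Borel set of positive Hausdorff measure -/

lemma le_of_hausdorffMeasure_pos {n : ℕ} {s : ℝ} {A : Set (EuclideanSpace ℝ (Fin n))}
    (hs : 0 < s) (h : 0 < μH[s] A) : s ≤ n := by
  by_contra! hlt
  have hd : dimH A < (s.toNNReal : ℝ≥0∞) := by
    refine (dimH_mono (Set.subset_univ A)).trans_lt ?_
    rw [Real.dimH_univ_eq_finrank, finrank_euclideanSpace, Fintype.card_fin]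
    rw [← ENNReal.coe_natCast, ENNReal.coe_lt_coe, Real.lt_toNNReal_iff_coe_lt]
    simpa using hlt
  have := hausdorffMeasure_of_dimH_lt hd
  rw [Real.coe_toNNReal _ hs.le] at this
  exact h.ne' this

/-- A Borel set `A` of positive `s`-dimensional Hausdorff measure contains a compact set `K` with
uniformly nontrivial discrete Frostman weights at each scale `2 ^ (-m)`, on points within distance
`2 ^ (-m)` of `K`. -/
theorem exists_frostmanAt {n : ℕ} {s : ℝ} (hs : 0 < s) {A : Set (EuclideanSpace ℝ (Fin n))}
    (hA : MeasurableSet A) (hA0 : 0 < μH[s] A) :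
    ∃ K ⊆ A, IsCompact K ∧ ∃ C : ℝ, 0 < C ∧ ∃ c : ℝ, 0 < c ∧
      ∃ (P : ℕ → Finset (EuclideanSpace ℝ (Fin n))) (w : ℕ → EuclideanSpace ℝ (Fin n) → ℝ),
        ∀ m, FrostmanAt (2⁻¹ ^ m) C s (P m) (w m) ∧
          (∀ x ∈ P m, ∃ a ∈ K, dist x a ≤ 2⁻¹ ^ m) ∧ c ≤ ∑ x ∈ P m, w m x := by
  let Ψ : EuclideanSpace ℝ (Fin n) → Fin n → ℝ := fun x i => x i
  have hcoord : ∀ (x y : EuclideanSpace ℝ (Fin n)) (i : Fin n), |x i - y i| ≤ ‖x - y‖ := by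
    intro x y i
    have := PiLp.norm_apply_le (p := 2) (x - y) i
    simpa using this
  have hD : ∀ j x y, dyCell Ψ j x = dyCell Ψ j y →
      edist x y ≤ ENNReal.ofReal (n * (2 : ℝ)⁻¹ ^ j) := by
    intro j x y h
    rw [edist_dist, dist_eq_norm]
    refine ENNReal.ofReal_le_ofReal ?_
    rw [EuclideanSpace.norm_eq]
    refine Real.sqrt_le_iff.2 ⟨by positivity, ?_⟩
    calc ∑ i, ‖(x - y) i‖ ^ 2 ≤ (∑ i, ‖(x - y) i‖) ^ 2 :=
          Finset.sum_sq_le_sq_sum_of_nonneg fun i _ => norm_nonneg _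
      _ ≤ (∑ _i : Fin n, (2 : ℝ)⁻¹ ^ j) ^ 2 := by
          refine pow_le_pow_left₀ (Finset.sum_nonneg fun i _ => norm_nonneg _)
            (Finset.sum_le_sum fun i _ => ?_) 2
          simpa using dist_le_of_dyCell_eq h i
      _ = (n * (2 : ℝ)⁻¹ ^ j) ^ 2 := by simp
  have hpos : 0 < dyContent Ψ s A := by
    refine pos_iff_ne_zero.2 fun h0 => hA0.ne' ?_
    exact hausdorffMeasure_eq_zero_of_dyContent Ψ n (Nat.cast_nonneg _) hD hs h0
  obtain ⟨a, ha0, ha⟩ := exists_between hpos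
  obtain ⟨K, hKA, hK, hKU⟩ := exists_compact_of_content Ψ s hA.analyticSet ha
  obtain ⟨R, hR⟩ := hK.isBounded.exists_norm_le
  obtain ⟨C, hC, hfr⟩ := frostman Ψ s hs.le (R + 1)
  have hm : ∀ m : ℕ, ∃ (P : Finset (EuclideanSpace ℝ (Fin n)))
      (w : EuclideanSpace ℝ (Fin n) → ℝ), FrostmanAt (2⁻¹ ^ m) C s P w ∧
        (∀ x ∈ P, ∃ a ∈ K, dist x a ≤ 2⁻¹ ^ m) ∧ a.toReal ≤ ∑ x ∈ P, w x := by
    intro m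
    have hδ : (0 : ℝ) < 2⁻¹ ^ m := by positivity
    have hδ1 : (2 : ℝ)⁻¹ ^ m ≤ 1 := pow_le_one₀ (by norm_num) (by norm_num)
    obtain ⟨F, _, hFU, hF⟩ := hKU _ Metric.isOpen_thickening
      (Metric.self_subset_thickening hδ K)
    have hFb : ∀ x ∈ F, ∀ i, |Ψ x i| ≤ R + 1 := by
      intro x hx i
      obtain ⟨z, hz, hxz⟩ := Metric.mem_thickening_iff.1 (hFU hx)
      have h1 := hcoord x 0 i
      have h2 := hR z hz
      have h3 : ‖x‖ ≤ ‖z‖ + ‖x - z‖ := by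
        have := norm_add_le z (x - z); simpa using this
      rw [dist_eq_norm] at hxz
      simp only [PiLp.zero_apply, sub_zero] at h1
      change |x i| ≤ R + 1
      linarith
    obtain ⟨P, w, hPF, hw, hball, htot, hcont⟩ := hfr F hFb m
    refine ⟨P, w, ⟨hw, fun b r hr => ?_, htot⟩, fun x hx => ?_, ?_⟩
    · refine hball b r hr _ (Finset.filter_subset _ _) fun x hx i => ?_
      exact (hcoord x b i).trans (Finset.mem_filter.1 hx).2
    · obtain ⟨z, hz, hxz⟩ := Metric.mem_thickening_iff.1 (hFU (hPF x hx))
      exact ⟨z, hz, hxz.le⟩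
    · exact ENNReal.toReal_le_of_le_ofReal (Finset.sum_nonneg fun x _ => hw x)
        (hF.le.trans hcont)
  choose P w hPw using hm
  exact ⟨K, hKA, hK, C, hC, a.toReal, ENNReal.toReal_pos ha0.ne' (ha.trans_le le_top).ne,
    P, w, hPw⟩

end Mattila

namespace Mattila

/-! ### Translations with large slices -/

section translations

variable {V : Type*} [MeasurableSpace V]

/-- If `f` has a definite integral and `κ f² ≤ I`, where `I` has bounded integral, then `f` is
bounded below and `I` bounded above simultaneously on a set of definite measure. Here
`f ≤ a` off the set in question unless `I > κ N²`, and in the latter case `f ≤ I / (κ N)`. -/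
lemma volume_good_ge {μ : Measure V} {B : Set V} (hB : MeasurableSet B) (hBf : μ B ≠ ∞)
    {f I : V → ℝ} (hf : Integrable f μ) (hI : Integrable I μ) (hfm : Measurable f)
    (hIm : Measurable I) (hI0 : ∀ z, 0 ≤ I z)
    (hfB : ∀ z, z ∉ B → f z = 0) {κ N a : ℝ} (hκ : 0 < κ) (hN : 0 < N) (ha : 0 < a)
    (hfI : ∀ z, κ * f z ^ 2 ≤ I z) :
    ∫ z, f z ∂μ ≤ a * μ.real B + N * μ.real {z | a ≤ f z ∧ I z ≤ κ * N ^ 2} +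
      (∫ z, I z ∂μ) / (κ * N) := by
  set Z := {z | a ≤ f z ∧ I z ≤ κ * N ^ 2} with hZ
  have hZm : MeasurableSet Z := (measurableSet_le measurable_const hfm).inter
    (measurableSet_le hIm measurable_const)
  have hZB : Z ⊆ B := fun z hz => by
    by_contra h
    have := hz.1
    rw [hfB z h] at this
    linarith
  have hZf : μ Z ≠ ∞ := ne_top_of_le_ne_top hBf (measure_mono hZB)
  have h1 : Integrable (B.indicator fun _ => a) μ :=
    (integrable_indicator_iff hB).2 (integrableOn_const hBf)
  have h2 : Integrable (Z.indicator fun _ => N) μ :=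
    (integrable_indicator_iff hZm).2 (integrableOn_const hZf)
  have h3 : Integrable (fun z => I z / (κ * N)) μ := hI.div_const _
  have key : ∀ z, f z ≤ B.indicator (fun _ => a) z + Z.indicator (fun _ => N) z +
      I z / (κ * N) := by
    intro z
    have hd : 0 ≤ I z / (κ * N) := div_nonneg (hI0 z) (by positivity)
    have hBn : 0 ≤ B.indicator (fun _ => a) z := Set.indicator_nonneg (fun _ _ => ha.le) z
    have hZn : 0 ≤ Z.indicator (fun _ => N) z := Set.indicator_nonneg (fun _ _ => hN.le) z
    by_cases hzB : z ∈ B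
    · by_cases hfa : f z < a
      · rw [Set.indicator_of_mem hzB]; linarith
      · push Not at hfa
        have hf0 : 0 < f z := ha.trans_le hfa
        by_cases hIH : I z ≤ κ * N ^ 2
        · have hz : z ∈ Z := ⟨hfa, hIH⟩
          have : f z ≤ N := by
            have := (hfI z).trans hIH
            exact (pow_le_pow_iff_left₀ hf0.le hN.le two_ne_zero).1 (le_of_mul_le_mul_left this hκ)
          rw [Set.indicator_of_mem hz]; linarith
        · push Not at hIH
          have : f z ≤ I z / (κ * N) := by
            rw [le_div_iff₀ (by positivity)]
            rcases le_total (f z) N with h | h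
            · have : f z * (κ * N) ≤ N * (κ * N) := by gcongr
              nlinarith
            · have : f z * (κ * N) ≤ f z * (κ * f z) := by gcongr
              have := hfI z
              nlinarith
          linarith
    · rw [hfB z hzB]; linarith
  have h := integral_mono hf ((h1.add h2).add h3) key
  rw [integral_add' (h1.add h2) h3, integral_add' h1 h2, integral_indicator_const _ hB,
    integral_indicator_const _ hZm, integral_div] at h
  simpa [mul_comm] using h

end translations

section pairs

variable {V κ : Type*} [NormedAddCommGroup V]

/-- The characteristic function of the closed ball of radius `δ` about `c`. -/
noncomputable def ballInd (δ : ℝ) (c z : V) : ℝ := (Metric.closedBall c δ).indicator 1 z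

lemma ballInd_nonneg (δ : ℝ) (c z : V) : 0 ≤ ballInd δ c z :=
  Set.indicator_nonneg (fun _ _ => zero_le_one) z

lemma ballInd_of_le {δ : ℝ} {c z : V} (h : ‖c - z‖ ≤ δ) : ballInd δ c z = 1 :=
  Set.indicator_of_mem (by rwa [Metric.mem_closedBall, dist_comm, dist_eq_norm]) _

lemma ballInd_of_lt {δ : ℝ} {c z : V} (h : δ < ‖c - z‖) : ballInd δ c z = 0 :=
  Set.indicator_of_notMem (by rw [Metric.mem_closedBall, dist_comm, dist_eq_norm]; exact not_le.2 h) _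

/-- The mass at scale `δ` near `z` of the measure giving mass `p k` to the point `q k`, `k ∈ S`. -/
noncomputable def pairMass (δ : ℝ) (d : ℕ) (S : Finset κ) (p : κ → ℝ) (q : κ → V) (z : V) : ℝ :=
  (δ⁻¹) ^ d * ∑ k ∈ S, p k * ballInd δ (q k) z

/-- The energy at cutoff `ρ` of the weights `p k` on the points `b k`, restricted to those `k` for
which `q k` is within `δ` of `z`. -/
noncomputable def pairEnergy (δ : ℝ) (d : ℕ) (ρ : ℝ) (S : Finset κ) (p : κ → ℝ) (q b : κ → V)
    (z : V) : ℝ :=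
  ((δ⁻¹) ^ d) ^ 2 * ∑ k ∈ S, ∑ l ∈ S, p k * p l * gs (‖b k - b l‖ / ρ) *
    (ballInd δ (q k) z * ballInd δ (q l) z)

/-- The sum of the energies over the dyadic cutoffs, as in `totalEnergy`, restricted to those `k`
for which `q k` is within `2 ^ (-m)` of `z`. -/
noncomputable def pairTotal (u : ℝ) (m d : ℕ) (S : Finset κ) (p : κ → ℝ) (q b : κ → V)
    (z : V) : ℝ :=
  ∑ j ∈ Finset.range (m + 1), (((j : ℝ) + 1) ^ 2)⁻¹ *
    ((((2 : ℝ)⁻¹ ^ j) ^ u)⁻¹ * pairEnergy (2⁻¹ ^ m) d (2⁻¹ ^ j) S p q b z)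

lemma pairEnergy_nonneg {δ : ℝ} (d : ℕ) (ρ : ℝ) {S : Finset κ} {p : κ → ℝ} (hp : ∀ k, 0 ≤ p k)
    (q b : κ → V) (z : V) : 0 ≤ pairEnergy δ d ρ S p q b z :=
  mul_nonneg (by positivity) (Finset.sum_nonneg fun k _ => Finset.sum_nonneg fun k' _ =>
    mul_nonneg (mul_nonneg (mul_nonneg (hp k) (hp k')) (gs_pos _).le)
      (mul_nonneg (ballInd_nonneg _ _ _) (ballInd_nonneg _ _ _)))

lemma pairTotal_nonneg (u : ℝ) (m d : ℕ) {S : Finset κ} {p : κ → ℝ} (hp : ∀ k, 0 ≤ p k)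
    (q b : κ → V) (z : V) : 0 ≤ pairTotal u m d S p q b z :=
  Finset.sum_nonneg fun j _ => mul_nonneg (by positivity)
    (mul_nonneg (by positivity) (pairEnergy_nonneg _ _ hp _ _ _))

/-- The term with cutoff `1` controls the square of the mass if the points are bounded. -/
lemma pairMass_sq_le (u : ℝ) (m d : ℕ) {S : Finset κ} {p : κ → ℝ} (hp : ∀ k, 0 ≤ p k)
    (q b : κ → V) {R : ℝ} (hR : ∀ k ∈ S, ‖b k‖ ≤ R) (z : V) :
    gs (2 * R) * pairMass (2⁻¹ ^ m) d S p q z ^ 2 ≤ pairTotal u m d S p q b z := by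
  have h0 : pairEnergy (2⁻¹ ^ m) d (2⁻¹ ^ 0) S p q b z ≤ pairTotal u m d S p q b z := by
    have := Finset.single_le_sum (f := fun j : ℕ => (((j : ℝ) + 1) ^ 2)⁻¹ *
      ((((2 : ℝ)⁻¹ ^ j) ^ u)⁻¹ * pairEnergy (2⁻¹ ^ m) d (2⁻¹ ^ j) S p q b z))
      (s := Finset.range (m + 1)) (fun j _ => mul_nonneg (by positivity)
        (mul_nonneg (by positivity) (pairEnergy_nonneg _ _ hp _ _ _))) (a := 0) (by simp)
    simpa [pairTotal] using this
  refine le_trans ?_ h0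
  rw [pairMass, pairEnergy, mul_pow, sq (∑ k ∈ S, _), Finset.sum_mul_sum, mul_left_comm]
  refine mul_le_mul_of_nonneg_left ?_ (by positivity)
  rw [Finset.mul_sum]
  refine Finset.sum_le_sum fun k hk => ?_
  rw [Finset.mul_sum]
  refine Finset.sum_le_sum fun k' hk' => ?_
  have hg : gs (2 * R) ≤ gs (‖b k - b k'‖ / 2⁻¹ ^ 0) := by
    refine gs_anti (by positivity) ?_
    rw [pow_zero, div_one]
    have := norm_sub_le (b k) (b k')
    linarith [hR k hk, hR k' hk']
  calc gs (2 * R) * (p k * ballInd (2⁻¹ ^ m) (q k) z * (p k' * ballInd (2⁻¹ ^ m) (q k') z))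
      = p k * p k' * gs (2 * R) * (ballInd (2⁻¹ ^ m) (q k) z * ballInd (2⁻¹ ^ m) (q k') z) := by
        ring
    _ ≤ _ := by
      refine mul_le_mul_of_nonneg_right ?_
        (mul_nonneg (ballInd_nonneg _ _ _) (ballInd_nonneg _ _ _))
      exact mul_le_mul_of_nonneg_left hg (mul_nonneg (hp k) (hp k'))

variable [MeasurableSpace V] [BorelSpace V]

lemma measurable_ballInd (δ : ℝ) (c : V) : Measurable (ballInd δ c) :=
  measurable_one.indicator Metric.isClosed_closedBall.measurableSet

lemma measurable_pairMass (δ : ℝ) (d : ℕ) (S : Finset κ) (p : κ → ℝ) (q : κ → V) :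
    Measurable (pairMass δ d S p q) := by
  have := fun c : V => measurable_ballInd δ c
  unfold pairMass
  fun_prop

lemma measurable_pairTotal (u : ℝ) (m d : ℕ) (S : Finset κ) (p : κ → ℝ) (q b : κ → V) :
    Measurable (pairTotal u m d S p q b) := by
  have := fun c : V => measurable_ballInd (2⁻¹ ^ m) c
  unfold pairTotal pairEnergy
  fun_prop

variable [InnerProductSpace ℝ V] [FiniteDimensional ℝ V]

lemma integrable_ballInd (δ : ℝ) (c : V) : Integrable (ballInd δ c) :=
  (integrable_indicator_iff Metric.isClosed_closedBall.measurableSet).2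
    (integrableOn_const (measure_closedBall_lt_top.ne))

lemma integral_ballInd {δ : ℝ} (hδ : 0 ≤ δ) (c : V) : ∫ z, ballInd δ c z =
    δ ^ Module.finrank ℝ V * volume.real (Metric.ball (0 : V) 1) := by
  unfold ballInd
  rw [integral_indicator_one Metric.isClosed_closedBall.measurableSet,
    Measure.addHaar_real_closedBall _ _ hδ]

lemma integrable_ballInd_mul (δ : ℝ) (c c' : V) :
    Integrable fun z => ballInd δ c z * ballInd δ c' z := by
  refine (integrable_ballInd δ c).mul_bdd (c := 1)
    (measurable_ballInd δ c').aestronglyMeasurable (Filter.Eventually.of_forall fun z => ?_)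
  rcases le_or_gt ‖c' - z‖ δ with h | h
  · simp [ballInd_of_le h]
  · simp [ballInd_of_lt h]

lemma integral_ballInd_mul_le {δ : ℝ} (hδ : 0 < δ) (c c' : V) :
    ∫ z, ballInd δ c z * ballInd δ c' z ≤ δ ^ Module.finrank ℝ V *
      volume.real (Metric.ball (0 : V) 1) * ((gs 2)⁻¹ * gs (‖c - c'‖ / δ)) := by
  rw [← integral_ballInd hδ.le c, ← integral_mul_const]
  refine integral_mono (integrable_ballInd_mul δ c c') ((integrable_ballInd δ c).mul_const _)
    fun z => ?_
  have hg := gs_pos 2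
  have hg' := gs_pos (‖c - c'‖ / δ)
  rcases le_or_gt ‖c - z‖ δ with h | h
  · rw [ballInd_of_le h, one_mul, one_mul]
    rcases le_or_gt ‖c' - z‖ δ with h' | h'
    · rw [ballInd_of_le h', inv_mul_eq_div, one_le_div hg]
      refine gs_anti (by positivity) ?_
      rw [div_le_iff₀ hδ]
      have := norm_sub_le (c - z) (c' - z)
      rw [sub_sub_sub_cancel_right] at this
      linarith
    · rw [ballInd_of_lt h']; positivity
  · simp [ballInd_of_lt h]

lemma integrable_pairMass (δ : ℝ) (d : ℕ) (S : Finset κ) (p : κ → ℝ) (q : κ → V) :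
    Integrable (pairMass δ d S p q) :=
  (integrable_finsetSum _ fun k _ => (integrable_ballInd δ (q k)).const_mul _).const_mul _

lemma integral_pairMass {δ : ℝ} (hδ : 0 < δ) (S : Finset κ) (p : κ → ℝ) (q : κ → V) :
    ∫ z, pairMass δ (Module.finrank ℝ V) S p q z =
      volume.real (Metric.ball (0 : V) 1) * ∑ k ∈ S, p k := by
  unfold pairMass
  rw [integral_const_mul, integral_finsetSum _ fun k _ => (integrable_ballInd δ (q k)).const_mul _]
  simp_rw [integral_const_mul, integral_ballInd hδ.le]
  rw [← Finset.sum_mul, inv_pow]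
  field_simp

lemma integrable_pairEnergy (δ : ℝ) (d : ℕ) (ρ : ℝ) (S : Finset κ) (p : κ → ℝ) (q b : κ → V) :
    Integrable (pairEnergy δ d ρ S p q b) :=
  (integrable_finsetSum _ fun k _ => integrable_finsetSum _ fun k' _ =>
    (integrable_ballInd_mul δ (q k) (q k')).const_mul _).const_mul _

lemma integral_pairEnergy_le {δ : ℝ} (hδ : 0 < δ) (ρ : ℝ) (S : Finset κ) {p : κ → ℝ}
    (hp : ∀ k, 0 ≤ p k) (q b : κ → V) :
    ∫ z, pairEnergy δ (Module.finrank ℝ V) ρ S p q b z ≤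
      volume.real (Metric.ball (0 : V) 1) * (gs 2)⁻¹ * ((δ⁻¹) ^ Module.finrank ℝ V *
        ∑ k ∈ S, ∑ k' ∈ S, p k * p k' * gs (‖b k - b k'‖ / ρ) * gs (‖q k - q k'‖ / δ)) := by
  unfold pairEnergy
  have hi : ∀ k k', Integrable fun z => p k * p k' * gs (‖b k - b k'‖ / ρ) *
      (ballInd δ (q k) z * ballInd δ (q k') z) := fun k k' =>
    (integrable_ballInd_mul δ (q k) (q k')).const_mul _
  rw [integral_const_mul, integral_finsetSum _ fun k _ => integrable_finsetSum _ fun k' _ => hi k k']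
  simp_rw [fun k => integral_finsetSum S fun k' _ => hi k k', integral_const_mul]
  calc _ ≤ ((δ⁻¹) ^ Module.finrank ℝ V) ^ 2 * ∑ k ∈ S, ∑ k' ∈ S,
        p k * p k' * gs (‖b k - b k'‖ / ρ) * (δ ^ Module.finrank ℝ V *
      volume.real (Metric.ball (0 : V) 1) * ((gs 2)⁻¹ * gs (‖q k - q k'‖ / δ))) := by
        refine mul_le_mul_of_nonneg_left (Finset.sum_le_sum fun k _ => Finset.sum_le_sum
          fun k' _ => mul_le_mul_of_nonneg_left (integral_ballInd_mul_le hδ _ _)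
          (mul_nonneg (mul_nonneg (hp k) (hp k')) (gs_pos _).le)) (by positivity)
    _ = _ := by
        have : ∀ k k', p k * p k' * gs (‖b k - b k'‖ / ρ) * (δ ^ Module.finrank ℝ V *
            volume.real (Metric.ball (0 : V) 1) * ((gs 2)⁻¹ * gs (‖q k - q k'‖ / δ))) =
            (δ ^ Module.finrank ℝ V * volume.real (Metric.ball (0 : V) 1) * (gs 2)⁻¹) *
              (p k * p k' * gs (‖b k - b k'‖ / ρ) * gs (‖q k - q k'‖ / δ)) := by
          intro k k'; ring
        simp_rw [this, ← Finset.mul_sum]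
        rw [inv_pow]
        field_simp

end pairs

end Mattila

namespace Mattila

section motion

variable {V : Type*} [NormedAddCommGroup V] [InnerProductSpace ℝ V]

/-- The set of translations `z` near which, at scale `2 ^ (-m)`, the image of the product of the
weights `w` and `v` under `(x, y) ↦ x - g y` has density at least `a`, while the pairs `(x, y)`
with `x - g y` near `z` have total energy at most `H`. -/
def goodSet (u a H : ℝ) (m : ℕ) (P : Finset V) (w : V → ℝ) (Q : Finset V) (v : V → ℝ)
    (g : V → V) : Set V :=
  {z | a ≤ pairMass (2⁻¹ ^ m) (Module.finrank ℝ V) (P ×ˢ Q) (fun k => w k.1 * v k.2)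
      (fun k => k.1 - g k.2) z ∧
    pairTotal u m (Module.finrank ℝ V) (P ×ˢ Q) (fun k => w k.1 * v k.2)
      (fun k => k.1 - g k.2) (fun k => k.2) z ≤ H}

variable [MeasurableSpace V] [BorelSpace V] [FiniteDimensional ℝ V]

omit [FiniteDimensional ℝ V] in
lemma measurableSet_goodSet (u a H : ℝ) (m : ℕ) (P : Finset V) (w : V → ℝ) (Q : Finset V)
    (v : V → ℝ) (g : V → V) : MeasurableSet (goodSet u a H m P w Q v g) :=
  (measurableSet_le measurable_const (measurable_pairMass _ _ _ _ _)).inter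
    (measurableSet_le (measurable_pairTotal _ _ _ _ _ _ _) measurable_const)

lemma integrable_pairTotal {κ : Type*} (u : ℝ) (m d : ℕ) (S : Finset κ) (p : κ → ℝ)
    (q b : κ → V) : Integrable (pairTotal u m d S p q b) :=
  integrable_finsetSum _ fun _ _ => ((integrable_pairEnergy _ _ _ _ _ _ _).const_mul _).const_mul _

lemma integral_pairTotal_le (u : ℝ) (m : ℕ) (P : Finset V) {w : V → ℝ} (hw : ∀ x, 0 ≤ w x)
    (Q : Finset V) {v : V → ℝ} (hv : ∀ x, 0 ≤ v x) (g : V ≃ₗᵢ[ℝ] V) :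
    ∫ z, pairTotal u m (Module.finrank ℝ V) (P ×ˢ Q) (fun k => w k.1 * v k.2)
      (fun k => k.1 - g k.2) (fun k => k.2) z ≤
      volume.real (Metric.ball (0 : V) 1) * (gs 2)⁻¹ * totalEnergy u m P w Q v g := by
  have hδ : (0 : ℝ) < 2⁻¹ ^ m := by positivity
  unfold pairTotal
  rw [integral_finsetSum _ fun _ _ =>
    ((integrable_pairEnergy _ _ _ _ _ _ _).const_mul _).const_mul _]
  simp_rw [integral_const_mul]
  rw [totalEnergy, Finset.mul_sum]
  refine Finset.sum_le_sum fun j _ => ?_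
  have h := integral_pairEnergy_le hδ (2⁻¹ ^ j) (P ×ˢ Q) (p := fun k => w k.1 * v k.2)
    (fun k => mul_nonneg (hw _) (hv _)) (fun k : V × V => k.1 - g k.2) (fun k => k.2)
  have he : (((2 : ℝ)⁻¹ ^ m)⁻¹) ^ Module.finrank ℝ V * ∑ k ∈ P ×ˢ Q, ∑ k' ∈ P ×ˢ Q,
      w k.1 * v k.2 * (w k'.1 * v k'.2) * gs (‖k.2 - k'.2‖ / 2⁻¹ ^ j) *
        gs (‖k.1 - g k.2 - (k'.1 - g k'.2)‖ / 2⁻¹ ^ m) =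
      energy (2⁻¹ ^ j) (2⁻¹ ^ m) P w Q v g := by
    rw [energy, Finset.sum_product]
    simp_rw [Finset.sum_product]
    congr 1
    refine Finset.sum_congr rfl fun x _ => ?_
    rw [Finset.sum_comm]
    refine Finset.sum_congr rfl fun x' _ => Finset.sum_congr rfl fun y _ =>
      Finset.sum_congr rfl fun y' _ => ?_
    rw [map_sub, sub_sub_sub_comm, mul_mul_mul_comm (w x)]
  rw [he] at h
  calc _ ≤ (((j : ℝ) + 1) ^ 2)⁻¹ * ((((2 : ℝ)⁻¹ ^ j) ^ u)⁻¹ *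
        (volume.real (Metric.ball (0 : V) 1) * (gs 2)⁻¹ *
          energy (2⁻¹ ^ j) (2⁻¹ ^ m) P w Q v g)) := by
        gcongr
    _ = _ := by ring

/-- A bound for the total energy forces the good set of translations to have definite volume. -/
lemma exists_volume_goodSet_ge (u R L c : ℝ) (hL : 0 < L) (hc : 0 < c) :
    ∃ a H c' : ℝ, 0 < a ∧ 0 < H ∧ 0 < c' ∧
    ∀ (m : ℕ) (P : Finset V) (w : V → ℝ) (Q : Finset V) (v : V → ℝ) (g : V ≃ₗᵢ[ℝ] V),
      (∀ x, 0 ≤ w x) → (∀ x, 0 ≤ v x) → (∀ x ∈ P, ‖x‖ ≤ R) → (∀ x ∈ Q, ‖x‖ ≤ R) →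
      c ≤ (∑ x ∈ P, w x) * ∑ y ∈ Q, v y → totalEnergy u m P w Q v g ≤ L →
      goodSet u a H m P w Q v g ⊆ Metric.closedBall 0 (2 * R + 1) ∧
      c' ≤ volume.real (goodSet u a H m P w Q v g) := by
  set ω := volume.real (Metric.ball (0 : V) 1) with hω
  have hω0 : 0 < ω := ENNReal.toReal_pos (Metric.measure_ball_pos _ _ one_pos).ne'
    measure_ball_lt_top.ne
  have hg2 := gs_pos 2
  set κ := gs (2 * R) with hκ
  have hκ0 : 0 < κ := gs_pos _
  set b := volume.real (Metric.closedBall (0 : V) (2 * R + 1)) with hb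
  have hb0 : 0 ≤ b := measureReal_nonneg
  set N := 4 * L / (gs 2 * κ * c) with hN
  have hN0 : 0 < N := by positivity
  set a := ω * c / (4 * (b + 1)) with ha
  have ha0 : 0 < a := by positivity
  refine ⟨a, κ * N ^ 2, ω * c / (2 * N), ha0, by positivity, by positivity,
    fun m P w Q v g hw hv hP hQ hcw hEL => ?_⟩
  have hp : ∀ k : V × V, 0 ≤ w k.1 * v k.2 := fun k => mul_nonneg (hw _) (hv _)
  have hvanish : ∀ z, z ∉ Metric.closedBall (0 : V) (2 * R + 1) →
      pairMass (2⁻¹ ^ m) (Module.finrank ℝ V) (P ×ˢ Q) (fun k => w k.1 * v k.2)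
      (fun k => k.1 - g k.2) z = 0 := by
    intro z hz
    rw [Metric.mem_closedBall, dist_zero_right, not_le] at hz
    rw [pairMass, Finset.sum_eq_zero, mul_zero]
    intro k hk
    obtain ⟨h1, h2⟩ := Finset.mem_product.1 hk
    rw [ballInd_of_lt, mul_zero]
    have h3 : ‖k.1 - g k.2‖ ≤ 2 * R := by
      refine (norm_sub_le _ _).trans ?_
      rw [g.norm_map]; linarith [hP _ h1, hQ _ h2]
    have h4 : (2 : ℝ)⁻¹ ^ m ≤ 1 := pow_le_one₀ (by norm_num) (by norm_num)
    have h5 := norm_sub_norm_le z (k.1 - g k.2)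
    rw [norm_sub_rev z] at h5
    linarith
  refine ⟨fun z hz => ?_, ?_⟩
  · by_contra h
    have := hz.1
    rw [hvanish z h] at this
    linarith
  have h := volume_good_ge (μ := (volume : Measure V))
    (B := Metric.closedBall (0 : V) (2 * R + 1)) Metric.isClosed_closedBall.measurableSet
    measure_closedBall_lt_top.ne
    (integrable_pairMass _ _ _ _ _) (integrable_pairTotal u m (Module.finrank ℝ V) (P ×ˢ Q)
      (fun k => w k.1 * v k.2) (fun k => k.1 - g k.2) (fun k => k.2))
    (measurable_pairMass _ _ _ _ _) (measurable_pairTotal _ _ _ _ _ _ _)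
    (pairTotal_nonneg u m _ hp _ _) hvanish hκ0 hN0 ha0
    (pairMass_sq_le u m _ hp _ _ fun k hk => hQ _ (Finset.mem_product.1 hk).2)
  rw [integral_pairMass (by positivity), Finset.sum_product] at h
  simp only [← Finset.mul_sum, ← Finset.sum_mul] at h
  change _ ≤ a * b + N * volume.real (goodSet u a (κ * N ^ 2) m P w Q v g) + _ at h
  have h2 := (integral_pairTotal_le u m P hw Q hv g).trans
    (mul_le_mul_of_nonneg_left hEL (by positivity))
  have h3 : (∫ z, pairTotal u m (Module.finrank ℝ V) (P ×ˢ Q) (fun k => w k.1 * v k.2)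
      (fun k => k.1 - g k.2) (fun k => k.2) z) / (κ * N) ≤ ω * c / 4 := by
    rw [div_le_iff₀ (by positivity)]
    refine h2.trans (le_of_eq ?_)
    rw [hN, ← hω]
    field_simp
  have h4 : a * b ≤ ω * c / 4 := by
    rw [ha, div_mul_eq_mul_div, div_le_div_iff₀ (by positivity) (by norm_num)]
    have : 0 < ω * c := by positivity
    nlinarith
  have h5 : ω * c ≤ ω * ((∑ x ∈ P, w x) * ∑ y ∈ Q, v y) := by gcongr
  rw [div_le_iff₀ (by positivity)]
  nlinarith

end motion

end Mattila

namespace Mattila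

/-! ### The dimension of the slices -/

lemma exists_dyadic_near {r : ℝ} (hr : 0 < r) (hr1 : r ≤ 1) :
    ∃ j : ℕ, r ≤ 2⁻¹ ^ j ∧ (2 : ℝ)⁻¹ ^ j ≤ 2 * r := by
  obtain ⟨j, h1, h2⟩ := exists_nat_pow_near_of_lt_one (x := r) (y := (2 : ℝ)⁻¹) hr hr1
    (by norm_num) (by norm_num)
  refine ⟨j, h2, ?_⟩
  rw [pow_succ] at h1
  linarith

/-- A compact set which is null for the `d`-dimensional Hausdorff measure has finite covers by
open balls of dyadic radii of arbitrarily small `d`-dimensional cost. -/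
lemma exists_finite_ball_cover {X : Type*} [MetricSpace X] [MeasurableSpace X] [BorelSpace X]
    [Nonempty X] {d : ℝ} (hd : 0 < d) {K : Set X} (hK : IsCompact K) (h0 : μH[d] K = 0) {η : ℝ} (hη : 0 < η) :
    ∃ (I : Finset ℕ) (a : ℕ → X) (j : ℕ → ℕ), K ⊆ ⋃ i ∈ I, Metric.ball (a i) (2⁻¹ ^ j i) ∧
      ∑ i ∈ I, ((2 : ℝ)⁻¹ ^ j i) ^ d ≤ η := by
  obtain ⟨x₀⟩ := ‹Nonempty X›
  set e := min (η / 2 ^ d) 1 / 2 with he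
  have he0 : 0 < e := by positivity
  obtain ⟨ε, hε0, hεsum⟩ := ENNReal.exists_pos_sum_of_countable (ε := ENNReal.ofReal e)
    (by simpa using he0) ℕ
  have hcov : ∃ t : ℕ → Set X, K ⊆ ⋃ n, t n ∧
      ∑' n, ⨆ _ : (t n).Nonempty, Metric.ediam (t n) ^ d < ENNReal.ofReal e := by
    rw [Measure.hausdorffMeasure_apply] at h0
    have h1 : (⨅ (t : ℕ → Set X) (_ : K ⊆ ⋃ n, t n) (_ : ∀ n, Metric.ediam (t n) ≤ 1),
        ∑' n, ⨆ _ : (t n).Nonempty, Metric.ediam (t n) ^ d) < ENNReal.ofReal e := by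
      refine lt_of_le_of_lt ?_ (ENNReal.ofReal_pos.2 he0)
      rw [← h0]
      exact le_iSup₂_of_le (1 : ℝ≥0∞) one_pos le_rfl
    simp only [iInf_lt_iff] at h1
    obtain ⟨t, h1, _, h3⟩ := h1
    exact ⟨t, h1, h3⟩
  obtain ⟨t, htK, ht⟩ := hcov
  have hball : ∀ n, ∃ (a : X) (j : ℕ), t n ⊆ Metric.ball a (2⁻¹ ^ j) ∧
      ENNReal.ofReal (((2 : ℝ)⁻¹ ^ j) ^ d) ≤ ENNReal.ofReal (2 ^ d) *
        ((⨆ _ : (t n).Nonempty, Metric.ediam (t n) ^ d) + ε n) := by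
    intro n
    set D := ⨆ _ : (t n).Nonempty, Metric.ediam (t n) ^ d with hD
    have hDe : D < ENNReal.ofReal e := (ENNReal.le_tsum n).trans_lt ht
    have hεe : (ε n : ℝ≥0∞) < ENNReal.ofReal e := (ENNReal.le_tsum n).trans_lt hεsum
    have hρt : D + ε n ≠ ∞ := (ENNReal.add_lt_top.2 ⟨hDe.trans_le le_top, hεe.trans_le le_top⟩).ne
    have hρ1 : (D + ε n).toReal ≤ 1 := by
      refine ENNReal.toReal_le_of_le_ofReal zero_le_one ((add_le_add hDe.le hεe.le).trans ?_)
      rw [← ENNReal.ofReal_add he0.le he0.le]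
      refine ENNReal.ofReal_le_ofReal ?_
      have := min_le_right (η / 2 ^ d) 1
      linarith
    have hρ0 : 0 < (D + ε n).toReal := ENNReal.toReal_pos
      (by simp [(hε0 n).ne']) hρt
    obtain ⟨j, hj1, hj2⟩ := exists_dyadic_near (Real.rpow_pos_of_pos hρ0 (1 / d))
      (Real.rpow_le_one hρ0.le hρ1 (by positivity))
    have hcost : ENNReal.ofReal (((2 : ℝ)⁻¹ ^ j) ^ d) ≤ ENNReal.ofReal (2 ^ d) * (D + ε n) := by
      rw [← ENNReal.ofReal_toReal hρt, ← ENNReal.ofReal_mul (by positivity)]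
      refine ENNReal.ofReal_le_ofReal ?_
      refine (Real.rpow_le_rpow (by positivity) hj2 hd.le).trans (le_of_eq ?_)
      rw [Real.mul_rpow (by norm_num) (by positivity), ← Real.rpow_mul hρ0.le,
        one_div_mul_cancel hd.ne', Real.rpow_one]
    rcases (t n).eq_empty_or_nonempty with hte | ⟨a, ha⟩
    · exact ⟨x₀, j, by simp [hte], hcost⟩
    · refine ⟨a, j, fun x hx => ?_, hcost⟩
      have hDa : D = Metric.ediam (t n) ^ d := by rw [hD, iSup_pos ⟨a, ha⟩]
      rw [← Metric.eball_ofReal, Metric.mem_eball]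
      refine (Metric.edist_le_ediam_of_mem hx ha).trans_lt ?_
      have h1 : Metric.ediam (t n) ^ d < D + ε n := by
        rw [← hDa]
        exact ENNReal.lt_add_right (ne_top_of_lt hDe) (by simpa using (hε0 n).ne')
      have h2 : Metric.ediam (t n) < (D + ε n) ^ (1 / d) := by
        rw [one_div]; exact (ENNReal.lt_rpow_inv_iff hd).2 h1
      refine h2.trans_le ?_
      rw [← ENNReal.ofReal_toReal hρt, ENNReal.ofReal_rpow_of_pos hρ0]
      exact ENNReal.ofReal_le_ofReal hj1
  choose a j htb hcost using hball
  obtain ⟨I, hI⟩ := hK.elim_finite_subcover (fun n => Metric.ball (a n) (2⁻¹ ^ j n))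
    (fun n => Metric.isOpen_ball) (htK.trans (Set.iUnion_mono htb))
  refine ⟨I, a, j, hI, ?_⟩
  rw [← ENNReal.ofReal_le_ofReal_iff hη.le,
    ENNReal.ofReal_sum_of_nonneg fun i _ => by positivity]
  calc ∑ i ∈ I, ENNReal.ofReal (((2 : ℝ)⁻¹ ^ j i) ^ d)
      ≤ ∑' i, ENNReal.ofReal (((2 : ℝ)⁻¹ ^ j i) ^ d) := ENNReal.sum_le_tsum _
    _ ≤ ∑' i, ENNReal.ofReal (2 ^ d) *
        ((⨆ _ : (t i).Nonempty, Metric.ediam (t i) ^ d) + ε i) := ENNReal.tsum_le_tsum hcost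
    _ ≤ ENNReal.ofReal (2 ^ d) * (ENNReal.ofReal e + ENNReal.ofReal e) := by
        rw [ENNReal.tsum_mul_left, ENNReal.tsum_add]
        gcongr
    _ ≤ ENNReal.ofReal η := by
        rw [← ENNReal.ofReal_add he0.le he0.le, ← ENNReal.ofReal_mul (by positivity)]
        refine ENNReal.ofReal_le_ofReal ?_
        have h1 := min_le_left (η / 2 ^ d) 1
        have h2 : (0 : ℝ) < 2 ^ d := by positivity
        rw [le_div_iff₀ h2] at h1
        rwa [he, add_halves, mul_comm]

/-- Points at distance at most `ε` from compact sets `K`, `K'`, and at distance at most `ε` from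
each other, are in a given neighbourhood of `K ∩ K'` once `ε` is small. -/
lemma exists_near_inter_subset {X : Type*} [MetricSpace X] {K K' U : Set X} (hK : IsCompact K)
    (hK' : IsCompact K') (hU : IsOpen U) (h : K ∩ K' ⊆ U) :
    ∃ ε > 0, ∀ x y a b, a ∈ K → b ∈ K' → dist x a ≤ ε → dist x y ≤ ε → dist y b ≤ ε → x ∈ U := by
  obtain ⟨e, he, heU⟩ := (hK.inter hK').exists_thickening_subset_open hU h
  have hd : Disjoint (K \ Metric.thickening (e / 2) (K ∩ K')) K' := by
    rw [Set.disjoint_left]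
    rintro x ⟨hx, hx'⟩ hxK
    exact hx' (Metric.self_subset_thickening (half_pos he) _ ⟨hx, hxK⟩)
  obtain ⟨r, hr, hdr⟩ := hd.exists_thickenings (hK.diff Metric.isOpen_thickening) hK'.isClosed
  refine ⟨min (e / 2) r / 3, by positivity, fun x y a b ha hb hxa hxy hyb => ?_⟩
  have h1 := min_le_left (e / 2) r
  have h2 := min_le_right (e / 2) r
  by_cases hat : a ∈ Metric.thickening (e / 2) (K ∩ K')
  · obtain ⟨z, hz, haz⟩ := Metric.mem_thickening_iff.1 hat
    refine heU (Metric.mem_thickening_iff.2 ⟨z, hz, ?_⟩)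
    have := dist_triangle x a z
    linarith
  · have h3 : x ∈ Metric.thickening r (K \ Metric.thickening (e / 2) (K ∩ K')) :=
      Metric.mem_thickening_iff.2 ⟨a, ⟨ha, hat⟩, by linarith⟩
    refine absurd (Metric.mem_thickening_iff.2 ⟨b, hb, ?_⟩) (Set.disjoint_left.1 hdr h3)
    have := dist_triangle x y b
    linarith

end Mattila

namespace Mattila

section cover

variable {V κ : Type*} [NormedAddCommGroup V]

lemma pairMass_eq (δ : ℝ) (d : ℕ) (S : Finset κ) (p : κ → ℝ) (q : κ → V) (z : V) :
    pairMass δ d S p q z = (δ⁻¹) ^ d * ∑ k ∈ S with ‖q k - z‖ ≤ δ, p k := by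
  rw [pairMass, Finset.sum_filter]
  congr 1
  refine Finset.sum_congr rfl fun k _ => ?_
  split_ifs with h
  · rw [ballInd_of_le h, mul_one]
  · rw [ballInd_of_lt (not_le.1 h), mul_zero]

lemma pairEnergy_eq (δ : ℝ) (d : ℕ) (ρ : ℝ) (S : Finset κ) (p : κ → ℝ) (q b : κ → V) (z : V) :
    pairEnergy δ d ρ S p q b z = ((δ⁻¹) ^ d) ^ 2 * ∑ k ∈ S with ‖q k - z‖ ≤ δ,
      ∑ k' ∈ S with ‖q k' - z‖ ≤ δ, p k * p k' * gs (‖b k - b k'‖ / ρ) := by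
  rw [pairEnergy, Finset.sum_filter]
  congr 1
  refine Finset.sum_congr rfl fun k _ => ?_
  split_ifs with h
  · rw [Finset.sum_filter]
    refine Finset.sum_congr rfl fun k' _ => ?_
    split_ifs with h'
    · rw [ballInd_of_le h, ballInd_of_le h', mul_one, mul_one]
    · rw [ballInd_of_lt (not_le.1 h'), mul_zero, mul_zero]
  · simp [ballInd_of_lt (not_le.1 h)]

/-- If the points `x k` of the pairs counted by `pairMass` are covered by dyadic balls of small
total cost in dimension `u' < u`, then the mass is small compared with the total energy. This is
the Cauchy–Schwarz inequality, for the partition of the pairs according to the covering balls. -/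
lemma pairMass_sq_le_of_cover {u u' Kc : ℝ} (m d : ℕ) {S : Finset κ} {p : κ → ℝ}
    (hp : ∀ k, 0 ≤ p k) (q b x : κ → V) (z : V) (hKc0 : 0 ≤ Kc)
    (hKc : ∀ j : ℕ, ((j : ℝ) + 1) ^ 2 * ((2 : ℝ)⁻¹ ^ j) ^ (u - u') ≤ Kc)
    (I : Finset ℕ) (a : ℕ → V) (j : ℕ → ℕ) (hj : ∀ i ∈ I, j i ≤ m)
    (hcov : ∀ k ∈ S, ‖q k - z‖ ≤ 2⁻¹ ^ m → ∃ i ∈ I, ‖x k - a i‖ ≤ 2⁻¹ ^ j i)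
    (hb : ∀ k ∈ S, ∀ k' ∈ S, ‖q k - z‖ ≤ 2⁻¹ ^ m → ‖q k' - z‖ ≤ 2⁻¹ ^ m →
      ‖b k - b k'‖ ≤ ‖x k - x k'‖ + 2 * 2⁻¹ ^ m) :
    gs 4 * pairMass (2⁻¹ ^ m) d S p q z ^ 2 ≤
      (∑ i ∈ I, ((2 : ℝ)⁻¹ ^ j i) ^ u') * (Kc * pairTotal u m d S p q b z) := by
  classical
  set T := S.filter fun k => ‖q k - z‖ ≤ 2⁻¹ ^ m with hT
  set D := (((2 : ℝ)⁻¹ ^ m)⁻¹) ^ d with hD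
  have hTmem : ∀ k ∈ T, ∃ i ∈ I, ‖x k - a i‖ ≤ 2⁻¹ ^ j i := fun k hk =>
    hcov k (Finset.mem_filter.1 hk).1 (Finset.mem_filter.1 hk).2
  choose! ι hιI hιx using hTmem
  set M : ℕ → ℝ := fun i => ∑ k ∈ T with ι k = i, p k with hM
  set X : ℕ → κ → κ → ℝ := fun l k k' => p k * p k' * gs (‖b k - b k'‖ / 2⁻¹ ^ l) with hX
  have hX0 : ∀ l k k', 0 ≤ X l k k' := fun l k k' =>
    mul_nonneg (mul_nonneg (hp k) (hp k')) (gs_pos _).le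
  set W : ℕ → ℕ → ℝ := fun l i => ∑ k ∈ T with ι k = i, ∑ k' ∈ T with ι k' = i, X l k k' with hW
  set c : ℕ → ℝ := fun l => (((l : ℝ) + 1) ^ 2)⁻¹ * (((2 : ℝ)⁻¹ ^ l) ^ u)⁻¹ with hc
  have hc0 : ∀ l, 0 ≤ c l := fun l => by positivity
  have hMW : ∀ i ∈ I, gs 4 * M i ^ 2 ≤ W (j i) i := by
    intro i hi
    rw [hM, hW, sq, Finset.sum_mul_sum, Finset.mul_sum]
    refine Finset.sum_le_sum fun k hk => ?_
    rw [Finset.mul_sum]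
    refine Finset.sum_le_sum fun k' hk' => ?_
    obtain ⟨hkT, hki⟩ := Finset.mem_filter.1 hk
    obtain ⟨hkT', hki'⟩ := Finset.mem_filter.1 hk'
    have h1 := hιx k hkT
    have h2 := hιx k' hkT'
    rw [hki] at h1
    rw [hki'] at h2
    have h3 := hb k (Finset.mem_filter.1 hkT).1 k' (Finset.mem_filter.1 hkT').1
      (Finset.mem_filter.1 hkT).2 (Finset.mem_filter.1 hkT').2
    have h4 := norm_sub_le (x k - a i) (x k' - a i)
    rw [sub_sub_sub_cancel_right] at h4
    have h5 : (2 : ℝ)⁻¹ ^ m ≤ 2⁻¹ ^ j i :=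
      pow_le_pow_of_le_one (by norm_num) (by norm_num) (hj i hi)
    have h6 : gs 4 ≤ gs (‖b k - b k'‖ / 2⁻¹ ^ j i) := by
      refine gs_anti (by positivity) ?_
      rw [div_le_iff₀ (by positivity)]
      linarith
    rw [hX, mul_comm]
    exact mul_le_mul_of_nonneg_left h6 (mul_nonneg (hp k) (hp k'))
  have hWE : ∀ l, ∑ i ∈ I with j i = l, W l i ≤ ∑ k ∈ T, ∑ k' ∈ T, X l k k' := by
    intro l
    calc ∑ i ∈ I with j i = l, W l i
        ≤ ∑ i ∈ I, W l i := Finset.sum_le_sum_of_subset_of_nonneg (Finset.filter_subset _ _)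
          fun i _ _ => Finset.sum_nonneg fun k _ => Finset.sum_nonneg fun k' _ => hX0 _ _ _
      _ ≤ ∑ i ∈ I, ∑ k ∈ T with ι k = i, ∑ k' ∈ T, X l k k' :=
          Finset.sum_le_sum fun i _ => Finset.sum_le_sum fun k _ =>
            Finset.sum_le_sum_of_subset_of_nonneg (Finset.filter_subset _ _)
              fun k' _ _ => hX0 _ _ _
      _ = _ := Finset.sum_fiberwise_of_maps_to hιI _
  have hCS : (∑ k ∈ T, p k) ^ 2 ≤ (∑ i ∈ I, ((2 : ℝ)⁻¹ ^ j i) ^ u') *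
      ∑ i ∈ I, M i ^ 2 * (((2 : ℝ)⁻¹ ^ j i) ^ u')⁻¹ := by
    rw [← Finset.sum_fiberwise_of_maps_to hιI]
    refine Finset.sum_sq_le_sum_mul_sum_of_sq_le_mul I (fun i _ => by positivity)
      (fun i _ => by positivity) fun i _ => le_of_eq ?_
    have : (0 : ℝ) < ((2 : ℝ)⁻¹ ^ j i) ^ u' := by positivity
    field_simp
    rfl
  have hmain : gs 4 * ∑ i ∈ I, M i ^ 2 * (((2 : ℝ)⁻¹ ^ j i) ^ u')⁻¹ ≤
      Kc * ∑ l ∈ Finset.range (m + 1), c l * ∑ k ∈ T, ∑ k' ∈ T, X l k k' := by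
    calc gs 4 * ∑ i ∈ I, M i ^ 2 * (((2 : ℝ)⁻¹ ^ j i) ^ u')⁻¹
        = ∑ i ∈ I, gs 4 * M i ^ 2 * (((2 : ℝ)⁻¹ ^ j i) ^ u')⁻¹ := by
          rw [Finset.mul_sum]; exact Finset.sum_congr rfl fun i _ => by ring
      _ ≤ ∑ i ∈ I, Kc * (c (j i) * W (j i) i) := by
          refine Finset.sum_le_sum fun i hi => ?_
          have hr : (0 : ℝ) < (2 : ℝ)⁻¹ ^ j i := by positivity
          have h1 := hKc (j i)
          rw [Real.rpow_sub hr] at h1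
          have h2 : (((2 : ℝ)⁻¹ ^ j i) ^ u')⁻¹ ≤ Kc * c (j i) := by
            have h3 : (0 : ℝ) ≤ c (j i) := hc0 _
            have h4 := mul_le_mul_of_nonneg_right h1 h3
            refine le_trans (le_of_eq ?_) h4
            have h5 : (0 : ℝ) < ((2 : ℝ)⁻¹ ^ j i) ^ u := by positivity
            have h6 : (0 : ℝ) < ((2 : ℝ)⁻¹ ^ j i) ^ u' := by positivity
            rw [hc]
            field_simp
          have hg := gs_pos 4
          have hW0 : 0 ≤ W (j i) i := Finset.sum_nonneg fun k _ =>
            Finset.sum_nonneg fun k' _ => hX0 _ _ _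
          calc gs 4 * M i ^ 2 * (((2 : ℝ)⁻¹ ^ j i) ^ u')⁻¹
              ≤ W (j i) i * (Kc * c (j i)) :=
                mul_le_mul (hMW i hi) h2 (by positivity) hW0
            _ = _ := by ring
      _ = Kc * ∑ l ∈ Finset.range (m + 1), c l * ∑ i ∈ I with j i = l, W l i := by
          rw [← Finset.mul_sum]
          congr 1
          rw [← Finset.sum_fiberwise_of_maps_to (t := Finset.range (m + 1)) (g := j)
            fun i hi => Finset.mem_range.2 (Nat.lt_succ_of_le (hj i hi))]
          refine Finset.sum_congr rfl fun l _ => ?_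
          rw [Finset.mul_sum]
          refine Finset.sum_congr rfl fun i hi => ?_
          rw [(Finset.mem_filter.1 hi).2]
      _ ≤ _ := by
          refine mul_le_mul_of_nonneg_left (Finset.sum_le_sum fun l _ => ?_) hKc0
          exact mul_le_mul_of_nonneg_left (hWE l) (hc0 l)
  have htot : pairTotal u m d S p q b z =
      D ^ 2 * ∑ l ∈ Finset.range (m + 1), c l * ∑ k ∈ T, ∑ k' ∈ T, X l k k' := by
    rw [pairTotal, Finset.mul_sum]
    refine Finset.sum_congr rfl fun l _ => ?_
    rw [pairEnergy_eq]
    ring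
  rw [pairMass_eq, htot]
  have hA0 : 0 ≤ ∑ i ∈ I, ((2 : ℝ)⁻¹ ^ j i) ^ u' := Finset.sum_nonneg fun i _ => by positivity
  calc gs 4 * (D * ∑ k ∈ T, p k) ^ 2 = D ^ 2 * (gs 4 * (∑ k ∈ T, p k) ^ 2) := by ring
    _ ≤ D ^ 2 * (gs 4 * ((∑ i ∈ I, ((2 : ℝ)⁻¹ ^ j i) ^ u') *
          ∑ i ∈ I, M i ^ 2 * (((2 : ℝ)⁻¹ ^ j i) ^ u')⁻¹)) := by
        have := (gs_pos 4).le
        gcongr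
    _ = D ^ 2 * ((∑ i ∈ I, ((2 : ℝ)⁻¹ ^ j i) ^ u') *
          (gs 4 * ∑ i ∈ I, M i ^ 2 * (((2 : ℝ)⁻¹ ^ j i) ^ u')⁻¹)) := by ring
    _ ≤ D ^ 2 * ((∑ i ∈ I, ((2 : ℝ)⁻¹ ^ j i) ^ u') *
          (Kc * ∑ l ∈ Finset.range (m + 1), c l * ∑ k ∈ T, ∑ k' ∈ T, X l k k')) := by
        gcongr
    _ = _ := by ring

end cover

lemma exists_sq_mul_rpow_le {ε : ℝ} (hε : 0 < ε) :
    ∃ K : ℝ, 0 < K ∧ ∀ j : ℕ, ((j : ℝ) + 1) ^ 2 * ((2 : ℝ)⁻¹ ^ j) ^ ε ≤ K := by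
  set r := (2 : ℝ)⁻¹ ^ ε with hr
  have hr0 : 0 < r := by positivity
  have hr1 : r < 1 := Real.rpow_lt_one (by norm_num) (by norm_num) hε
  have h := (tendsto_pow_const_mul_const_pow_of_abs_lt_one 2 (r := r)
    (by rwa [abs_of_pos hr0])).bddAbove_range
  obtain ⟨B, hB⟩ := h
  refine ⟨max B 1 / r, by positivity, fun j => ?_⟩
  rw [le_div_iff₀ hr0]
  have h1 : ((2 : ℝ)⁻¹ ^ j) ^ ε = r ^ j := by
    rw [hr, ← Real.rpow_natCast, ← Real.rpow_natCast, ← Real.rpow_mul (by norm_num),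
      ← Real.rpow_mul (by norm_num), mul_comm]
  rw [h1, mul_assoc, ← pow_succ]
  have := hB ⟨j + 1, rfl⟩
  push_cast at this
  exact this.trans (le_max_left _ _)

section slices

variable {V : Type*} [NormedAddCommGroup V] [InnerProductSpace ℝ V] [MeasurableSpace V]
  [BorelSpace V]

/-- A translation lying in the good sets at arbitrarily fine scales gives a large slice. -/
lemma le_dimH_inter_of_frequently {u a H : ℝ} (ha : 0 < a) (hH : 0 < H) (hu : 0 < u)
    {P Q : ℕ → Finset V} {w v : ℕ → V → ℝ} {K K' : Set V} (hK : IsCompact K) (hK' : IsCompact K')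
    (hw : ∀ m x, 0 ≤ w m x) (hv : ∀ m x, 0 ≤ v m x)
    (hP : ∀ m, ∀ x ∈ P m, ∃ a ∈ K, dist x a ≤ 2⁻¹ ^ m)
    (hQ : ∀ m, ∀ y ∈ Q m, ∃ b ∈ K', dist y b ≤ 2⁻¹ ^ m)
    (g : V ≃ₗᵢ[ℝ] V) (z : V)
    (hz : ∀ M, ∃ m ≥ M, z ∈ goodSet u a H m (P m) (w m) (Q m) (v m) g) :
    ENNReal.ofReal u ≤ dimH (K ∩ (fun b => g b + z) '' K') := by
  by_contra! hlt
  obtain ⟨u', hdu, huu⟩ := ENNReal.lt_iff_exists_nnreal_btwn.1 hlt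
  have hu'0 : (0 : ℝ) < u' := by
    have : (0 : ℝ≥0∞) < u' := hdu.trans_le' bot_le
    exact_mod_cast this
  have hu' : (u' : ℝ) < u := by
    rwa [← ENNReal.ofReal_coe_nnreal, ENNReal.ofReal_lt_ofReal_iff hu] at huu
  have hK'' : IsCompact ((fun b => g b + z) '' K') := hK'.image (by fun_prop)
  obtain ⟨Kc, hKc0, hKc⟩ := exists_sq_mul_rpow_le (sub_pos.2 hu')
  have hg4 := gs_pos 4
  set η := gs 4 * a ^ 2 / (2 * (Kc * H)) with hη
  have hη0 : 0 < η := by positivity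
  obtain ⟨I, c, j, hcov, hcost⟩ := exists_finite_ball_cover hu'0 (hK.inter hK'')
    (hausdorffMeasure_of_dimH_lt hdu) hη0
  obtain ⟨ε, hε, hnear⟩ := exists_near_inter_subset hK hK''
    (isOpen_biUnion fun i (_ : i ∈ I) => Metric.isOpen_ball) hcov
  obtain ⟨M₁, hM₁⟩ := exists_pow_lt_of_lt_one hε (by norm_num : (2 : ℝ)⁻¹ < 1)
  obtain ⟨m, hm, hzm⟩ := hz (max M₁ (I.sup j))
  have hδε : (2 : ℝ)⁻¹ ^ m ≤ ε := (pow_le_pow_of_le_one (by norm_num) (by norm_num)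
    ((le_max_left _ _).trans hm)).trans hM₁.le
  have hp : ∀ k : V × V, 0 ≤ w m k.1 * v m k.2 := fun k => mul_nonneg (hw m _) (hv m _)
  have h := pairMass_sq_le_of_cover (u := u) (u' := u') m (Module.finrank ℝ V)
    (S := P m ×ˢ Q m) hp (fun k => k.1 - g k.2) (fun k => k.2) (fun k => k.1) z hKc0.le hKc I c j
    (fun i hi => (Finset.le_sup hi).trans ((le_max_right _ _).trans hm))
    (fun k hk hkz => by
      obtain ⟨hk1, hk2⟩ := Finset.mem_product.1 hk
      obtain ⟨a', ha', hka⟩ := hP m _ hk1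
      obtain ⟨b', hb', hkb⟩ := hQ m _ hk2
      have := hnear k.1 (g k.2 + z) a' (g b' + z) ha' ⟨b', hb', rfl⟩ (hka.trans hδε)
        (by rw [dist_eq_norm, ← sub_sub]; exact hkz.trans hδε)
        (by rw [dist_add_right, g.dist_map]; exact hkb.trans hδε)
      simp only [Set.mem_iUnion] at this
      obtain ⟨i, hi, hxi⟩ := this
      refine ⟨i, hi, ?_⟩
      rw [← dist_eq_norm]
      exact (Metric.mem_ball.1 hxi).le)
    (fun k _ k' _ hkz hkz' => by
      rw [← g.norm_map, map_sub]
      have e : g k.2 - g k'.2 = (k.1 - k'.1) - ((k.1 - g k.2 - z) - (k'.1 - g k'.2 - z)) := by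
        abel
      rw [e]
      have h1 := norm_sub_le (k.1 - k'.1) ((k.1 - g k.2 - z) - (k'.1 - g k'.2 - z))
      have h2 := norm_sub_le (k.1 - g k.2 - z) (k'.1 - g k'.2 - z)
      linarith)
  have h1 : gs 4 * a ^ 2 ≤ η * (Kc * H) := by
    refine le_trans ?_ (h.trans ?_)
    · have := hzm.1
      gcongr
    · have := hzm.2
      have h0 := pairTotal_nonneg u m (Module.finrank ℝ V) (S := P m ×ˢ Q m) hp
        (fun k => k.1 - g k.2) (fun k => k.2) z
      gcongr
  have h2 : η * (Kc * H) = gs 4 * a ^ 2 / 2 := by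
    rw [hη]; field_simp
  have h3 : 0 < gs 4 * a ^ 2 := by positivity
  linarith

variable [FiniteDimensional ℝ V]

/-- If the total energies along a motion do not tend to infinity, a set of translations of positive
measure gives large slices. -/
theorem volume_large_slices_pos {u L c : ℝ} (hu : 0 < u) (hL : 0 < L) (hc : 0 < c)
    {P Q : ℕ → Finset V} {w v : ℕ → V → ℝ} {K K' : Set V} (hK : IsCompact K) (hK' : IsCompact K')
    (hw : ∀ m x, 0 ≤ w m x) (hv : ∀ m x, 0 ≤ v m x)
    (hP : ∀ m, ∀ x ∈ P m, ∃ a ∈ K, dist x a ≤ 2⁻¹ ^ m)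
    (hQ : ∀ m, ∀ y ∈ Q m, ∃ b ∈ K', dist y b ≤ 2⁻¹ ^ m)
    (hmass : ∀ m, c ≤ (∑ x ∈ P m, w m x) * ∑ y ∈ Q m, v m y) (g : V ≃ₗᵢ[ℝ] V)
    (hg : ∀ M, ∃ m ≥ M, totalEnergy u m (P m) (w m) (Q m) (v m) g ≤ L) :
    0 < volume {z | ENNReal.ofReal u ≤ dimH (K ∩ (fun b => g b + z) '' K')} := by
  obtain ⟨R₁, hR₁⟩ := hK.isBounded.exists_norm_le
  obtain ⟨R₂, hR₂⟩ := hK'.isBounded.exists_norm_le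
  have hbd : ∀ {S : ℕ → Finset V} {K : Set V} {R : ℝ}, (∀ x ∈ K, ‖x‖ ≤ R) →
      (∀ m, ∀ x ∈ S m, ∃ a ∈ K, dist x a ≤ 2⁻¹ ^ m) → ∀ m, ∀ x ∈ S m, ‖x‖ ≤ R + 1 := by
    intro S K R hR hS m x hx
    obtain ⟨a, ha, hxa⟩ := hS m x hx
    have h1 : (2 : ℝ)⁻¹ ^ m ≤ 1 := pow_le_one₀ (by norm_num) (by norm_num)
    have h2 := norm_sub_norm_le x a
    rw [dist_eq_norm] at hxa
    linarith [hR a ha]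
  obtain ⟨a, H, c', ha, hH, hc', hvol⟩ :=
    exists_volume_goodSet_ge (V := V) u (max R₁ R₂ + 1) L c hL hc
  have hvol' := fun m => hvol m (P m) (w m) (Q m) (v m) g (hw m) (hv m)
    (hbd (fun x hx => (hR₁ x hx).trans (le_max_left _ _)) hP m)
    (hbd (fun x hx => (hR₂ x hx).trans (le_max_right _ _)) hQ m) (hmass m)
  let G : Set ℕ := {m | totalEnergy u m (P m) (w m) (Q m) (v m) g ≤ L}
  let Y : ℕ → Set V := fun M => ⋃ m ∈ G ∩ Set.Ici M,
    goodSet u a H m (P m) (w m) (Q m) (v m) g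
  have hYm : ∀ M, MeasurableSet (Y M) := fun M =>
    MeasurableSet.biUnion (Set.to_countable _) fun m _ => measurableSet_goodSet _ _ _ _ _ _ _ _ _
  have hYanti : Antitone Y := fun M M' h =>
    Set.biUnion_subset_biUnion_left fun m hm => ⟨hm.1, le_trans h hm.2⟩
  have hYfin : volume (Y 0) ≠ ∞ := by
    refine ne_top_of_le_ne_top (measure_closedBall_lt_top
      (x := (0 : V)) (r := 2 * (max R₁ R₂ + 1) + 1)).ne (measure_mono ?_)
    exact Set.iUnion₂_subset fun m hm => (hvol' m hm.1).1
  have hYge : ∀ M, ENNReal.ofReal c' ≤ volume (Y M) := by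
    intro M
    obtain ⟨m, hm, hmL⟩ := hg M
    have hsub : goodSet u a H m (P m) (w m) (Q m) (v m) g ⊆ Y M :=
      Set.subset_biUnion_of_mem (u := fun m => goodSet u a H m (P m) (w m) (Q m) (v m) g)
        (show m ∈ G ∩ Set.Ici M from ⟨hmL, hm⟩)
    exact (ENNReal.ofReal_le_of_le_toReal (hvol' m hmL).2).trans (measure_mono hsub)
  have hlim := tendsto_measure_iInter_atTop (μ := (volume : Measure V))
    (fun M => (hYm M).nullMeasurableSet) hYanti ⟨0, hYfin⟩
  have hge := ge_of_tendsto' hlim hYge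
  refine ((ENNReal.ofReal_pos.2 hc').trans_le hge).trans_le (measure_mono fun z hz => ?_)
  refine le_dimH_inter_of_frequently ha hH hu hK hK' hw hv hP hQ g z fun M => ?_
  obtain ⟨m, hm, hzm⟩ := Set.mem_iUnion₂.1 (Set.mem_iInter.1 hz M)
  exact ⟨m, hm.2, hzm⟩

end slices

end Mattila

/-- Mattila's exceptional set estimate for intersections: let `s + t > n + 1`
and let `A, B ⊆ ℝⁿ` be Borel sets with `H^s(A) > 0` and `H^t(B) > 0`. Then
there is a Borel set `E ⊆ O(n)` of Hausdorff dimension at most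
`n(n-1)/2 - (s + t - (n+1))` such that for every `g ∈ O(n) \ E`, the set of
translations `z` with `dim(A ∩ (g(B) + z)) ≥ s + t - n` has positive Lebesgue
measure. -/
theorem mattila_intersections_exceptional (n : ℕ) (hn : 2 ≤ n) (s t : ℝ)
    (hs : 0 < s) (ht : 0 < t) (hst : (n + 1 : ℝ) < s + t)
    (A B : Set (EuclideanSpace ℝ (Fin n)))
    (hA : MeasurableSet A) (hB : MeasurableSet B)
    (hA0 : 0 < μH[s] A) (hB0 : 0 < μH[t] B) :
    ∃ E : Set (Matrix.orthogonalGroup (Fin n) ℝ),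
      MeasurableSet E ∧
      dimH E ≤ ENNReal.ofReal ((n * (n - 1) : ℝ) / 2 - (s + t - (n + 1))) ∧
      ∀ g : Matrix.orthogonalGroup (Fin n) ℝ, g ∉ E →
        0 < volume {z : EuclideanSpace ℝ (Fin n) |
          ENNReal.ofReal (s + t - n) ≤
            dimH (A ∩ ((fun b => Matrix.toEuclideanLin (↑g) b + z) '' B))} := by
  obtain ⟨K, hKA, hK, C₁, -, c₁, hc₁, P, w, hP⟩ := Mattila.exists_frostmanAt hs hA hA0
  obtain ⟨K', hKB, hK', C₂, -, c₂, hc₂, Q, v, hQ⟩ := Mattila.exists_frostmanAt ht hB hB0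
  refine ⟨Mattila.exceptionalSet (s + t - n) P w Q v,
    Mattila.measurableSet_exceptionalSet _ P w Q v, ?_, fun g hg => ?_⟩
  · have h1 := Mattila.le_of_hausdorffMeasure_pos hs hA0
    have h2 := Mattila.le_of_hausdorffMeasure_pos ht hB0
    exact Mattila.dimH_exceptionalSet_le hn (by linarith) P Q w v
      (fun m => (hP m).1.mono (by positivity) (le_max_left C₁ C₂))
      (fun m => (hQ m).1.mono (by positivity) (le_max_right C₁ C₂))
  · simp only [Mattila.exceptionalSet, Set.mem_iInter, Set.mem_iUnion, Set.mem_ofPred_eq,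
      not_forall, not_exists, not_lt] at hg
    obtain ⟨L, hL⟩ := hg
    have hpos := Mattila.volume_large_slices_pos (u := s + t - n) (L := (L : ℝ) + 1)
      (c := c₁ * c₂) (by linarith) (by positivity) (by positivity) hK hK'
      (fun m => (hP m).1.nonneg) (fun m => (hQ m).1.nonneg)
      (fun m => (hP m).2.1) (fun m => (hQ m).2.1)
      (fun m => mul_le_mul (hP m).2.2 (hQ m).2.2 hc₂.le (hc₁.le.trans (hP m).2.2))
      (Mattila.orthoEquiv g) fun M => by
        obtain ⟨m, hm, h⟩ := hL M
        exact ⟨m, hm, h.trans (by linarith)⟩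
    refine hpos.trans_le (measure_mono fun z hz => ?_)
    exact le_trans hz (dimH_mono (Set.inter_subset_inter hKA (Set.image_mono hKB)))
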